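/- arXiv:1408.2559 — 4 statements merged into one kernel-verified Lean document; each statement's English description precedes it below -/
import Mathlib

section
/- For every ε > 0 there exists n₀ such that for all n ≥ n₀, every integer k with 3 ≤ k ≤ n/4, and every p with p₀(n,k) ≤ p ≤ 1, where p₀(n,k) = 9·n·log(ne/k)·binom(2k,k)·binom(n,k)/binom(n−k,k)², with probability at least 1 − ε every intersecting subhypergraph of ℋ^k(n,p) of maximum size is trivial. -/
/-- A hypergraph is intersecting if any two of its edges have nonempty intersection. -/
def IsIntersectingHyp (n : ℕ) (H : Finset (Finset (Fin n))) : Prop :=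
  ∀ e ∈ H, ∀ f ∈ H, (e ∩ f).Nonempty

/-- An intersecting hypergraph is trivial if some fixed vertex is contained in all
of its edges. -/
def IsTrivialIntHyp (n : ℕ) (H : Finset (Finset (Fin n))) : Prop :=
  ∃ v : Fin n, ∀ e ∈ H, v ∈ e

-- `randomSubsetProb ground p P` is the probability that the `p`-random subset of
-- `ground` (each element kept independently with probability `p`) satisfies `P`.
open Classical in
noncomputable def randomSubsetProb {α : Type*} (ground : Finset α) (p : ℝ)
    (P : Finset α → Prop) : ℝ :=
  ∑ W ∈ ground.powerset,
    if P W then p ^ W.card * (1 - p) ^ (ground.card - W.card) else 0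

section EKRHelpers
open Finset
open scoped FinsetFamily


theorem ekr_ratio (U X P Q c d : ℕ) (h : U * P = X * Q) (h2 : c * Q ≤ d * P) (hP : 0 < P) :
    c * U ≤ d * X := by
  refine Nat.le_of_mul_le_mul_right ?_ hP
  calc c * U * P = c * (U * P) := by ring
    _ = X * (c * Q) := by rw [h]; ring
    _ ≤ X * (d * P) := Nat.mul_le_mul_left _ h2
    _ = _ := by ring

theorem ekr_poly1 (k s : ℕ) :
    9 * ((k + (4 * k + 9 + s) + 5) * (k + (4 * k + 9 + s) + 4) * (k + 2)) ≤
      4 * (((4 * k + 9 + s) + 4) * ((4 * k + 9 + s) + 3) * ((4 * k + 9 + s) + 2)) := by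
  zify
  have hk : (0 : ℤ) ≤ k := by positivity
  have hs : (0 : ℤ) ≤ s := by positivity
  have : (0 : ℤ) ≤ 4 * (((4 * k + 9 + s) + 4) * ((4 * k + 9 + s) + 3) * ((4 * k + 9 + s) + 2))
    - 9 * ((k + (4 * k + 9 + s) + 5) * (k + (4 * k + 9 + s) + 4) * (k + 2)) := by
    ring_nf
    positivity
  linarith

theorem ekr_poly2 (k s : ℕ) (h : 16 ≤ k) :
    27 * ((k + (3 * k + 6 + s) + 5) * (k + (3 * k + 6 + s) + 4) * (k + 2)) ≤
      17 * (((3 * k + 6 + s) + 4) * ((3 * k + 6 + s) + 3) * ((3 * k + 6 + s) + 2)) := by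
  obtain ⟨k, rfl⟩ := Nat.exists_eq_add_of_le h
  zify
  have hk : (0 : ℤ) ≤ k := by positivity
  have hs : (0 : ℤ) ≤ s := by positivity
  rw [← sub_nonneg]
  ring_nf
  positivity

theorem ekr_arith_base (n k : ℕ) (hk : 3 ≤ k) (hn : 4 * k ≤ n) :
    9 * (n - 3).choose (n - 1 - k) ≤ 4 * (n - 4).choose (k - 1) := by
  obtain ⟨k, rfl⟩ : ∃ k', k = k' + 3 := ⟨k - 3, by omega⟩
  obtain ⟨t, rfl⟩ : ∃ t, n = 4 * k + 12 + t := ⟨n - (4 * k + 12), by omega⟩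
  have e1 : 4 * k + 12 + t - 3 = (4 * k + t + 8) + 1 := by omega
  have e2 : 4 * k + 12 + t - 1 - (k + 3) = (3 * k + t + 7) + 1 := by omega
  have e3 : 4 * k + 12 + t - 4 = 4 * k + t + 8 := by omega
  rw [e1, e2, e3]
  have s : (4 * k + t + 8).choose (3 * k + t + 7) = (4 * k + t + 8).choose (k + 1) :=
    Nat.choose_symm_of_eq_add (by omega)
  have h1 := Nat.add_one_mul_choose_eq (4 * k + t + 8) (3 * k + t + 7)
  have h2 := Nat.choose_succ_right_eq (4 * k + t + 8) (k + 1)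
  rw [s] at h1
  have e4 : 4 * k + t + 8 - (k + 1) = 3 * k + t + 7 := by omega
  rw [e4] at h2
  have e5 : k + 3 - 1 = k + 1 + 1 := by omega
  rw [e5]
  set X := (4 * k + t + 8 + 1).choose (3 * k + t + 7 + 1)
  set Y := (4 * k + t + 8).choose (k + 1)
  set Z := (4 * k + t + 8).choose (k + 1 + 1)
  clear_value X Y Z
  have h3 : X * ((3 * k + t + 8) * (3 * k + t + 7)) = Z * ((4 * k + t + 9) * (k + 2)) := by
    calc X * ((3 * k + t + 8) * (3 * k + t + 7))
        = (X * (3 * k + t + 7 + 1)) * (3 * k + t + 7) := by ring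
      _ = (4 * k + t + 8 + 1) * Y * (3 * k + t + 7) := by rw [← h1]
      _ = (4 * k + t + 9) * (Y * (3 * k + t + 7)) := by ring
      _ = _ := by rw [← h2]; ring
  have h4 : 9 * ((4 * k + t + 9) * (k + 2)) ≤ 4 * ((3 * k + t + 8) * (3 * k + t + 7)) := by
    nlinarith [Nat.zero_le (k * t), Nat.zero_le (t * t)]
  have hpos : 0 < (3 * k + t + 8) * (3 * k + t + 7) := by positivity
  refine Nat.le_of_mul_le_mul_right ?_ hpos
  calc 9 * X * ((3 * k + t + 8) * (3 * k + t + 7))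
      = 9 * (X * ((3 * k + t + 8) * (3 * k + t + 7))) := by ring
    _ = Z * (9 * ((4 * k + t + 9) * (k + 2))) := by rw [h3]; ring
    _ ≤ Z * (4 * ((3 * k + t + 8) * (3 * k + t + 7))) := Nat.mul_le_mul_left _ h4
    _ = _ := by ring

theorem ekr_arith_step (n k : ℕ) (hk : 3 ≤ k) (hn : 4 * k ≤ n) (i : ℕ) (hi : i + 3 ≤ k) :
    9 * (n - 3 - i).choose (n - 1 - k) ≤ 4 * (n - 4 - i).choose (k - 1) := by
  induction i with
  | zero => simpa using ekr_arith_base n k hk hn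
  | succ i ih =>
    have ih := ih (by omega)
    obtain ⟨j, rfl⟩ : ∃ j, k = j + i + 4 := ⟨k - i - 4, by omega⟩
    obtain ⟨t, rfl⟩ : ∃ t, n = 4 * (j + i + 4) + t := ⟨n - 4 * (j + i + 4), by omega⟩
    -- q = n-1-k
    have e1 : 4 * (j + i + 4) + t - 3 - i = (4 * j + 3 * i + t + 12) + 1 := by omega
    have e2 : 4 * (j + i + 4) + t - 4 - i = (4 * j + 3 * i + t + 11) + 1 := by omega
    have e3 : 4 * (j + i + 4) + t - 3 - (i + 1) = 4 * j + 3 * i + t + 12 := by omega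
    have e4 : 4 * (j + i + 4) + t - 4 - (i + 1) = 4 * j + 3 * i + t + 11 := by omega
    have e5 : 4 * (j + i + 4) + t - 1 - (j + i + 4) = 3 * j + 3 * i + t + 11 := by omega
    have e6 : j + i + 4 - 1 = j + i + 3 := by omega
    rw [e1, e2, e5, e6] at ih
    rw [e3, e4, e5, e6]
    have h1 := Nat.choose_mul_succ_eq (4 * j + 3 * i + t + 12) (3 * j + 3 * i + t + 11)
    have h2 := Nat.choose_mul_succ_eq (4 * j + 3 * i + t + 11) (j + i + 3)
    have e7 : 4 * j + 3 * i + t + 12 + 1 - (3 * j + 3 * i + t + 11) = j + 2 := by omega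
    have e8 : 4 * j + 3 * i + t + 11 + 1 - (j + i + 3) = 3 * j + 2 * i + t + 9 := by omega
    rw [e7] at h1
    rw [e8] at h2
    set X' := (4 * j + 3 * i + t + 12 + 1).choose (3 * j + 3 * i + t + 11)
    set X := (4 * j + 3 * i + t + 12).choose (3 * j + 3 * i + t + 11)
    set Z' := (4 * j + 3 * i + t + 11 + 1).choose (j + i + 3)
    set Z := (4 * j + 3 * i + t + 11).choose (j + i + 3)
    clear_value X' X Z' Z
    have hpos : 0 < 4 * j + 3 * i + t + 13 := by positivity
    refine Nat.le_of_mul_le_mul_right ?_ hpos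
    calc 9 * X * (4 * j + 3 * i + t + 13) = 9 * (X * (4 * j + 3 * i + t + 12 + 1)) := by ring
      _ = (9 * X') * (j + 2) := by rw [h1]; ring
      _ ≤ (4 * Z') * (j + 2) := Nat.mul_le_mul_right _ ih
      _ ≤ (4 * Z') * (3 * j + 2 * i + t + 9) := Nat.mul_le_mul_left _ (by omega)
      _ = 4 * (Z' * (3 * j + 2 * i + t + 9)) := by ring
      _ = 4 * (Z * (4 * j + 3 * i + t + 11 + 1)) := by rw [h2]
      _ ≤ 4 * Z * (4 * j + 3 * i + t + 13) := by nlinarith [Nat.zero_le Z]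

set_option maxHeartbeats 1600000 in
theorem ekr_arith_big (n k : ℕ) (hk : 3 ≤ k) (hn : 4 * k ≤ n) (hn2 : 100 ≤ n) :
    9 * (n - 1).choose (k - 2) + 5 * (n - k - 1).choose (k - 1) ≤ 9 * (n - 3).choose (k - 1) := by
  obtain ⟨k, rfl⟩ : ∃ k', k = k' + 3 := ⟨k - 3, by omega⟩
  obtain ⟨t, rfl⟩ : ∃ t, n = k + 6 + t := ⟨n - (k + 6), by omega⟩
  have e1 : k + 6 + t - 1 = k + t + 3 + 1 + 1 := by omega
  have e2 : k + 3 - 2 = k + 1 := by omega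
  have e3 : k + 3 - 1 = k + 2 := by omega
  have e4 : k + 6 + t - 3 = k + t + 3 := by omega
  have e5 : k + 6 + t - (k + 3) - 1 = t + 2 := by omega
  rw [e1, e2, e3, e4, e5]
  have h1 := Nat.choose_mul_succ_eq (k + t + 3 + 1) (k + 1)
  have h2 := Nat.choose_mul_succ_eq (k + t + 3) (k + 1)
  have h3 := Nat.choose_succ_right_eq (k + t + 3) (k + 1)
  have e6 : k + t + 3 + 1 + 1 - (k + 1) = t + 4 := by omega
  have e7 : k + t + 3 + 1 - (k + 1) = t + 3 := by omega
  have e8 : k + t + 3 - (k + 1) = t + 2 := by omega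
  rw [e6] at h1
  rw [e7] at h2
  rw [e8] at h3
  set U := (k + t + 3 + 1 + 1).choose (k + 1)
  set V := (k + t + 3 + 1).choose (k + 1)
  set W := (k + t + 3).choose (k + 1)
  have hX : (k + t + 3).choose (k + 1 + 1) = (k + t + 3).choose (k + 2) := rfl
  rw [hX] at h3
  set X := (k + t + 3).choose (k + 2) with hXdef
  clear_value U V W
  have h4 : U * ((t + 4) * (t + 3) * (t + 2)) = X * ((k + t + 5) * (k + t + 4) * (k + 2)) := by
    calc U * ((t + 4) * (t + 3) * (t + 2)) = (U * (t + 4)) * ((t + 3) * (t + 2)) := by ring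
      _ = (V * (k + t + 3 + 1 + 1)) * ((t + 3) * (t + 2)) := by rw [h1]
      _ = (V * (t + 3)) * ((k + t + 5) * (t + 2)) := by ring
      _ = (W * (k + t + 3 + 1)) * ((k + t + 5) * (t + 2)) := by rw [h2]
      _ = (W * (t + 2)) * ((k + t + 5) * (k + t + 4)) := by ring
      _ = _ := by rw [← h3]; ring
  have hD : (t + 2).choose (k + 2) ≤ X := Nat.choose_le_choose _ (by omega)
  have hpos : 0 < (t + 4) * (t + 3) * (t + 2) := by positivity
  by_cases hc : 5 * (k + 3) ≤ k + 6 + t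
  · clear_value X
    have h6 : 9 * U ≤ 4 * X := by
      refine ekr_ratio _ _ _ _ _ _ h4 ?_ hpos
      obtain ⟨s, rfl⟩ : ∃ s, t = 4 * k + 9 + s := ⟨t - (4 * k + 9), by omega⟩
      exact ekr_poly1 k s
    omega
  · push Not at hc
    -- use D <= choose (k+t+1) (k+2)
    have h5 := Nat.choose_mul_succ_eq (k + t + 1) (k + 2)
    have h6 := Nat.choose_mul_succ_eq (k + t + 2) (k + 2)
    have e9 : k + t + 1 + 1 - (k + 2) = t := by omega
    have e10 : k + t + 2 + 1 - (k + 2) = t + 1 := by omega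
    rw [e9] at h5
    rw [e10] at h6
    have hD' : (t + 2).choose (k + 2) ≤ (k + t + 1).choose (k + 2) :=
      Nat.choose_le_choose _ (by omega)
    have hX2 : (k + t + 2 + 1).choose (k + 2) = X := rfl
    rw [hX2] at h6
    have hY2 : (k + t + 1 + 1).choose (k + 2) = (k + t + 2).choose (k + 2) := rfl
    rw [hY2] at h5
    set Y := (k + t + 2).choose (k + 2)
    set D := (k + t + 1).choose (k + 2)
    set D0 := (t + 2).choose (k + 2)
    clear_value X Y D D0
    have h7 : D * ((k + t + 2) * (k + t + 3)) = X * (t * (t + 1)) := by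
      calc D * ((k + t + 2) * (k + t + 3)) = (D * (k + t + 1 + 1)) * (k + t + 3) := by ring
        _ = (Y * (k + t + 2 + 1)) * t := by rw [h5]; ring
        _ = _ := by rw [h6]; ring
    -- D <= 2/3 X ;  U <= 17/27 X
    have h8 : 3 * D ≤ 2 * X := by
      refine ekr_ratio _ _ _ _ _ _ h7 ?_ (by positivity)
      have q1 : 5 * t ≤ 4 * (k + t + 2) := by omega
      have q2 : 5 * t + 4 ≤ 4 * (k + t + 3) := by omega
      have q3 := Nat.mul_le_mul q1 q2
      have q4 : 4 * t ≤ t * t := Nat.mul_le_mul_right _ (by omega)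
      clear h1 h2 h3 h4 h5 h6 h7 hD hD'
      nlinarith
    have h9 : 27 * U ≤ 17 * X := by
      refine ekr_ratio _ _ _ _ _ _ h4 ?_ hpos
      obtain ⟨s, rfl⟩ : ∃ s, t = 3 * k + 6 + s := ⟨t - (3 * k + 6), by omega⟩
      exact ekr_poly2 k s (by omega)
    omega



/-- Kruskal-Katona for cross-intersecting families on a ground set `S`. -/
theorem ekr_cross_kk {n : ℕ} (S : Finset (Fin n)) (a b x : ℕ) (hab : a + b ≤ #S)
    (A B : Finset (Finset (Fin n)))
    (hA : ∀ e ∈ A, e ⊆ S ∧ #e = a) (hB : ∀ e ∈ B, e ⊆ S ∧ #e = b)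
    (hAB : ∀ e ∈ A, ∀ f ∈ B, (e ∩ f).Nonempty)
    (hx1 : #S - b ≤ x) (hx2 : x ≤ n) (hx3 : x.choose (#S - b) ≤ #B) :
    #A + x.choose a ≤ (#S).choose a := by
  set C : Finset (Finset (Fin n)) := B.image (fun e => S \ e) with hC
  have hCcard : #C = #B := by
    apply card_image_of_injOn
    intro e he f hf hef
    have h1 := (hB e he).1
    have h2 := (hB f hf).1
    simp only at hef
    rw [← Finset.sdiff_sdiff_eq_self h1, hef, Finset.sdiff_sdiff_eq_self h2]
  have hCs : (C : Set (Finset (Fin n))).Sized (#S - b) := by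
    intro e he
    rw [mem_coe, hC, mem_image] at he
    obtain ⟨f, hf, rfl⟩ := he
    rw [card_sdiff_of_subset (hB f hf).1, (hB f hf).2]
  have kk := kruskal_katona_lovasz_form (i := #S - b - a) (by omega) hx1 hx2 hCs
    (by rw [hCcard]; exact hx3)
  have e1 : #S - b - (#S - b - a) = a := by omega
  rw [e1] at kk
  have hmem : ∀ e ∈ ∂^[#S - b - a] C, ∃ f ∈ B, e ⊆ S \ f ∧ #e = a := by
    intro e he
    rw [mem_shadow_iterate_iff_exists_sdiff] at he
    obtain ⟨g, hg, heg, hc⟩ := he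
    have hgc := hCs hg
    rw [hC, mem_image] at hg
    obtain ⟨f, hf, rfl⟩ := hg
    refine ⟨f, hf, heg, ?_⟩
    have := card_sdiff_add_card_eq_card heg
    omega
  have hdisj : Disjoint A (∂^[#S - b - a] C) := by
    rw [Finset.disjoint_right]
    intro e he heA
    obtain ⟨f, hf, hef, _⟩ := hmem e he
    obtain ⟨y, hy⟩ := hAB e heA f hf
    rw [mem_inter] at hy
    exact (mem_sdiff.1 (hef hy.1)).2 hy.2
  calc #A + x.choose a ≤ #A + #(∂^[#S - b - a] C) := by omega
    _ = #(A ∪ ∂^[#S - b - a] C) := (card_union_of_disjoint hdisj).symm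
    _ ≤ #(powersetCard a S) := by
        apply card_le_card
        intro e he
        rw [mem_powersetCard]
        rcases mem_union.1 he with h | h
        · exact hA e h
        · obtain ⟨f, hf, hef, hc⟩ := hmem e h
          exact ⟨hef.trans sdiff_subset, hc⟩
    _ = _ := card_powersetCard _ _

/-- gap lemma. -/
theorem ekr_gap {n k : ℕ} (hk : 3 ≤ k) (hn : 4 * k ≤ n) (S : Finset (Fin n)) (b : ℕ)
    (hSb : #S - b = n - 1 - k) (hbS : b ≤ #S)
    (A B : Finset (Finset (Fin n)))
    (hA : ∀ e ∈ A, e ⊆ S ∧ #e = k - 1) (hB : ∀ e ∈ B, e ⊆ S ∧ #e = b)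
    (hAB : ∀ e ∈ A, ∀ f ∈ B, (e ∩ f).Nonempty) (hB0 : B.Nonempty)
    (hBle : #B ≤ (n - 3).choose (n - 1 - k)) :
    9 * (#A + #B) + 5 * (n - k - 1).choose (k - 1) ≤ 9 * (#S).choose (k - 1) := by
  have hex : ∃ x, n - 1 - k ≤ x ∧ x ≤ n - 4 ∧ x.choose (n - 1 - k) ≤ #B ∧
      #B ≤ (x + 1).choose (n - 1 - k) := by
    have : ∃ y, n - 1 - k < y ∧ #B ≤ y.choose (n - 1 - k) := ⟨n - 3, by omega, hBle⟩
    classical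
    have h1 := Nat.find_spec this
    have h2 : Nat.find this ≤ n - 3 := Nat.find_min' this ⟨by omega, hBle⟩
    set y := Nat.find this with hy
    refine ⟨y - 1, by omega, by omega, ?_, ?_⟩
    · by_cases h : n - 1 - k < y - 1
      · have h3 := Nat.find_min this (m := y - 1) (by omega)
        push Not at h3
        exact (h3 h).le
      · have : y - 1 = n - 1 - k := by omega
        rw [this, Nat.choose_self]
        exact hB0.card_pos
    · rw [show y - 1 + 1 = y by omega]
      exact h1.2
  obtain ⟨x, h1, h2, h3, h4⟩ := hex
  have kk := ekr_cross_kk S (k - 1) b x (by omega) A B hA hB hAB (by omega) (by omega)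
    (by rw [hSb]; exact h3)
  have har := ekr_arith_step n k hk hn (n - 4 - x) (by omega)
  rw [show n - 3 - (n - 4 - x) = x + 1 by omega, show n - 4 - (n - 4 - x) = x by omega] at har
  have hD : (n - k - 1).choose (k - 1) ≤ x.choose (k - 1) := Nat.choose_le_choose _ (by omega)
  omega

/-- Shifted `t`-intersecting families. -/
theorem ekr_shifted_tint {α : Type*} [LinearOrder α] (S : Finset α) :
    ∀ (k t : ℕ) (B : Finset (Finset α)), (∀ e ∈ B, e ⊆ S ∧ #e = k) →
      (∀ e ∈ B, ∀ f ∈ B, t ≤ #(e ∩ f)) →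
      (∀ e ∈ B, ∀ i ∈ S, ∀ j ∈ S, i < j → j ∈ e → i ∉ e → insert i (e.erase j) ∈ B) →
      t ≤ k → #B ≤ (#S).choose (k - t) := by
  induction S using Finset.induction_on_min with
  | empty =>
    intro k t B hB ht _ htk
    have hsub : B ⊆ {∅} := by
      intro e he
      have := (hB e he).1
      simpa using this
    rcases B.eq_empty_or_nonempty with rfl | ⟨e, he⟩
    · simp
    · have h1 := ht e he e he
      have h2 : e = ∅ := by simpa using (hB e he).1
      have h3 := (hB e he).2
      subst h2
      simp at h1 h3
      subst h3
      subst h1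
      simpa using card_le_card hsub
  | insert c S hc ih =>
    intro k t B hB ht hsh htk
    have hcS : c ∉ S := fun h => lt_irrefl _ (hc c h)
    rcases Nat.eq_zero_or_pos t with rfl | htpos
    · have : B ⊆ powersetCard k (insert c S) := by
        intro e he
        rw [mem_powersetCard]
        exact hB e he
      simpa using card_le_card this
    set B1 := (B.filter (fun e => c ∈ e)).image (fun e => e.erase c) with hB1
    set B2 := B.filter (fun e => c ∉ e) with hB2
    have hcard : #B = #B1 + #B2 := by
      rw [hB1, card_image_of_injOn, hB2, card_filter_add_card_filter_not]
      intro e he f hf hef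
      simp only [coe_filter, Set.mem_ofPred_eq] at he hf hef
      rw [← insert_erase he.2, hef, insert_erase hf.2]
    have hB1' : #B1 ≤ (#S).choose ((k - 1) - (t - 1)) := by
      apply ih (k - 1) (t - 1) B1
      · intro e he
        rw [hB1, mem_image] at he
        obtain ⟨f, hf, rfl⟩ := he
        rw [mem_filter] at hf
        refine ⟨?_, ?_⟩
        · rw [← subset_insert_iff]; exact (hB f hf.1).1
        · rw [card_erase_of_mem hf.2, (hB f hf.1).2]
      · intro e he f hf
        rw [hB1, mem_image] at he hf
        obtain ⟨e, he, rfl⟩ := he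
        obtain ⟨f, hf, rfl⟩ := hf
        rw [mem_filter] at he hf
        have h := ht e he.1 f hf.1
        have : (e.erase c ∩ f.erase c) = (e ∩ f).erase c := by
          ext z; simp only [mem_inter, mem_erase]; tauto
        rw [this, card_erase_of_mem (mem_inter.2 ⟨he.2, hf.2⟩)]
        omega
      · intro e he i hi j hj hij hje hie
        rw [hB1, mem_image] at he ⊢
        obtain ⟨e, he, rfl⟩ := he
        rw [mem_filter] at he
        have hic : i ≠ c := fun h => hcS (h ▸ hi)
        have hjc : j ≠ c := fun h => hcS (h ▸ hj)
        have h1 := hsh e he.1 i (mem_insert_of_mem hi) j (mem_insert_of_mem hj) hij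
          (mem_of_mem_erase hje) (fun h => hie (mem_erase.2 ⟨hic, h⟩))
        refine ⟨_, mem_filter.2 ⟨h1, ?_⟩, ?_⟩
        · exact mem_insert_of_mem (mem_erase.2 ⟨hjc.symm, he.2⟩)
        · ext z
          simp only [mem_erase, mem_insert]
          grind
      · omega
    have hB2' : ∀ e ∈ B2, ∀ f ∈ B2, t + 1 ≤ #(e ∩ f) := by
      intro e he f hf
      rw [hB2, mem_filter] at he hf
      by_contra hcon
      have h1 := ht e he.1 f hf.1
      have h2 : #(e ∩ f) = t := by omega
      obtain ⟨y, hy⟩ : (e ∩ f).Nonempty := card_pos.1 (by omega)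
      have hy' := mem_inter.1 hy
      have hyc : y ≠ c := fun h => he.2 (h ▸ hy'.1)
      have hyS : y ∈ S := by
        have := (hB e he.1).1 hy'.1
        rw [mem_insert] at this
        tauto
      have h3 := hsh e he.1 c (mem_insert_self _ _) y (mem_insert_of_mem hyS) (hc y hyS) hy'.1 he.2
      have h4 := ht _ h3 f hf.1
      have h5 : insert c (e.erase y) ∩ f = (e ∩ f).erase y := by
        ext z
        simp only [mem_inter, mem_insert, mem_erase]
        grind
      rw [h5, card_erase_of_mem hy] at h4
      omega
    have hB2s : ∀ e ∈ B2, e ⊆ S ∧ #e = k := by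
      intro e he
      rw [hB2, mem_filter] at he
      refine ⟨?_, (hB e he.1).2⟩
      intro z hz
      have := (hB e he.1).1 hz
      rw [mem_insert] at this
      rcases this with h | h
      · exact absurd (h ▸ hz) he.2
      · exact h
    rw [card_insert_of_notMem hcS, hcard]
    rcases Nat.lt_or_ge t k with hlt | hge
    · have h2 : #B2 ≤ (#S).choose (k - (t + 1)) := by
        apply ih k (t + 1) B2 hB2s hB2' _ hlt
        intro e he i hi j hj hij hje hie
        rw [hB2, mem_filter] at he ⊢
        have hic : i ≠ c := fun h => hcS (h ▸ hi)
        refine ⟨hsh e he.1 i (mem_insert_of_mem hi) j (mem_insert_of_mem hj) hij hje hie, ?_⟩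
        rw [mem_insert, mem_erase]
        push Not
        exact ⟨hic.symm, fun _ => he.2⟩
      obtain ⟨d, rfl⟩ : ∃ d, k = t + d + 1 := ⟨k - t - 1, by omega⟩
      rw [show t + d + 1 - (t + 1) = d by omega] at h2
      rw [show t + d + 1 - 1 - (t - 1) = d + 1 by omega] at hB1'
      rw [show t + d + 1 - t = d + 1 by omega, Nat.choose_succ_succ']
      omega
    · have h2 : B2 = ∅ := by
        rw [eq_empty_iff_forall_notMem]
        intro e he
        have h1 := hB2' e he e he
        rw [inter_self, (hB2s e he).2] at h1
        omega
      have : k - t = 0 := by omega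
      rw [h2, this, Nat.choose_zero_right]
      rw [show k - 1 - (t - 1) = 0 by omega, Nat.choose_zero_right] at hB1'
      simpa using hB1'



theorem ekr_compress_pos {n : ℕ} {i j : Fin n} {e : Finset (Fin n)} (hij : i ≠ j) (hj : j ∈ e)
    (hi : i ∉ e) : UV.compress {i} {j} e = insert i (e.erase j) := by
  rw [UV.compress_of_disjoint_of_le (by simpa using hi) (by simpa using hj)]
  ext z
  simp only [sup_eq_union, mem_sdiff, mem_union, mem_singleton, mem_insert, mem_erase]
  grind

theorem ekr_compress_neg {n : ℕ} {i j : Fin n} {e : Finset (Fin n)}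
    (h : ¬ (j ∈ e ∧ i ∉ e)) : UV.compress {i} {j} e = e := by
  rw [UV.compress, if_neg]
  simpa [and_comm] using h

theorem ekr_mem_shift {n : ℕ} {i j : Fin n} (hij : i ≠ j) (F : Finset (Finset (Fin n)))
    {e : Finset (Fin n)} (he : e ∈ UV.compression {i} {j} F) :
    (e ∈ F ∧ (j ∈ e → i ∉ e → insert i (e.erase j) ∈ F)) ∨
      (e ∉ F ∧ ∃ f ∈ F, j ∈ f ∧ i ∉ f ∧ e = insert i (f.erase j)) := by
  rw [UV.mem_compression] at he
  rcases he with ⟨h1, h2⟩ | ⟨h1, f, hf, h2⟩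
  · left
    refine ⟨h1, fun hj hi => ?_⟩
    rwa [ekr_compress_pos hij hj hi] at h2
  · right
    refine ⟨h1, f, hf, ?_⟩
    by_cases h : j ∈ f ∧ i ∉ f
    · rw [ekr_compress_pos hij h.1 h.2] at h2
      exact ⟨h.1, h.2, h2.symm⟩
    · rw [ekr_compress_neg h] at h2
      exact absurd (h2 ▸ hf) h1

theorem ekr_shift_int {n : ℕ} {i j : Fin n} (hij : i ≠ j) (F : Finset (Finset (Fin n)))
    (hF : ∀ e ∈ F, ∀ f ∈ F, (e ∩ f).Nonempty) :
    ∀ e ∈ UV.compression {i} {j} F, ∀ f ∈ UV.compression {i} {j} F, (e ∩ f).Nonempty := by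
  have key : ∀ e ∈ F, (j ∈ e → i ∉ e → insert i (e.erase j) ∈ F) → ∀ f ∈ F, j ∈ f → i ∉ f →
      (e ∩ insert i (f.erase j)).Nonempty := by
    intro e he hs f hf hjf hif
    by_contra hcon
    rw [not_nonempty_iff_eq_empty, eq_empty_iff_forall_notMem] at hcon
    have h0 : ∀ z, z ∈ e → z ∈ f → z = j := by
      intro z hz hzf
      by_contra hzj
      exact hcon z (mem_inter.2 ⟨hz, mem_insert_of_mem (mem_erase.2 ⟨hzj, hzf⟩)⟩)
    have hie : i ∉ e := fun h => hcon i (mem_inter.2 ⟨h, mem_insert_self _ _⟩)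
    obtain ⟨z, hz⟩ := hF e he f hf
    rw [mem_inter] at hz
    have hje : j ∈ e := h0 z hz.1 hz.2 ▸ hz.1
    obtain ⟨y, hy⟩ := hF _ (hs hje hie) f hf
    rw [mem_inter, mem_insert, mem_erase] at hy
    rcases hy with ⟨rfl | ⟨h1, h2⟩, h3⟩
    · exact hif h3
    · exact h1 (h0 y h2 h3)
  intro e he f hf
  rcases ekr_mem_shift hij F he with ⟨h1, h2⟩ | ⟨h1, e', he', hje, hie, rfl⟩ <;>
  rcases ekr_mem_shift hij F hf with ⟨h3, h4⟩ | ⟨h3, f', hf', hjf, hif, rfl⟩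
  · exact hF e h1 f h3
  · exact key e h1 h2 f' hf' hjf hif
  · rw [inter_comm]
    exact key f h3 h4 e' he' hje hie
  · exact ⟨i, mem_inter.2 ⟨mem_insert_self _ _, mem_insert_self _ _⟩⟩

def ekrMeasure {n : ℕ} (F : Finset (Finset (Fin n))) : ℕ := ∑ e ∈ F, ∑ x ∈ e, (x : ℕ)

theorem ekr_measure_lt {n : ℕ} {i j : Fin n} (hij : i < j) (F : Finset (Finset (Fin n)))
    (hne : UV.compression {i} {j} F ≠ F) :
    ekrMeasure (UV.compression {i} {j} F) < ekrMeasure F := by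
  rw [UV.compression] at hne ⊢
  have q : ∀ Q ∈ {A ∈ F | UV.compress {i} {j} A ∉ F}, UV.compress {i} {j} Q ≠ Q := by grind
  have uA : {A ∈ F | UV.compress {i} {j} A ∈ F} ∪ {A ∈ F | UV.compress {i} {j} A ∉ F} = F :=
    filter_union_filter_not_eq _ _
  have ne₂ : {A ∈ F | UV.compress {i} {j} A ∉ F}.Nonempty := by
    contrapose! hne
    rw [filter_image, hne, image_empty, union_empty]
    rwa [hne, union_empty] at uA
  rw [ekrMeasure, ekrMeasure, sum_union UV.compress_disjoint]
  conv_rhs => rw [← uA]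
  rw [sum_union (disjoint_filter_filter_not _ _ _), add_lt_add_iff_left, filter_image,
    sum_image UV.compress_injOn]
  refine sum_lt_sum_of_nonempty ne₂ fun A hA ↦ ?_
  have h1 := q A hA
  by_cases h : j ∈ A ∧ i ∉ A
  · rw [ekr_compress_pos hij.ne h.1 h.2, sum_insert (fun h' => h.2 (mem_of_mem_erase h')),
      ← add_sum_erase A _ h.1]
    have : (i : ℕ) < j := hij
    omega
  · exact absurd (ekr_compress_neg h) h1

/-- Case: all members of `F` meet `{i,j}`. -/
theorem ekr_two_point {n k : ℕ} (hk : 3 ≤ k) (hn : 4 * k ≤ n) (F : Finset (Finset (Fin n)))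
    (hF : ∀ e ∈ F, ∀ f ∈ F, (e ∩ f).Nonempty) (hs : ∀ e ∈ F, #e = k)
    (hnt : ∀ v, ∃ e ∈ F, v ∉ e) (i j : Fin n) (hij : i ≠ j) (hcov : ∀ e ∈ F, i ∈ e ∨ j ∈ e) :
    9 * #F + 5 * (n - k - 1).choose (k - 1) ≤ 9 * (n - 1).choose (k - 1) := by
  set S : Finset (Fin n) := (univ.erase i).erase j with hS
  have hScard : #S = n - 2 := by
    rw [hS, card_erase_of_mem (mem_erase.2 ⟨hij.symm, mem_univ _⟩), card_erase_of_mem (mem_univ _),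
      card_univ, Fintype.card_fin]
    omega
  have hmemS : ∀ z, z ∈ S ↔ z ≠ j ∧ z ≠ i := by intro z; simp [hS]
  set FA := F.filter (fun e => i ∈ e ∧ j ∉ e) with hFA
  set FB := F.filter (fun e => j ∈ e ∧ i ∉ e) with hFB
  set FC := F.filter (fun e => i ∈ e ∧ j ∈ e) with hFC
  set A := FA.image (fun e => e.erase i) with hA
  set B := FB.image (fun e => e.erase j) with hB
  have cA : #A = #FA := by
    rw [hA]
    apply card_image_of_injOn
    intro e he f hf hef
    simp only [hFA, coe_filter, Set.mem_ofPred_eq] at he hf hef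
    rw [← insert_erase he.2.1, hef, insert_erase hf.2.1]
  have cB : #B = #FB := by
    rw [hB]
    apply card_image_of_injOn
    intro e he f hf hef
    simp only [hFB, coe_filter, Set.mem_ofPred_eq] at he hf hef
    rw [← insert_erase he.2.1, hef, insert_erase hf.2.1]
  have cC : #FC ≤ (n - 2).choose (k - 2) := by
    have : #FC = #(FC.image (fun e => (e.erase i).erase j)) := by
      symm
      apply card_image_of_injOn
      intro e he f hf hef
      simp only [hFC, coe_filter, Set.mem_ofPred_eq] at he hf hef
      have h1 : j ∈ e.erase i := mem_erase.2 ⟨hij.symm, he.2.2⟩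
      have h2 : j ∈ f.erase i := mem_erase.2 ⟨hij.symm, hf.2.2⟩
      rw [← insert_erase he.2.1, ← insert_erase h1, hef, insert_erase h2, insert_erase hf.2.1]
    rw [this, ← hScard, ← card_powersetCard]
    apply card_le_card
    intro e he
    rw [mem_image] at he
    obtain ⟨f, hf, rfl⟩ := he
    rw [hFC, mem_filter] at hf
    rw [mem_powersetCard]
    refine ⟨fun z hz => ?_, ?_⟩
    · rw [hmemS]; simp at hz; tauto
    · rw [card_erase_of_mem (mem_erase.2 ⟨hij.symm, hf.2.2⟩), card_erase_of_mem hf.2.1, hs f hf.1]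
      omega
  have hsum : #F ≤ #A + #B + (n - 2).choose (k - 2) := by
    have : F ⊆ FA ∪ FB ∪ FC := by
      intro e he
      have := hcov e he
      simp only [hFA, hFB, hFC, mem_union, mem_filter]
      tauto
    have h1 := card_le_card this
    have h2 := card_union_le (FA ∪ FB) FC
    have h3 := card_union_le FA FB
    omega
  have hAs : ∀ e ∈ A, e ⊆ S ∧ #e = k - 1 := by
    intro e he
    rw [hA, mem_image] at he
    obtain ⟨f, hf, rfl⟩ := he
    rw [hFA, mem_filter] at hf
    refine ⟨fun z hz => ?_, by rw [card_erase_of_mem hf.2.1, hs f hf.1]⟩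
    rw [hmemS]
    rw [mem_erase] at hz
    exact ⟨fun h => hf.2.2 (h ▸ hz.2), hz.1⟩
  have hBs : ∀ e ∈ B, e ⊆ S ∧ #e = k - 1 := by
    intro e he
    rw [hB, mem_image] at he
    obtain ⟨f, hf, rfl⟩ := he
    rw [hFB, mem_filter] at hf
    refine ⟨fun z hz => ?_, by rw [card_erase_of_mem hf.2.1, hs f hf.1]⟩
    rw [hmemS]
    rw [mem_erase] at hz
    exact ⟨hz.1, fun h => hf.2.2 (h ▸ hz.2)⟩
  have hAB : ∀ e ∈ A, ∀ f ∈ B, (e ∩ f).Nonempty := by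
    intro e he f hf
    rw [hA, mem_image] at he
    rw [hB, mem_image] at hf
    obtain ⟨e, he, rfl⟩ := he
    obtain ⟨f, hf, rfl⟩ := hf
    rw [hFA, mem_filter] at he
    rw [hFB, mem_filter] at hf
    obtain ⟨z, hz⟩ := hF e he.1 f hf.1
    rw [mem_inter] at hz
    refine ⟨z, mem_inter.2 ⟨mem_erase.2 ⟨?_, hz.1⟩, mem_erase.2 ⟨?_, hz.2⟩⟩⟩
    · rintro rfl; exact hf.2.2 hz.2
    · rintro rfl; exact he.2.2 hz.1
  have hBA : ∀ e ∈ B, ∀ f ∈ A, (e ∩ f).Nonempty := by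
    intro e he f hf
    rw [inter_comm]; exact hAB f hf e he
  have hA0 : A.Nonempty := by
    obtain ⟨e, he, hje⟩ := hnt j
    refine ⟨e.erase i, mem_image_of_mem _ (mem_filter.2 ⟨he, ?_, hje⟩)⟩
    have := hcov e he
    tauto
  have hB0 : B.Nonempty := by
    obtain ⟨e, he, hie⟩ := hnt i
    refine ⟨e.erase j, mem_image_of_mem _ (mem_filter.2 ⟨he, ?_, hie⟩)⟩
    have := hcov e he
    tauto
  have hpas2 : (n - 2).choose (k - 1) = (n - 3).choose (k - 2) + (n - 3).choose (k - 1) := by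
    have := Nat.choose_succ_succ' (n - 3) (k - 2)
    rwa [show n - 3 + 1 = n - 2 by omega, show k - 2 + 1 = k - 1 by omega] at this
  have hpas1 : (n - 1).choose (k - 1) = (n - 2).choose (k - 2) + (n - 2).choose (k - 1) := by
    have := Nat.choose_succ_succ' (n - 2) (k - 2)
    rwa [show n - 2 + 1 = n - 1 by omega, show k - 2 + 1 = k - 1 by omega] at this
  have hsym : (n - 3).choose (n - 1 - k) = (n - 3).choose (k - 2) :=
    Nat.choose_symm_of_eq_add (by omega)
  -- a general bound
  have main : ∀ A B : Finset (Finset (Fin n)), (∀ e ∈ A, e ⊆ S ∧ #e = k - 1) →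
      (∀ e ∈ B, e ⊆ S ∧ #e = k - 1) → (∀ e ∈ A, ∀ f ∈ B, (e ∩ f).Nonempty) → B.Nonempty →
      #B ≤ #A →
      9 * (#A + #B) + 5 * (n - k - 1).choose (k - 1) ≤ 9 * (n - 2).choose (k - 1) := by
    intro A B hA hB hAB hB0 hle
    rw [← hScard]
    apply ekr_gap hk hn S (k - 1) (by omega) (by omega) A B hA hB hAB hB0
    by_contra hcon
    push Not at hcon
    have kk := ekr_cross_kk S (k - 1) (k - 1) (n - 3) (by omega) A B hA hB hAB (by omega) (by omega)
      (by rw [show #S - (k - 1) = n - 1 - k by omega]; exact hcon.le)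
    rw [hScard] at kk
    omega
  rcases le_total (#B) (#A) with h | h
  · have := main A B hAs hBs hAB hB0 h
    omega
  · have := main B A hBs hAs hBA hA0 h
    omega

/-- Case: `F` is shifted. -/
theorem ekr_shifted_case {n k : ℕ} (hk : 3 ≤ k) (hn : 4 * k ≤ n) (hn2 : 100 ≤ n)
    (F : Finset (Finset (Fin n)))
    (hF : ∀ e ∈ F, ∀ f ∈ F, (e ∩ f).Nonempty) (hs : ∀ e ∈ F, #e = k)
    (hnt : ∀ v, ∃ e ∈ F, v ∉ e)
    (hsh : ∀ e ∈ F, ∀ i j, i < j → j ∈ e → i ∉ e → insert i (e.erase j) ∈ F) :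
    9 * #F + 5 * (n - k - 1).choose (k - 1) ≤ 9 * (n - 1).choose (k - 1) := by
  let o : Fin n := ⟨0, by omega⟩
  have ho : ∀ z, z ≠ o → o < z := by
    intro z hz
    rw [Fin.lt_def]
    have : (z : ℕ) ≠ 0 := fun h => hz (Fin.ext h)
    show 0 < (z : ℕ)
    omega
  set S : Finset (Fin n) := univ.erase o with hS
  have hScard : #S = n - 1 := by
    rw [hS, card_erase_of_mem (mem_univ _), card_univ, Fintype.card_fin]
  have hmemS : ∀ z, z ∈ S ↔ z ≠ o := by intro z; simp [hS]
  set FA := F.filter (fun e => o ∈ e) with hFA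
  set B := F.filter (fun e => o ∉ e) with hB
  set A := FA.image (fun e => e.erase o) with hA
  have cA : #A = #FA := by
    rw [hA]
    apply card_image_of_injOn
    intro e he f hf hef
    simp only [hFA, coe_filter, Set.mem_ofPred_eq] at he hf hef
    rw [← insert_erase he.2, hef, insert_erase hf.2]
  have hsum : #F = #A + #B := by
    rw [cA, hFA, hB, card_filter_add_card_filter_not]
  have hAs : ∀ e ∈ A, e ⊆ S ∧ #e = k - 1 := by
    intro e he
    rw [hA, mem_image] at he
    obtain ⟨f, hf, rfl⟩ := he
    rw [hFA, mem_filter] at hf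
    refine ⟨fun z hz => ?_, by rw [card_erase_of_mem hf.2, hs f hf.1]⟩
    rw [hmemS]
    exact (mem_erase.1 hz).1
  have hBs : ∀ e ∈ B, e ⊆ S ∧ #e = k := by
    intro e he
    rw [hB, mem_filter] at he
    refine ⟨fun z hz => ?_, hs e he.1⟩
    rw [hmemS]
    rintro rfl
    exact he.2 hz
  have hAB : ∀ e ∈ A, ∀ f ∈ B, (e ∩ f).Nonempty := by
    intro e he f hf
    rw [hA, mem_image] at he
    obtain ⟨e, he, rfl⟩ := he
    rw [hFA, mem_filter] at he
    rw [hB, mem_filter] at hf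
    obtain ⟨z, hz⟩ := hF e he.1 f hf.1
    rw [mem_inter] at hz
    refine ⟨z, mem_inter.2 ⟨mem_erase.2 ⟨?_, hz.1⟩, hz.2⟩⟩
    rintro rfl; exact hf.2 hz.2
  have hB0 : B.Nonempty := by
    obtain ⟨e, he, h⟩ := hnt o
    exact ⟨e, mem_filter.2 ⟨he, h⟩⟩
  have hB2 : ∀ e ∈ B, ∀ f ∈ B, 2 ≤ #(e ∩ f) := by
    intro e he f hf
    have he' := (mem_filter.1 he)
    have hf' := (mem_filter.1 hf)
    obtain ⟨y, hy⟩ := hF e he'.1 f hf'.1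
    have hy' := mem_inter.1 hy
    have hyo : y ≠ o := fun h => he'.2 (h ▸ hy'.1)
    obtain ⟨z, hz⟩ := hF _ (hsh e he'.1 o y (ho y hyo) hy'.1 he'.2) f hf'.1
    rw [mem_inter, mem_insert, mem_erase] at hz
    have hzy : z ≠ y ∧ z ∈ e := by
      rcases hz.1 with h | h
      · exact absurd (h ▸ hz.2) hf'.2
      · exact h
    have : 1 < #(e ∩ f) := one_lt_card.2 ⟨z, mem_inter.2 ⟨hzy.2, hz.2⟩, y, hy, hzy.1⟩
    omega
  have hBle : #B ≤ (n - 1).choose (k - 2) := by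
    rw [← hScard]
    apply ekr_shifted_tint S k 2 B hBs hB2 _ (by omega)
    intro e he i hi j hj hij hje hie
    rw [hB, mem_filter] at he ⊢
    refine ⟨hsh e he.1 i j hij hje hie, ?_⟩
    rw [mem_insert, mem_erase]
    rw [hmemS] at hi
    push Not
    exact ⟨hi.symm, fun _ => he.2⟩
  rw [hsum, ← hScard]
  rcases le_total (#B) ((n - 3).choose (n - 1 - k)) with h | h
  · exact ekr_gap hk hn S k (by omega) (by omega) A B hAs hBs hAB hB0 h
  · have kk := ekr_cross_kk S (k - 1) k (n - 3) (by omega) A B hAs hBs hAB (by omega) (by omega)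
      (by rw [show #S - k = n - 1 - k by omega]; exact h)
    have := ekr_arith_big n k hk hn hn2
    omega

/-- Weak Hilton-Milner. -/
theorem ekr_weak_hm {n k : ℕ} (hk : 3 ≤ k) (hn : 4 * k ≤ n) (hn2 : 100 ≤ n)
    (F : Finset (Finset (Fin n)))
    (hF : ∀ e ∈ F, ∀ f ∈ F, (e ∩ f).Nonempty) (hs : ∀ e ∈ F, #e = k)
    (hnt : ∀ v, ∃ e ∈ F, v ∉ e) :
    9 * #F + 5 * (n - k - 1).choose (k - 1) ≤ 9 * (n - 1).choose (k - 1) := by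
  induction hm : ekrMeasure F using Nat.strong_induction_on generalizing F with
  | _ m ih =>
    by_cases hall : ∀ i j : Fin n, i < j → UV.compression {i} {j} F = F
    · apply ekr_shifted_case hk hn hn2 F hF hs hnt
      intro e he i j hij hje hie
      have h1 := UV.compress_mem_compression (u := {i}) (v := {j}) he
      rwa [hall i j hij, ekr_compress_pos hij.ne hje hie] at h1
    · push Not at hall
      obtain ⟨i, j, hij, hne⟩ := hall
      by_cases hnt' : ∀ v, ∃ e ∈ UV.compression {i} {j} F, v ∉ e
      · rw [← UV.card_compression {i} {j} F]
        refine ih _ ?_ (UV.compression {i} {j} F) (ekr_shift_int hij.ne F hF) ?_ hnt' rfl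
        · rw [← hm]; exact ekr_measure_lt hij F hne
        · have h1 : (F : Set (Finset (Fin n))).Sized k := fun e he => hs e he
          have h2 := h1.uvCompression (u := {i}) (v := {j}) (by simp)
          exact fun e he => h2 he
      · push Not at hnt'
        obtain ⟨v, hv⟩ := hnt'
        have hvi : v = i := by
          by_contra hvi
          obtain ⟨e, he, hve⟩ := hnt v
          have h0 : UV.compress {i} {j} e ∈ UV.compression {i} {j} F :=
            UV.compress_mem_compression he
          have h1 := hv _ h0
          by_cases h : j ∈ e ∧ i ∉ e
          · rw [ekr_compress_pos hij.ne h.1 h.2, mem_insert, mem_erase] at h1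
            tauto
          · rw [ekr_compress_neg h] at h1
            exact hve h1
        subst hvi
        apply ekr_two_point hk hn F hF hs hnt v j hij.ne
        intro e he
        have h0 : UV.compress {v} {j} e ∈ UV.compression {v} {j} F :=
          UV.compress_mem_compression he
        have h1 := hv _ h0
        by_cases h : j ∈ e ∧ v ∉ e
        · exact Or.inr h.1
        · rw [ekr_compress_neg h] at h1
          exact Or.inl h1



/-- Bollobás set-pairs inequality (weighted form). -/
theorem ekr_bollobas_weighted {α ι : Type*} [DecidableEq α] [DecidableEq ι] (X : Finset α) :
    ∀ (I : Finset ι) (A B : ι → Finset α), (∀ i ∈ I, A i ⊆ X) → (∀ i ∈ I, B i ⊆ X) →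
      (∀ i ∈ I, Disjoint (A i) (B i)) →
      (∀ i ∈ I, ∀ j ∈ I, i ≠ j → (A i ∩ B j).Nonempty) →
      ∑ i ∈ I, (1 : ℚ) / ((#(A i) + #(B i)).choose (#(A i))) ≤ 1 := by
  induction hN : #X generalizing X with
  | zero =>
    intro I A B hA hB hd hne
    have hX : X = ∅ := card_eq_zero.1 hN
    subst hX
    have h1 : #I ≤ 1 := by
      rw [card_le_one]
      intro i hi j hj
      by_contra hij
      obtain ⟨z, hz⟩ := hne i hi j hj hij
      have := hA i hi (mem_inter.1 hz).1
      simp at this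
    calc ∑ i ∈ I, (1 : ℚ) / ((#(A i) + #(B i)).choose (#(A i)))
        = ∑ i ∈ I, (1 : ℚ) := by
          apply sum_congr rfl
          intro i hi
          have h2 : A i = ∅ := by simpa using hA i hi
          have h3 : B i = ∅ := by simpa using hB i hi
          simp [h2, h3]
      _ = #I := by simp
      _ ≤ 1 := by exact_mod_cast h1
  | succ N ih =>
    intro I A B hA hB hd hne
    by_cases hemp : ∃ i ∈ I, B i = ∅
    · obtain ⟨i, hi, hBi⟩ := hemp
      have hI : I = {i} := by
        rw [eq_singleton_iff_unique_mem]
        refine ⟨hi, fun j hj => ?_⟩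
        by_contra hji
        have := hne j hj i hi hji
        rw [hBi] at this
        simp at this
      rw [hI, sum_singleton, hBi]
      simp
    push Not at hemp
    have step : ∀ x ∈ X, ∑ i ∈ I.filter (fun i => x ∉ A i),
        (1 : ℚ) / ((#(A i) + #((B i).erase x)).choose (#(A i))) ≤ 1 := by
      intro x hx
      apply ih (X.erase x) (by rw [card_erase_of_mem hx, hN]; rfl)
      · intro i hi
        rw [mem_filter] at hi
        exact subset_erase.2 ⟨hA i hi.1, hi.2⟩
      · intro i hi
        rw [mem_filter] at hi
        exact erase_subset_erase _ (hB i hi.1)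
      · intro i hi
        rw [mem_filter] at hi
        exact (hd i hi.1).mono_right (erase_subset _ _)
      · intro i hi j hj hij
        rw [mem_filter] at hi hj
        obtain ⟨z, hz⟩ := hne i hi.1 j hj.1 hij
        rw [mem_inter] at hz
        refine ⟨z, mem_inter.2 ⟨hz.1, mem_erase.2 ⟨?_, hz.2⟩⟩⟩
        rintro rfl
        exact hi.2 hz.1
    have hsum := sum_le_sum step
    simp only [sum_const, hN, nsmul_eq_mul, mul_one] at hsum
    have hswap : ∑ x ∈ X, ∑ i ∈ I.filter (fun i => x ∉ A i),
        (1 : ℚ) / ((#(A i) + #((B i).erase x)).choose (#(A i))) =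
        ∑ i ∈ I, ∑ x ∈ X.filter (fun x => x ∉ A i),
        (1 : ℚ) / ((#(A i) + #((B i).erase x)).choose (#(A i))) := by
      simp only [sum_filter]
      exact sum_comm
    have hinner : ∀ i ∈ I, ∑ x ∈ X.filter (fun x => x ∉ A i),
        (1 : ℚ) / ((#(A i) + #((B i).erase x)).choose (#(A i))) =
        (N + 1 : ℚ) * ((1 : ℚ) / ((#(A i) + #(B i)).choose (#(A i)))) := by
      intro i hi
      have hsplit : X.filter (fun x => x ∉ A i) = B i ∪ (X \ (A i ∪ B i)) := by
        ext z
        have h1 : z ∈ B i → z ∈ X := fun h => hB i hi h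
        have h2 : z ∈ A i → z ∉ B i := fun h => disjoint_left.1 (hd i hi) h
        simp only [mem_filter, mem_union, mem_sdiff]
        tauto
      rw [hsplit, sum_union (by
        rw [disjoint_left]; intro z hz hz2
        exact (mem_sdiff.1 hz2).2 (mem_union_right _ hz))]
      have hc : #(X \ (A i ∪ B i)) + (#(A i) + #(B i)) = N + 1 := by
        rw [← card_union_of_disjoint (hd i hi), card_sdiff_add_card_eq_card, hN]
        exact union_subset (hA i hi) (hB i hi)
      have h1 : ∑ x ∈ B i, (1 : ℚ) / ((#(A i) + #((B i).erase x)).choose (#(A i))) =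
          ((#(A i) : ℚ) + #(B i)) * ((1 : ℚ) / ((#(A i) + #(B i)).choose (#(A i)))) := by
        have hb : 0 < #(B i) := (hemp i hi).card_pos
        · rw [sum_congr rfl (g := fun _ => (1 : ℚ) / ((#(A i) + (#(B i) - 1)).choose (#(A i))))
            (fun x hx => by rw [card_erase_of_mem hx])]
          rw [sum_const, nsmul_eq_mul]
          obtain ⟨b, hb'⟩ : ∃ b, #(B i) = b + 1 := ⟨#(B i) - 1, by omega⟩
          rw [hb']
          generalize #(A i) = a
          have e := Nat.choose_mul_succ_eq (a + b) a
          rw [show a + b + 1 - a = b + 1 by omega] at e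
          have e' : (((a + b).choose a : ℕ) : ℚ) * (a + (b + 1)) =
              ((a + (b + 1)).choose a : ℕ) * (b + 1) := by
            have := congrArg (Nat.cast : ℕ → ℚ) e
            push_cast at this ⊢
            rw [show a + (b + 1) = a + b + 1 by omega]
            linarith
          have p1 : (0 : ℚ) < ((a + b).choose a : ℕ) := by
            exact_mod_cast Nat.choose_pos (by omega)
          have p2 : (0 : ℚ) < ((a + (b + 1)).choose a : ℕ) := by
            exact_mod_cast Nat.choose_pos (by omega)
          rw [show b + 1 - 1 = b by omega]
          push_cast
          field_simp
          linarith
      have h2 : ∑ x ∈ X \ (A i ∪ B i), (1 : ℚ) / ((#(A i) + #((B i).erase x)).choose (#(A i))) =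
          (#(X \ (A i ∪ B i)) : ℚ) * ((1 : ℚ) / ((#(A i) + #(B i)).choose (#(A i)))) := by
        rw [sum_congr rfl (g := fun _ => (1 : ℚ) / ((#(A i) + #(B i)).choose (#(A i))))
          (fun x hx => by
            rw [erase_eq_of_notMem (fun h => (mem_sdiff.1 hx).2 (mem_union_right _ h))])]
        rw [sum_const, nsmul_eq_mul]
      rw [h1, h2]
      have hc' : (#(X \ (A i ∪ B i)) : ℚ) + (#(A i) + #(B i)) = N + 1 := by exact_mod_cast hc
      rw [← hc']
      ring
    rw [hswap, sum_congr rfl hinner, ← mul_sum] at hsum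
    have hNpos : (0 : ℚ) < (N + 1 : ℚ) := by positivity
    push_cast at hsum
    have h3 : (N + 1 : ℚ) * ∑ i ∈ I, (1 : ℚ) / ((#(A i) + #(B i)).choose (#(A i))) ≤ (N + 1 : ℚ) * 1 := by
      rw [mul_one]; exact hsum
    exact le_of_mul_le_mul_left h3 hNpos

theorem ekr_bollobas {n k : ℕ} (G : Finset (Finset (Fin n))) (H : Finset (Fin n) → Finset (Fin n))
    (hG : ∀ e ∈ G, #e = k) (hH : ∀ e ∈ G, #(H e) = k) (hd : ∀ e ∈ G, Disjoint e (H e))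
    (hne : ∀ e ∈ G, ∀ f ∈ G, e ≠ f → (e ∩ H f).Nonempty) : #G ≤ (2 * k).choose k := by
  have h := ekr_bollobas_weighted (univ : Finset (Fin n)) G (fun e => e) H
    (fun _ _ => subset_univ _) (fun _ _ => subset_univ _) hd hne
  rw [sum_congr rfl (g := fun _ => (1 : ℚ) / ((2 * k).choose k)) (fun e he => by
    rw [hG e he, hH e he, two_mul])] at h
  rw [sum_const, nsmul_eq_mul] at h
  have hp : (0 : ℚ) < ((2 * k).choose k : ℕ) := by
    exact_mod_cast Nat.choose_pos (by omega)
  rw [mul_one_div, div_le_one hp] at h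
  exact_mod_cast h

/-- `k`-sets meeting every member of `G`. -/
def ekrCross (n k : ℕ) (G : Finset (Finset (Fin n))) : Finset (Finset (Fin n)) :=
  ((univ : Finset (Fin n)).powersetCard k).filter (fun e => ∀ f ∈ G, (e ∩ f).Nonempty)

theorem ekr_code {n k : ℕ} (hk : 1 ≤ k) (hn : 2 * k ≤ n) (F : Finset (Finset (Fin n)))
    (hF : ∀ e ∈ F, ∀ f ∈ F, (e ∩ f).Nonempty) (hs : ∀ e ∈ F, #e = k) :
    ∃ c : Fin ((2 * k).choose k) → Finset (Fin n), (∀ i, #(c i) = k) ∧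
      F ⊆ ekrCross n k (univ.image c) ∧
      (∀ e ∈ ekrCross n k (univ.image c), ∀ f ∈ ekrCross n k (univ.image c), (e ∩ f).Nonempty) := by
  classical
  -- maximal intersecting family containing F
  set P : Finset (Finset (Finset (Fin n))) :=
    (((univ : Finset (Fin n)).powersetCard k).powerset).filter
      (fun M => F ⊆ M ∧ ∀ e ∈ M, ∀ f ∈ M, (e ∩ f).Nonempty) with hP
  have hPne : P.Nonempty := ⟨F, by
    rw [hP, mem_filter, mem_powerset]
    refine ⟨fun e he => ?_, Subset.refl _, hF⟩
    rw [mem_powersetCard]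
    exact ⟨subset_univ _, hs e he⟩⟩
  obtain ⟨M, hM, hmax⟩ := exists_max_image P card hPne
  rw [hP, mem_filter, mem_powerset] at hM
  obtain ⟨hMs, hFM, hMint⟩ := hM
  have hMk : ∀ e ∈ M, #e = k := fun e he => (mem_powersetCard.1 (hMs he)).2
  have hMcross : ekrCross n k M = M := by
    apply Subset.antisymm
    · intro e he
      rw [ekrCross, mem_filter] at he
      by_contra heM
      have h1 : insert e M ∈ P := by
        rw [hP, mem_filter, mem_powerset]
        refine ⟨insert_subset he.1 hMs, hFM.trans (subset_insert _ _), ?_⟩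
        intro a ha b hb
        rw [mem_insert] at ha hb
        rcases ha with rfl | ha <;> rcases hb with rfl | hb
        · rw [inter_self, ← card_pos, (mem_powersetCard.1 he.1).2]; omega
        · exact he.2 b hb
        · rw [inter_comm]; exact he.2 a ha
        · exact hMint a ha b hb
      have h2 := hmax _ h1
      rw [card_insert_of_notMem heM] at h2
      omega
    · intro e he
      rw [ekrCross, mem_filter]
      exact ⟨hMs he, fun f hf => hMint e he f hf⟩
  -- minimal generating subfamily
  set Q := M.powerset.filter (fun G => ekrCross n k G = M) with hQ
  obtain ⟨G, hG, hmin⟩ := exists_min_image Q card ⟨M, by simp [hQ, hMcross]⟩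
  rw [hQ, mem_filter, mem_powerset] at hG
  obtain ⟨hGM, hGc⟩ := hG
  have hH : ∀ e ∈ G, ∃ h : Finset (Fin n), #h = k ∧ Disjoint e h ∧
      ∀ f ∈ G, f ≠ e → (f ∩ h).Nonempty := by
    intro e he
    by_contra hcon
    push Not at hcon
    have h1 : ekrCross n k (G.erase e) = M := by
      rw [← hGc]
      apply Subset.antisymm
      · intro h hh
        rw [ekrCross, mem_filter] at hh ⊢
        refine ⟨hh.1, fun f hf => ?_⟩
        by_cases hfe : f = e
        · subst hfe
          by_contra hne
          have hdis : Disjoint f h := by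
            rw [disjoint_iff_inter_eq_empty, inter_comm]
            exact not_nonempty_iff_eq_empty.1 hne
          obtain ⟨g, hg, hgf, hge⟩ := hcon h (mem_powersetCard.1 hh.1).2 hdis
          have := hh.2 g (mem_erase.2 ⟨hgf, hg⟩)
          rw [inter_comm, hge] at this
          simp at this
        · exact hh.2 f (mem_erase.2 ⟨hfe, hf⟩)
      · intro h hh
        rw [ekrCross, mem_filter] at hh ⊢
        exact ⟨hh.1, fun f hf => hh.2 f (mem_of_mem_erase hf)⟩
    have h2 := hmin (G.erase e) (by
      rw [hQ, mem_filter, mem_powerset]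
      exact ⟨(erase_subset _ _).trans hGM, h1⟩)
    have h3 := card_erase_lt_of_mem he
    omega
  choose! H hH1 hH2 hH3 using hH
  have hcard : #G ≤ (2 * k).choose k :=
    ekr_bollobas G H (fun e he => hMk e (hGM he)) hH1 hH2
      (fun e he f hf hef => hH3 f hf e he hef)
  have hGne : G.Nonempty := by
    by_contra hemp
    rw [not_nonempty_iff_eq_empty] at hemp
    rw [hemp] at hGc
    obtain ⟨e, _, he⟩ := exists_subset_card_eq (s := (univ : Finset (Fin n))) (n := k)
      (by rw [card_univ, Fintype.card_fin]; omega)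
    obtain ⟨f, hf1, hf⟩ := exists_subset_card_eq (s := eᶜ) (n := k)
      (by rw [card_compl, Fintype.card_fin]; omega)
    have h1 : e ∈ M := by
      rw [← hGc, ekrCross, mem_filter, mem_powersetCard]
      exact ⟨⟨subset_univ _, he⟩, by simp⟩
    have h2 : f ∈ M := by
      rw [← hGc, ekrCross, mem_filter, mem_powersetCard]
      exact ⟨⟨subset_univ _, hf⟩, by simp⟩
    obtain ⟨z, hz⟩ := hMint e h1 f h2
    rw [mem_inter] at hz
    exact (mem_compl.1 (hf1 hz.2)) hz.1
  -- surjection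
  obtain ⟨g0, hg0⟩ := hGne
  let c : Fin ((2 * k).choose k) → Finset (Fin n) := fun i =>
    if h : (i : ℕ) < #G then (G.equivFin.symm ⟨i, h⟩ : Finset (Fin n)) else g0
  have hcG : ∀ i, c i ∈ G := by
    intro i
    simp only [c]
    split_ifs with h
    · exact (G.equivFin.symm ⟨i, h⟩).2
    · exact hg0
  have himg : univ.image c = G := by
    apply Subset.antisymm
    · intro e he
      rw [mem_image] at he
      obtain ⟨i, _, rfl⟩ := he
      exact hcG i
    · intro e he
      rw [mem_image]
      have hlt := (G.equivFin ⟨e, he⟩).2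
      refine ⟨⟨G.equivFin ⟨e, he⟩, by omega⟩, mem_univ _, ?_⟩
      simp only [c]
      rw [dif_pos hlt]
      simp
  refine ⟨c, fun i => hMk _ (hGM (hcG i)), ?_, ?_⟩
  · rw [himg, hGc]; exact hFM
  · rw [himg, hGc]; exact hMint



theorem ekr_prob_total {α : Type*} (ground : Finset α) (p : ℝ) :
    ∑ W ∈ ground.powerset, p ^ #W * (1 - p) ^ (#ground - #W) = 1 := by
  rw [sum_pow_mul_eq_add_pow]
  simp

/-- moment generating function bound -/
theorem ekr_mgf {α : Type*} [DecidableEq α] (ground X Y : Finset α) (hX : X ⊆ ground)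
    (hY : Y ⊆ ground) (hXY : Disjoint X Y) (p u : ℝ) (hp0 : 0 ≤ p) (hp1 : p ≤ 1) (hu : 0 < u) :
    ∑ W ∈ ground.powerset, (p ^ #W * (1 - p) ^ (#ground - #W)) * (u ^ #(W ∩ X) * (u⁻¹) ^ #(W ∩ Y))
      ≤ Real.exp (p * (#X * (u - 1) + #Y * (u⁻¹ - 1))) := by
  set g : α → ℝ := fun e => (if e ∈ X then u else 1) * (if e ∈ Y then u⁻¹ else 1) with hg
  have hgpos : ∀ e, 0 ≤ g e := by
    intro e
    simp only [hg]
    have : 0 < u⁻¹ := inv_pos.2 hu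
    split_ifs <;> positivity
  have h1 : ∏ e ∈ ground, (p * g e + (1 - p)) =
      ∑ W ∈ ground.powerset, (p ^ #W * (1 - p) ^ (#ground - #W)) *
        (u ^ #(W ∩ X) * (u⁻¹) ^ #(W ∩ Y)) := by
    rw [prod_add]
    apply sum_congr rfl
    intro W hW
    rw [mem_powerset] at hW
    rw [prod_mul_distrib, prod_const, prod_const, card_sdiff_of_subset hW]
    have : ∏ e ∈ W, g e = u ^ #(W ∩ X) * (u⁻¹) ^ #(W ∩ Y) := by
      simp only [hg]
      rw [prod_mul_distrib, prod_ite_mem, prod_ite_mem, prod_const, prod_const]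
    rw [this]
    ring
  rw [← h1]
  have h2 : ∏ e ∈ ground, (p * g e + (1 - p)) ≤ ∏ e ∈ ground, Real.exp (p * (g e - 1)) := by
    apply prod_le_prod
    · intro e _
      have := mul_nonneg hp0 (hgpos e)
      linarith
    · intro e _
      have := Real.add_one_le_exp (p * (g e - 1))
      linarith
  refine h2.trans ?_
  rw [← Real.exp_sum, ← mul_sum]
  apply le_of_eq
  congr 2
  have h3 : ∀ e ∈ ground, g e - 1 = (if e ∈ X then u - 1 else 0) + (if e ∈ Y then u⁻¹ - 1 else 0) := by
    intro e _
    have : e ∈ X → e ∉ Y := fun h1 => disjoint_left.1 hXY h1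
    simp only [hg]
    by_cases h : e ∈ X <;> by_cases h' : e ∈ Y <;> simp [h, h'] <;> tauto
  rw [sum_congr rfl h3, sum_add_distrib, sum_ite_mem, sum_ite_mem, sum_const, sum_const,
    nsmul_eq_mul, nsmul_eq_mul, inter_eq_right.2 hX, inter_eq_right.2 hY]

open Classical in
/-- Chernoff-type comparison -/
theorem ekr_chernoff {α : Type*} [DecidableEq α] (ground F S : Finset α) (hF : F ⊆ ground)
    (hS : S ⊆ ground) (p : ℝ) (hp0 : 0 ≤ p) (hp1 : p ≤ 1) (d : ℝ) (hd : 0 ≤ d)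
    (hFS : (#F : ℝ) + d ≤ #S) (hSpos : 0 < #S) :
    ∑ W ∈ ground.powerset, (if #(W ∩ S) ≤ #(W ∩ F) then
      p ^ #W * (1 - p) ^ (#ground - #W) else 0) ≤ Real.exp (- (p * d ^ 2 / (4 * #S))) := by
  have hN : (0 : ℝ) < #S := by exact_mod_cast hSpos
  set u : ℝ := 1 + d / (2 * #S) with hu
  have hδ : 0 ≤ d / (2 * (#S : ℝ)) := by positivity
  have hu1 : 1 ≤ u := by linarith
  have hu0 : 0 < u := by linarith
  have hdis : Disjoint (F \ S) (S \ F) := disjoint_sdiff_sdiff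
  have hm := ekr_mgf ground (F \ S) (S \ F) (sdiff_subset.trans hF) (sdiff_subset.trans hS) hdis
    p u hp0 hp1 hu0
  refine le_trans ?_ (hm.trans ?_)
  · apply sum_le_sum
    intro W _
    have hw : 0 ≤ p ^ #W * (1 - p) ^ (#ground - #W) :=
      mul_nonneg (pow_nonneg hp0 _) (pow_nonneg (by linarith) _)
    have hpos : 0 ≤ u ^ #(W ∩ (F \ S)) * (u⁻¹) ^ #(W ∩ (S \ F)) := by positivity
    split_ifs with h
    · have h1 : #(W ∩ (S \ F)) ≤ #(W ∩ (F \ S)) := by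
        have a1 : #(W ∩ S) = #(W ∩ (S \ F)) + #(W ∩ (S ∩ F)) := by
          rw [← card_union_of_disjoint]
          · congr 1; ext z; simp only [mem_inter, mem_union, mem_sdiff]; tauto
          · rw [disjoint_left]; intro z; simp only [mem_inter, mem_sdiff]; tauto
        have a2 : #(W ∩ F) = #(W ∩ (F \ S)) + #(W ∩ (S ∩ F)) := by
          rw [← card_union_of_disjoint]
          · congr 1; ext z; simp only [mem_inter, mem_union, mem_sdiff]; tauto
          · rw [disjoint_left]; intro z; simp only [mem_inter, mem_sdiff]; tauto
        omega
      have h2 : 1 ≤ u ^ #(W ∩ (F \ S)) * (u⁻¹) ^ #(W ∩ (S \ F)) := by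
        rw [inv_pow, ← div_eq_mul_inv, one_le_div (by positivity)]
        exact pow_le_pow_right₀ hu1 h1
      exact le_mul_of_one_le_right hw h2
    · exact mul_nonneg hw hpos
  · apply Real.exp_le_exp.2
    have c1 : (#(F \ S) : ℝ) + #(F ∩ S) = #F := by exact_mod_cast card_sdiff_add_card_inter F S
    have c2 : (#(S \ F) : ℝ) + #(F ∩ S) = #S := by
      rw [inter_comm]; exact_mod_cast card_sdiff_add_card_inter S F
    have c3 : (0 : ℝ) ≤ #(F ∩ S) := by positivity
    have c4 : (0 : ℝ) ≤ #(F \ S) := by positivity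
    generalize (#(F \ S) : ℝ) = m at *
    generalize (#(S \ F) : ℝ) = M at *
    generalize (#(F ∩ S) : ℝ) = r at *
    have hMm : m + d ≤ M := by linarith
    have hMN : M ≤ #S := by linarith
    generalize (#S : ℝ) = N at *
    have key : m * (u - 1) + M * (u⁻¹ - 1) ≤ - (d ^ 2 / (4 * N)) := by
      have hδe : d = 2 * N * (u - 1) := by rw [hu]; field_simp; ring
      have hδ0 : 0 ≤ u - 1 := by linarith
      generalize hδδ : u - 1 = δ at *
      have hue : u = 1 + δ := by linarith
      have hd1 : (0 : ℝ) < 1 + δ := by linarith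
      rw [hue]
      have e1 : (1 + δ)⁻¹ - 1 = - (δ / (1 + δ)) := by field_simp; ring
      have e2 : d ^ 2 / (4 * N) = N * δ ^ 2 := by rw [hδe]; field_simp; ring
      rw [e1, e2]
      have e3 : m * δ + M * -(δ / (1 + δ)) = (m * δ * (1 + δ) - M * δ) / (1 + δ) := by
        field_simp; ring
      rw [e3, div_le_iff₀ hd1]
      have hm2 : m ≤ N - d := by linarith
      have h5 : m * δ ≤ (N - d) * δ := mul_le_mul_of_nonneg_right hm2 hδ0
      have h6 : δ * (m * δ + m - M) ≤ δ * ((N - d) * δ - d) :=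
        mul_le_mul_of_nonneg_left (by linarith) hδ0
      have h7 : 0 ≤ N * δ ^ 3 := by positivity
      rw [hδe] at h6
      nlinarith
    have := mul_le_mul_of_nonneg_left key hp0
    calc p * (m * (u - 1) + M * (u⁻¹ - 1)) ≤ p * -(d ^ 2 / (4 * N)) := this
      _ = _ := by ring

open Classical in
theorem ekr_union {α ι : Type*} (ground : Finset α) (p : ℝ) (hp0 : 0 ≤ p) (hp1 : p ≤ 1)
    (P : Finset α → Prop) (C : Finset ι) (Q : ι → Finset α → Prop) (β : ℝ)
    (hcov : ∀ W ⊆ ground, ¬ P W → ∃ c ∈ C, Q c W)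
    (hQ : ∀ c ∈ C, ∑ W ∈ ground.powerset, (if Q c W then
      p ^ #W * (1 - p) ^ (#ground - #W) else 0) ≤ β) :
    1 - #C * β ≤ randomSubsetProb ground p P := by
  have h1 : randomSubsetProb ground p P + ∑ W ∈ ground.powerset, (if ¬ P W then
      p ^ #W * (1 - p) ^ (#ground - #W) else 0) = 1 := by
    refine Eq.trans ?_ (ekr_prob_total ground p)
    rw [randomSubsetProb, ← sum_add_distrib]
    apply sum_congr rfl
    intro W _
    by_cases h : P W <;> simp [h]
  have h2 : ∑ W ∈ ground.powerset, (if ¬ P W then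
      p ^ #W * (1 - p) ^ (#ground - #W) else 0) ≤ ∑ W ∈ ground.powerset, ∑ c ∈ C, (if Q c W then
      p ^ #W * (1 - p) ^ (#ground - #W) else 0) := by
    apply sum_le_sum
    intro W hW
    have hw : 0 ≤ p ^ #W * (1 - p) ^ (#ground - #W) :=
      mul_nonneg (pow_nonneg hp0 _) (pow_nonneg (by linarith) _)
    have hnn : ∀ c ∈ C, 0 ≤ (if Q c W then p ^ #W * (1 - p) ^ (#ground - #W) else 0) := by
      intro c _
      split_ifs
      · exact hw
      · exact le_rfl
    by_cases h : P W
    · rw [if_neg (not_not.2 h)]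
      exact sum_nonneg hnn
    · rw [if_pos h]
      obtain ⟨c, hc, hq⟩ := hcov W (mem_powerset.1 hW) h
      have := single_le_sum hnn hc
      rwa [if_pos hq] at this
  rw [sum_comm] at h2
  have h3 := sum_le_sum hQ
  rw [sum_const, nsmul_eq_mul] at h3
  linarith



theorem ekr_star_card {n k : ℕ} (hk : 1 ≤ k) (hn : 1 ≤ n) (v : Fin n) :
    #(((univ : Finset (Fin n)).powersetCard k).filter (fun e => v ∈ e)) =
      (n - 1).choose (k - 1) := by
  have h1 := card_filter_add_card_filter_not (s := (univ : Finset (Fin n)).powersetCard k)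
    (fun e => v ∈ e)
  have h2 : ((univ : Finset (Fin n)).powersetCard k).filter (fun e => ¬ v ∈ e) =
      ((univ : Finset (Fin n)).erase v).powersetCard k := by
    ext e
    simp only [mem_filter, mem_powersetCard, subset_erase]
    tauto
  rw [h2, card_powersetCard, card_powersetCard, card_erase_of_mem (mem_univ v), card_univ,
    Fintype.card_fin] at h1
  obtain ⟨m, rfl⟩ : ∃ m, n = m + 1 := ⟨n - 1, by omega⟩
  obtain ⟨l, rfl⟩ : ∃ l, k = l + 1 := ⟨k - 1, by omega⟩
  rw [Nat.choose_succ_succ] at h1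
  simp only [Nat.add_sub_cancel] at h1 ⊢
  have : m.choose l.succ = m.choose (l + 1) := rfl
  omega

theorem ekr_main_prob {n k : ℕ} (hk : 3 ≤ k) (hn : 4 * k ≤ n) (hn2 : 100 ≤ n) (p : ℝ)
    (hp0 : 0 ≤ p) (hp1 : p ≤ 1) :
    1 - ((n.choose k : ℝ) ^ ((2 * k).choose k)) *
        Real.exp (- (p * (5 / 9 * ((n - k - 1).choose (k - 1) : ℝ)) ^ 2 /
          (4 * ((n - 1).choose (k - 1) : ℝ)))) ≤
      randomSubsetProb
        ((Finset.univ : Finset (Fin n)).powersetCard k) p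
        (fun W => ∀ F ⊆ W, IsIntersectingHyp n F →
          (∀ G ⊆ W, IsIntersectingHyp n G → G.card ≤ F.card) →
          IsTrivialIntHyp n F) := by
  classical
  set ground := (Finset.univ : Finset (Fin n)).powersetCard k with hground
  let v : Fin n := ⟨0, by omega⟩
  set S := ground.filter (fun e => v ∈ e) with hS
  have hScard : #S = (n - 1).choose (k - 1) := ekr_star_card (by omega) (by omega) v
  let C : Finset (Fin ((2 * k).choose k) → Finset (Fin n)) := Fintype.piFinset (fun _ => ground)
  have hC : #C = (n.choose k) ^ ((2 * k).choose k) := by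
    simp [C, hground, Fintype.card_piFinset]
  let Fm : (Fin ((2 * k).choose k) → Finset (Fin n)) → Finset (Finset (Fin n)) :=
    fun c => ekrCross n k (univ.image c)
  have hFg : ∀ c, Fm c ⊆ ground := fun c => filter_subset _ _
  let Q : (Fin ((2 * k).choose k) → Finset (Fin n)) → Finset (Finset (Fin n)) → Prop :=
    fun c W => ((∀ e ∈ Fm c, ∀ f ∈ Fm c, (e ∩ f).Nonempty) ∧ ∀ v, ∃ e ∈ Fm c, v ∉ e) ∧
      #(W ∩ S) ≤ #(W ∩ Fm c)
  have hu := ekr_union ground p hp0 hp1 (fun W => ∀ F ⊆ W, IsIntersectingHyp n F →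
          (∀ G ⊆ W, IsIntersectingHyp n G → G.card ≤ F.card) →
          IsTrivialIntHyp n F) C Q (Real.exp (- (p * (5 / 9 * ((n - k - 1).choose (k - 1) : ℝ)) ^ 2 /
          (4 * ((n - 1).choose (k - 1) : ℝ))))) ?_ ?_
  · rw [hC] at hu
    push_cast at hu
    exact hu
  · intro W hW hbad
    push Not at hbad
    obtain ⟨F, hFW, hFint, hFmax, hFnt⟩ := hbad
    have hFk : ∀ e ∈ F, #e = k := fun e he => (mem_powersetCard.1 (hW (hFW he))).2
    obtain ⟨c, hck, hcF, hcint⟩ := ekr_code (by omega) (by omega) F hFint hFk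
    refine ⟨c, ?_, ⟨hcint, ?_⟩, ?_⟩
    · simp only [C, Fintype.mem_piFinset]
      intro i
      exact mem_powersetCard.2 ⟨subset_univ _, hck i⟩
    · intro w
      by_contra hcon
      push Not at hcon
      exact hFnt ⟨w, fun e he => hcon e (hcF he)⟩
    · refine (hFmax (W ∩ S) inter_subset_left ?_).trans (card_le_card (subset_inter hFW hcF))
      intro e he f hf
      exact ⟨v, mem_inter.2 ⟨(mem_filter.1 (mem_inter.1 he).2).2,
        (mem_filter.1 (mem_inter.1 hf).2).2⟩⟩
  · intro c _
    by_cases hc : (∀ e ∈ Fm c, ∀ f ∈ Fm c, (e ∩ f).Nonempty) ∧ ∀ v, ∃ e ∈ Fm c, v ∉ e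
    · have hw := ekr_weak_hm hk hn hn2 (Fm c) hc.1
        (fun e he => (mem_powersetCard.1 (hFg c he)).2) hc.2
      have hSpos : 0 < #S := by
        rw [hScard]; exact Nat.choose_pos (by omega)
      have hw' : 9 * (#(Fm c) : ℝ) + 5 * ((n - k - 1).choose (k - 1) : ℝ) ≤
          9 * ((n - 1).choose (k - 1) : ℝ) := by exact_mod_cast hw
      have := ekr_chernoff ground (Fm c) S (hFg c) (filter_subset _ _) p hp0 hp1
        (5 / 9 * ((n - k - 1).choose (k - 1) : ℝ)) (by positivity)
        (by rw [hScard]; linarith) hSpos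
      rw [hScard] at this
      refine le_trans (le_of_eq ?_) this
      apply sum_congr rfl
      intro W _
      have hq : Q c W ↔ #(W ∩ S) ≤ #(W ∩ Fm c) := ⟨fun h => h.2, fun h => ⟨hc, h⟩⟩
      by_cases hle : #(W ∩ S) ≤ #(W ∩ Fm c)
      · rw [if_pos (hq.2 hle), if_pos hle]
      · rw [if_neg (fun h => hle (hq.1 h)), if_neg hle]
    · refine le_trans (le_of_eq (sum_eq_zero ?_)) (Real.exp_pos _).le
      intro W _
      exact if_neg (fun h => hc h.1)

/-- analytic estimate -/
theorem ekr_final_calc {n k : ℕ} (hk : 3 ≤ k) (hn : 4 * k ≤ n) (p : ℝ)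
    (hp : 9 * (n : ℝ) * Real.logb 2 ((n : ℝ) * Real.exp 1 / (k : ℝ)) *
          ((2 * k).choose k : ℝ) * (n.choose k : ℝ) / ((n - k).choose k : ℝ) ^ 2 ≤ p) :
    0 ≤ p ∧ ((n.choose k : ℝ) ^ ((2 * k).choose k)) *
        Real.exp (- (p * (5 / 9 * ((n - k - 1).choose (k - 1) : ℝ)) ^ 2 /
          (4 * ((n - 1).choose (k - 1) : ℝ)))) ≤ Real.exp (- (Real.log n / 1000)) := by
  have hkR : (0 : ℝ) < k := by exact_mod_cast (by omega : 0 < k)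
  have hnR : (0 : ℝ) < n := by exact_mod_cast (by omega : 0 < n)
  have hkn : (k : ℝ) < n := by exact_mod_cast (by omega : k < n)
  have hk3 : (3 : ℝ) ≤ k := by exact_mod_cast hk
  set L := Real.log ((n : ℝ) * Real.exp 1 / (k : ℝ)) with hL
  have hLe : L = Real.log n + 1 - Real.log k := by
    rw [hL, Real.log_div (by positivity) (by positivity),
      Real.log_mul (by positivity) (by positivity), Real.log_exp]
  have hlogkn : Real.log k ≤ Real.log n := Real.log_le_log hkR hkn.le
  have hL1 : 1 ≤ L := by linarith
  have hlogk : Real.log k ≤ k - 1 := Real.log_le_sub_one_of_pos hkR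
  have hkL : Real.log n ≤ k * L := by
    rw [hLe]
    nlinarith
  have hlogn : 0 ≤ Real.log n := Real.log_nonneg (by linarith)
  have hl2 : 0 < Real.log 2 := Real.log_pos (by norm_num)
  have hl2' := Real.log_two_lt_d9
  have hM : (n.choose k : ℝ) ≤ Real.exp (k * L) := by
    have h1 : (n.choose k : ℝ) ≤ (n : ℝ) ^ k / (k.factorial : ℝ) := Nat.choose_le_pow_div k n
    have h2 := Real.pow_div_factorial_le_exp (k : ℝ) hkR.le k
    have h3 : Real.exp (k * L) = ((n : ℝ) / k) ^ k * Real.exp k := by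
      rw [Real.exp_nat_mul, hL, Real.exp_log (by positivity), ← Real.exp_one_rpow (k : ℝ),
        Real.rpow_natCast, ← mul_pow]
      congr 1
      ring
    rw [h3]
    calc (n.choose k : ℝ) ≤ (n : ℝ) ^ k / (k.factorial : ℝ) := h1
      _ = ((n : ℝ) / k) ^ k * ((k : ℝ) ^ k / (k.factorial : ℝ)) := by
        rw [div_pow]; field_simp
      _ ≤ _ := by gcongr
  have hMpos : (0 : ℝ) < n.choose k := by exact_mod_cast Nat.choose_pos (by omega)
  have hQpos : (0 : ℝ) < (n - k).choose k := by exact_mod_cast Nat.choose_pos (by omega)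
  have hSpos : (0 : ℝ) < (n - 1).choose (k - 1) := by exact_mod_cast Nat.choose_pos (by omega)
  have hb1 : (1 : ℝ) ≤ (2 * k).choose k := by
    exact_mod_cast Nat.succ_le_of_lt (Nat.choose_pos (by omega))
  have hS : (n : ℝ) * (n - 1).choose (k - 1) = k * n.choose k := by
    have := Nat.add_one_mul_choose_eq (n - 1) (k - 1)
    rw [show n - 1 + 1 = n by omega, show k - 1 + 1 = k by omega] at this
    have h2 : (n : ℝ) * (n - 1).choose (k - 1) = n.choose k * k := by exact_mod_cast this
    linarith
  have hD : ((n : ℝ) - k) * (n - k - 1).choose (k - 1) = k * (n - k).choose k := by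
    have := Nat.add_one_mul_choose_eq (n - k - 1) (k - 1)
    rw [show n - k - 1 + 1 = n - k by omega, show k - 1 + 1 = k by omega] at this
    have h2 : ((n - k : ℕ) : ℝ) * (n - k - 1).choose (k - 1) = (n - k).choose k * k := by
      exact_mod_cast this
    rw [Nat.cast_sub (by omega)] at h2
    linarith
  rw [Real.logb, ← hL] at hp
  set b : ℕ := (2 * k).choose k with hb
  generalize hMM : (n.choose k : ℝ) = M at *
  generalize ((n - k).choose k : ℝ) = q at *
  generalize ((n - 1).choose (k - 1) : ℝ) = s at *
  generalize ((n - k - 1).choose (k - 1) : ℝ) = D at *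
  have hp0 : 0 ≤ p := le_trans (by positivity) hp
  refine ⟨hp0, ?_⟩
  have hMb : M ^ b ≤ Real.exp (b * (k * L)) := by
    rw [Real.exp_nat_mul]
    gcongr
  -- exponent bound
  have hDge : k * q ≤ n * D := by
    have hD0 : 0 ≤ D := by
      by_contra hneg
      push Not at hneg
      have : ((n : ℝ) - k) * D < 0 := mul_neg_of_pos_of_neg (by linarith) hneg
      have : 0 < k * q := by positivity
      linarith
    nlinarith
  have hs' : s = k * M / n := by field_simp; linarith
  have hD2 : (k * q / n) ^ 2 ≤ D ^ 2 := by
    have : k * q / n ≤ D := by rw [div_le_iff₀ hnR]; linarith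
    gcongr
  have hexp : 25 / 36 / Real.log 2 * (b * (k * L)) ≤ p * (5 / 9 * D) ^ 2 / (4 * s) := by
    calc 25 / 36 / Real.log 2 * (b * (k * L)) =
        (9 * n * (L / Real.log 2) * b * M / q ^ 2) * (25 / 81 * (k * q / n) ^ 2) / (4 * s) := by
          rw [hs']; field_simp; ring
      _ ≤ p * (25 / 81 * D ^ 2) / (4 * s) := by gcongr
      _ = _ := by ring
  have h1001 : 1001 / 1000 ≤ 25 / 36 / Real.log 2 := by
    rw [le_div_iff₀ hl2]; linarith
  have hX : Real.log n ≤ b * (k * L) := by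
    have : 1 * (k * L) ≤ b * (k * L) := by gcongr
    linarith
  have hX2 : 1001 / 1000 * (b * (k * L)) ≤ 25 / 36 / Real.log 2 * (b * (k * L)) :=
    mul_le_mul_of_nonneg_right h1001 (by linarith)
  calc M ^ b * Real.exp (- (p * (5 / 9 * D) ^ 2 / (4 * s)))
      ≤ Real.exp (b * (k * L)) * Real.exp (- (p * (5 / 9 * D) ^ 2 / (4 * s))) := by gcongr
    _ = Real.exp (b * (k * L) + - (p * (5 / 9 * D) ^ 2 / (4 * s))) := by rw [Real.exp_add]
    _ ≤ _ := by
      apply Real.exp_le_exp.2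
      linarith

theorem ekr_final (ε : ℝ) (hε : 0 < ε) :
    ∃ n₀ : ℕ, ∀ n : ℕ, n₀ ≤ n → ∀ k : ℕ, 3 ≤ k → 4 * k ≤ n → ∀ p : ℝ,
      9 * (n : ℝ) * Real.logb 2 ((n : ℝ) * Real.exp 1 / (k : ℝ)) *
          ((2 * k).choose k : ℝ) * (n.choose k : ℝ) / ((n - k).choose k : ℝ) ^ 2 ≤ p →
      p ≤ 1 →
      1 - ε ≤ randomSubsetProb
        ((Finset.univ : Finset (Fin n)).powersetCard k) p
        (fun W => ∀ F ⊆ W, IsIntersectingHyp n F →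
          (∀ G ⊆ W, IsIntersectingHyp n G → G.card ≤ F.card) →
          IsTrivialIntHyp n F) := by
  obtain ⟨m, hm⟩ := exists_nat_gt (Real.exp (-(1000 * Real.log ε)))
  refine ⟨max 100 m, ?_⟩
  intro n hn k hk hkn p hp hp1
  have hn1 : 100 ≤ n := (le_max_left _ _).trans hn
  have hn2 : (m : ℝ) ≤ n := by exact_mod_cast (le_max_right _ _).trans hn
  obtain ⟨hp0, hc⟩ := ekr_final_calc hk hkn p hp
  have h := ekr_main_prob hk hkn hn1 p hp0 hp1
  have hle : Real.exp (- (Real.log n / 1000)) ≤ ε := by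
    rw [← Real.le_log_iff_exp_le hε]
    have : -(1000 * Real.log ε) ≤ Real.log n := by
      rw [Real.le_log_iff_exp_le (by exact_mod_cast (by omega : 0 < n))]
      linarith
    linarith
  linarith

end EKRHelpers

theorem sparse_Erdos_Ko_Rado (ε : ℝ) (hε : 0 < ε) :
    ∃ n₀ : ℕ, ∀ n : ℕ, n₀ ≤ n → ∀ k : ℕ, 3 ≤ k → 4 * k ≤ n → ∀ p : ℝ,
      9 * (n : ℝ) * Real.logb 2 ((n : ℝ) * Real.exp 1 / (k : ℝ)) *
          ((2 * k).choose k : ℝ) * (n.choose k : ℝ) / ((n - k).choose k : ℝ) ^ 2 ≤ p →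
      p ≤ 1 →
      1 - ε ≤ randomSubsetProb
        ((Finset.univ : Finset (Fin n)).powersetCard k) p
        (fun W => ∀ F ⊆ W, IsIntersectingHyp n F →
          (∀ G ⊆ W, IsIntersectingHyp n G → G.card ≤ F.card) →
          IsTrivialIntHyp n F) := by
  exact ekr_final ε hε
end

section
/- For every ε > 0 there exists n₀ such that for all n ≥ n₀, every prime power q and every integer k ≥ 2 satisfying either (q = 2 and n ≥ 2k+2) or (q ≥ 3 and n ≥ 2k+1): the number of non-trivial intersecting families of k-dimensional subspaces of 𝔽_q^n is at most ε·[n choose 1]_q·2^{[n−1 choose k−1]_q}, and the total number of intersecting families of k-dimensional subspaces of 𝔽_q^n lies between (1−ε)·[n choose 1]_q·2^{[n−1 choose k−1]_q} and (1+ε)·[n choose 1]_q·2^{[n−1 choose k−1]_q}. -/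
/-- The Gaussian binomial coefficient `[n choose k]_q`, via its product formula. -/
noncomputable def gaussBinom (q n k : ℕ) : ℝ :=
  ∏ i ∈ Finset.range k, (((q : ℝ) ^ (n - i) - 1) / ((q : ℝ) ^ (k - i) - 1))

/-- A family of subspaces is intersecting if any two of its members meet in a
subspace of dimension at least 1. -/
def IsIntersectingFam {K : Type*} [Field K] {n : ℕ}
    (𝓕 : Finset (Submodule K (Fin n → K))) : Prop :=
  ∀ U ∈ 𝓕, ∀ V ∈ 𝓕, 1 ≤ Module.finrank K ↥(U ⊓ V)

/-- An intersecting family of subspaces is trivial if some fixed 1-dimensional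
subspace is contained in every member. -/
def IsTrivialFam {K : Type*} [Field K] {n : ℕ}
    (𝓕 : Finset (Submodule K (Fin n → K))) : Prop :=
  ∃ L : Submodule K (Fin n → K), Module.finrank K L = 1 ∧ ∀ U ∈ 𝓕, L ≤ U


section Counting

variable {K : Type*} [Field K] [Fintype K]

/-- Linearly independent tuples spanning a given subspace. -/
noncomputable def fiberEquivAux {V : Type*} [AddCommGroup V] [Module K V] [Finite V] (k : ℕ)
    (U : {U : Submodule K V // Module.finrank K U = k}) :
    {s : {s : Fin k → V // LinearIndependent K s} //
      (⟨Submodule.span K (Set.range s.1), by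
        rw [finrank_span_eq_card s.2, Fintype.card_fin]⟩ :
        {U : Submodule K V // Module.finrank K U = k}) = U} ≃
    {t : Fin k → U.1 // LinearIndependent K t} where
  toFun s := ⟨fun i => ⟨s.1.1 i, by
      have h := congrArg Subtype.val s.2
      simp only at h
      rw [← h]
      exact Submodule.subset_span ⟨i, rfl⟩⟩, by
      apply LinearIndependent.of_comp U.1.subtype
      exact s.1.2⟩
  invFun t := ⟨⟨fun i => (t.1 i : V), t.2.map' U.1.subtype (Submodule.ker_subtype _)⟩, by
      apply Subtype.ext
      simp only
      have h1 : Submodule.span K (Set.range t.1) = ⊤ := by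
        apply t.2.span_eq_top_of_card_eq_finrank'
        rw [Fintype.card_fin, U.2]
      have h2 : Set.range (fun i => (t.1 i : V)) = Set.image U.1.subtype (Set.range t.1) := by
        rw [← Set.range_comp]; rfl
      rw [h2, ← Submodule.map_span, h1, Submodule.map_top, Submodule.range_subtype]⟩
  left_inv s := by
    apply Subtype.ext; apply Subtype.ext; rfl
  right_inv t := by
    apply Subtype.ext; rfl

theorem card_subspaces_mul {V : Type*} [AddCommGroup V] [Module K V] [Finite V] (k : ℕ)
    (hk : k ≤ Module.finrank K V) :
    Nat.card {U : Submodule K V // Module.finrank K U = k} *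
      ∏ i : Fin k, (Fintype.card K ^ k - Fintype.card K ^ i.val) =
      ∏ i : Fin k, (Fintype.card K ^ Module.finrank K V - Fintype.card K ^ i.val) := by
  classical
  rw [← card_linearIndependent hk]
  have e := (Equiv.sigmaFiberEquiv (fun s : {s : Fin k → V // LinearIndependent K s} =>
    (⟨Submodule.span K (Set.range s.1), by
        rw [finrank_span_eq_card s.2, Fintype.card_fin]⟩ :
        {U : Submodule K V // Module.finrank K U = k}))).symm.trans
      (Equiv.sigmaCongrRight (fun U => fiberEquivAux k U))
  have : Finite (Submodule K V) := Finite.of_injective (fun U => (U : Set V)) SetLike.coe_injective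
  have : Fintype {U : Submodule K V // Module.finrank K U = k} := Fintype.ofFinite _
  rw [Nat.card_congr e, Nat.card_sigma]
  rw [Finset.sum_congr rfl (g := fun _ => ∏ i : Fin k, (Fintype.card K ^ k - Fintype.card K ^ i.val))]
  · rw [Finset.sum_const, smul_eq_mul, Finset.card_univ, Nat.card_eq_fintype_card]
  · intro U _
    rw [card_linearIndependent (by rw [U.2]), U.2]

theorem one_lt_card_field : 1 < Fintype.card K := Fintype.one_lt_card

theorem card_subspaces {V : Type*} [AddCommGroup V] [Module K V] [Finite V] (k : ℕ)
    (hk : k ≤ Module.finrank K V) :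
    (Nat.card {U : Submodule K V // Module.finrank K U = k} : ℝ) =
      gaussBinom (Fintype.card K) (Module.finrank K V) k := by
  have h := card_subspaces_mul (K := K) (V := V) k hk
  set q := Fintype.card K with hq
  have hq1 : 1 < q := Fintype.one_lt_card
  have hq1' : (1 : ℝ) < q := by exact_mod_cast hq1
  set n := Module.finrank K V
  have key : ∀ m : ℕ, k ≤ m → ((∏ i : Fin k, (q ^ m - q ^ i.val) : ℕ) : ℝ) =
      (∏ i ∈ Finset.range k, (q : ℝ) ^ i) * ∏ i ∈ Finset.range k, ((q : ℝ) ^ (m - i) - 1) := by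
    intro m hm
    rw [Fin.prod_univ_eq_prod_range (fun i => q ^ m - q ^ i) k, Nat.cast_prod,
      ← Finset.prod_mul_distrib]
    apply Finset.prod_congr rfl
    intro i hi
    have hi' : i < k := Finset.mem_range.1 hi
    rw [Nat.cast_sub (Nat.pow_le_pow_right hq1.le (by omega))]
    push_cast
    rw [mul_sub, ← pow_add, mul_one]
    congr 2; omega
  have hR := congrArg (Nat.cast (R := ℝ)) h
  rw [Nat.cast_mul, key k le_rfl, key n hk] at hR
  have hP : (∏ i ∈ Finset.range k, (q : ℝ) ^ i) ≠ 0 :=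
    Finset.prod_ne_zero_iff.2 (fun i _ => by positivity)
  have hD : (∏ i ∈ Finset.range k, ((q : ℝ) ^ (k - i) - 1)) ≠ 0 := by
    apply Finset.prod_ne_zero_iff.2
    intro i hi
    have hi' : i < k := Finset.mem_range.1 hi
    have := one_lt_pow₀ hq1' (n := k - i) (by omega)
    linarith
  unfold gaussBinom
  rw [Finset.prod_div_distrib, eq_div_iff hD]
  apply mul_left_cancel₀ hP
  rw [← hR]; ring

theorem card_subspaces_ge {V : Type*} [AddCommGroup V] [Module K V] [Finite V] (S : Submodule K V)
    (s k : ℕ) (hs : Module.finrank K S = s) (hsk : s ≤ k) (hk : k ≤ Module.finrank K V) :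
    (Nat.card {U : Submodule K V // Module.finrank K U = k ∧ S ≤ U} : ℝ) =
      gaussBinom (Fintype.card K) (Module.finrank K V - s) (k - s) := by
  have hq : Module.finrank K (V ⧸ S) = Module.finrank K V - s := by
    have := Submodule.finrank_quotient_add_finrank S
    omega
  have : Finite (V ⧸ S) := Finite.of_surjective _ (Submodule.mkQ_surjective S)
  rw [← hq, ← card_subspaces (K := K) (V := V ⧸ S) (k - s) (by omega)]
  have hdim : ∀ W : Submodule K (V ⧸ S),
      Module.finrank K (W.comap S.mkQ) = Module.finrank K W + s := by
    intro W
    have hle : S ≤ W.comap S.mkQ := Submodule.le_comap_mkQ S W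
    have h1 := (S.mkQ.domRestrict (W.comap S.mkQ)).finrank_range_add_finrank_ker
    rw [LinearMap.range_domRestrict, Submodule.map_comap_eq_of_surjective (Submodule.mkQ_surjective S),
      LinearMap.ker_domRestrict, Submodule.ker_mkQ] at h1
    rw [← h1, ← hs]
    congr 1
    exact (Submodule.submoduleOfEquivOfLe hle).finrank_eq
  congr 1
  refine (Nat.card_congr ?_).symm
  refine ((Submodule.comapMkQRelIso S).toEquiv.subtypeEquiv (q := fun U => Module.finrank K U.1 = k) ?_).trans ?_
  · intro W
    have : ((Submodule.comapMkQRelIso S).toEquiv W).1 = W.comap S.mkQ := rfl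
    rw [this, hdim]; omega
  · refine (Equiv.subtypeSubtypeEquivSubtypeInter (fun U => S ≤ U) (fun U : Submodule K V => Module.finrank K U = k)).trans ?_
    exact Equiv.subtypeEquivRight (fun U => and_comm)

theorem card_subspaces_le {V : Type*} [AddCommGroup V] [Module K V] [Finite V] (S : Submodule K V)
    (s k : ℕ) (hs : Module.finrank K S = s) (hk : k ≤ s) :
    (Nat.card {U : Submodule K V // Module.finrank K U = k ∧ U ≤ S} : ℝ) =
      gaussBinom (Fintype.card K) s k := by
  subst hs
  rw [← card_subspaces (K := K) (V := S) k hk]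
  congr 1
  refine (Nat.card_congr ?_).symm
  refine ((Submodule.MapSubtype.orderIso S).toEquiv.subtypeEquiv (q := fun U => Module.finrank K U.1 = k) ?_).trans ?_
  · intro W
    have : ((Submodule.MapSubtype.orderIso S).toEquiv W).1 = W.map S.subtype := rfl
    rw [this, Submodule.finrank_map_subtype_eq]
  · refine (Equiv.subtypeSubtypeEquivSubtypeInter (fun U => U ≤ S) (fun U : Submodule K V => Module.finrank K U = k)).trans ?_
    exact Equiv.subtypeEquivRight (fun U => and_comm)

end Counting

section Arith

theorem gaussBinom_succ (q n k : ℕ) :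
    gaussBinom q (n + 1) (k + 1) =
      gaussBinom q n k * (((q : ℝ) ^ (n + 1) - 1) / ((q : ℝ) ^ (k + 1) - 1)) := by
  unfold gaussBinom
  rw [Finset.prod_range_succ']
  congr 1
  apply Finset.prod_congr rfl
  intro i _
  rw [Nat.add_sub_add_right, Nat.add_sub_add_right]

theorem gaussBinom_one (q n : ℕ) :
    gaussBinom q n 1 = ((q : ℝ) ^ n - 1) / ((q : ℝ) - 1) := by
  simp [gaussBinom]

theorem le_gaussBinom (q n k : ℕ) (hq : 2 ≤ q) (hk : k ≤ n) :
    (q : ℝ) ^ (k * (n - k)) ≤ gaussBinom q n k := by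
  have hq1 : (1 : ℝ) < q := by exact_mod_cast hq
  unfold gaussBinom
  rw [mul_comm, pow_mul]
  rw [← Finset.card_range k, ← Finset.prod_const, Finset.card_range]
  apply Finset.prod_le_prod
  · intros; positivity
  · intro i hi
    have hi' : i < k := Finset.mem_range.1 hi
    have h1 := one_lt_pow₀ hq1 (n := k - i) (by omega)
    have h2 := one_le_pow₀ hq1.le (n := n - k)
    rw [le_div_iff₀ (by linarith), mul_sub, ← pow_add, mul_one]
    have : n - k + (k - i) = n - i := by omega
    rw [this]; linarith

theorem gaussBinom_pos (q n k : ℕ) (hq : 2 ≤ q) (hk : k ≤ n) : 0 < gaussBinom q n k := by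
  have hq1 : (0 : ℝ) < q := by exact_mod_cast (by omega : 0 < q)
  exact lt_of_lt_of_le (by positivity) (le_gaussBinom q n k hq hk)

/-- `r = 1 / (q^e (q-1))` -/
theorem ratio_step (q n k s e : ℕ) (hq : 2 ≤ q) (hn : 2 * k + e ≤ n) (hs : s < k) :
    gaussBinom q k 1 * gaussBinom q (n - (s + 1)) (k - (s + 1)) ≤
      (1 / ((q : ℝ) ^ e * (q - 1))) * gaussBinom q (n - s) (k - s) := by
  have hq1 : (1 : ℝ) < q := by exact_mod_cast hq
  obtain ⟨a, ha⟩ : ∃ a, k - s = a + 1 := ⟨k - s - 1, by omega⟩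
  obtain ⟨b, hb⟩ : ∃ b, n - s = b + 1 := ⟨n - s - 1, by omega⟩
  have ha' : k - (s + 1) = a := by omega
  have hb' : n - (s + 1) = b := by omega
  rw [ha, hb, ha', hb', gaussBinom_succ, gaussBinom_one]
  have hG : 0 < gaussBinom q b a := gaussBinom_pos q b a hq (by omega)
  have hA := one_lt_pow₀ hq1 (n := a + 1) (by omega)
  have key : (q : ℝ) ^ e * ((q : ℝ) ^ k - 1) * ((q : ℝ) ^ (a + 1) - 1) ≤ (q : ℝ) ^ (b + 1) - 1 := by
    have h1 : (q : ℝ) ^ e * (q : ℝ) ^ k * (q : ℝ) ^ (a + 1) ≤ (q : ℝ) ^ (b + 1) := by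
      rw [← pow_add, ← pow_add]
      exact pow_le_pow_right₀ hq1.le (by omega)
    have h2 := one_le_pow₀ hq1.le (n := e)
    have h3 := one_le_pow₀ hq1.le (n := k)
    set E := (q : ℝ) ^ e
    set Q := (q : ℝ) ^ k
    set A := (q : ℝ) ^ (a + 1)
    have h4 : 1 ≤ E * Q := one_le_mul_of_one_le_of_one_le h2 h3
    have h5 : 1 ≤ E * A := one_le_mul_of_one_le_of_one_le h2 hA.le
    have h6 : E ≤ E * Q := le_mul_of_one_le_right (by linarith) h3
    nlinarith
  have hq2 : (0 : ℝ) < q - 1 := by linarith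
  have hA2 : (0 : ℝ) < (q : ℝ) ^ (a + 1) - 1 := by linarith
  have hE : (0 : ℝ) < (q : ℝ) ^ e := by positivity
  have : ((q : ℝ) ^ k - 1) / (q - 1) ≤
      (1 / ((q : ℝ) ^ e * (q - 1))) * (((q : ℝ) ^ (b + 1) - 1) / ((q : ℝ) ^ (a + 1) - 1)) := by
    rw [one_div_mul_eq_div, div_div, div_le_div_iff₀ hq2 (by positivity)]
    nlinarith
  calc _ ≤ _ := mul_le_mul_of_nonneg_right this hG.le
    _ = _ := by ring

theorem ratio_iter (q n k e : ℕ) (hq : 2 ≤ q) (hn : 2 * k + e ≤ n) (t : ℕ) (ht : t + 1 ≤ k) :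
    (gaussBinom q k 1) ^ t * gaussBinom q (n - (t + 1)) (k - (t + 1)) ≤
      (1 / ((q : ℝ) ^ e * (q - 1))) ^ t * gaussBinom q (n - 1) (k - 1) := by
  have hq1 : (1 : ℝ) < q := by exact_mod_cast hq
  have hr : 0 ≤ 1 / ((q : ℝ) ^ e * (q - 1)) := by
    have : (0 : ℝ) < q - 1 := by linarith
    positivity
  have hc : 0 < gaussBinom q k 1 := gaussBinom_pos q k 1 hq (by omega)
  induction t with
  | zero => simp
  | succ t ih =>
    have ih := ih (by omega)
    have h := ratio_step q n k (t + 1) e hq hn (by omega)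
    calc _ = (gaussBinom q k 1) ^ t * (gaussBinom q k 1 * gaussBinom q (n - (t + 1 + 1)) (k - (t + 1 + 1))) := by ring
      _ ≤ (gaussBinom q k 1) ^ t * ((1 / ((q : ℝ) ^ e * (q - 1))) * gaussBinom q (n - (t + 1)) (k - (t + 1))) := by gcongr
      _ = (1 / ((q : ℝ) ^ e * (q - 1))) * ((gaussBinom q k 1) ^ t * gaussBinom q (n - (t + 1)) (k - (t + 1))) := by ring
      _ ≤ (1 / ((q : ℝ) ^ e * (q - 1))) * ((1 / ((q : ℝ) ^ e * (q - 1))) ^ t * gaussBinom q (n - 1) (k - 1)) := by gcongr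
      _ = _ := by ring

theorem gaussBinom_one_le (q t : ℕ) (hq : 2 ≤ q) :
    gaussBinom q (t + 1) 1 ≤ ((q : ℝ) + 1) ^ t := by
  have hq1 : (1 : ℝ) < q := by exact_mod_cast hq
  have hq2 : (0 : ℝ) < q - 1 := by linarith
  rw [gaussBinom_one, div_le_iff₀ hq2]
  induction t with
  | zero => simp
  | succ t ih =>
    have h2 := one_lt_pow₀ hq1 (n := t + 1) (by omega)
    have h1 : (q : ℝ) - 1 ≤ q ^ (t + 1) - 1 := by
      have := le_self_pow₀ hq1.le (n := t + 1) (by omega); linarith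
    calc (q : ℝ) ^ (t + 1 + 1) - 1 = q * (q ^ (t + 1) - 1) + (q - 1) := by ring
      _ ≤ (q + 1) * (q ^ (t + 1) - 1) := by linarith
      _ ≤ (q + 1) * ((q + 1) ^ t * (q - 1)) := by gcongr
      _ = _ := by ring

theorem ratio_final (q n k : ℕ) (hq : 2 ≤ q)
    (h : (q = 2 ∧ 2 * k + 2 ≤ n) ∨ (3 ≤ q ∧ 2 * k + 1 ≤ n)) (t : ℕ) (ht1 : 1 ≤ t) (ht : t + 1 ≤ k) :
    gaussBinom q (t + 1) 1 * ((gaussBinom q k 1) ^ t * gaussBinom q (n - (t + 1)) (k - (t + 1))) ≤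
      3 / 4 * gaussBinom q (n - 1) (k - 1) := by
  have hq1 : (1 : ℝ) < q := by exact_mod_cast hq
  have hq2 : (0 : ℝ) < q - 1 := by linarith
  obtain ⟨e, he, hre⟩ : ∃ e, 2 * k + e ≤ n ∧ ((q : ℝ) + 1) * (1 / ((q : ℝ) ^ e * (q - 1))) ≤ 3 / 4 := by
    rcases h with ⟨rfl, h⟩ | ⟨h3, h⟩
    · exact ⟨2, h, by norm_num⟩
    · refine ⟨1, h, ?_⟩
      have h3' : (3 : ℝ) ≤ q := by exact_mod_cast h3
      rw [mul_one_div, pow_one, div_le_iff₀ (by positivity)]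
      nlinarith
  have hr : 0 ≤ ((q : ℝ) + 1) * (1 / ((q : ℝ) ^ e * (q - 1))) := by positivity
  have hM : 0 < gaussBinom q (n - 1) (k - 1) := gaussBinom_pos _ _ _ hq (by omega)
  have hM' : 0 < gaussBinom q (n - (t + 1)) (k - (t + 1)) := gaussBinom_pos _ _ _ hq (by omega)
  have hc : 0 < gaussBinom q k 1 := gaussBinom_pos q k 1 hq (by omega)
  calc _ ≤ ((q : ℝ) + 1) ^ t * ((1 / ((q : ℝ) ^ e * (q - 1))) ^ t * gaussBinom q (n - 1) (k - 1)) :=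
        mul_le_mul (gaussBinom_one_le q t hq) (ratio_iter q n k e hq he t ht) (by positivity) (by positivity)
    _ = (((q : ℝ) + 1) * (1 / ((q : ℝ) ^ e * (q - 1)))) ^ t * gaussBinom q (n - 1) (k - 1) := by
        rw [mul_pow]; ring
    _ ≤ 3 / 4 * gaussBinom q (n - 1) (k - 1) := by
        gcongr
        calc _ ≤ (((q : ℝ) + 1) * (1 / ((q : ℝ) ^ e * (q - 1)))) ^ 1 :=
              pow_le_pow_of_le_one hr (by linarith) ht1
          _ ≤ _ := by rw [pow_one]; exact hre

end Arith

section HiltonMilner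

variable {K : Type*} [Field K] [Fintype K]

theorem finset_card_le_natCard {α : Type*} [Finite α] (s : Finset α) (p : α → Prop)
    (h : ∀ x ∈ s, p x) : s.card ≤ Nat.card {x // p x} := by
  classical
  have : Fintype α := Fintype.ofFinite α
  rw [Nat.card_eq_fintype_card, Fintype.card_subtype]
  exact Finset.card_le_card (fun x hx => by simpa using h x hx)

theorem exists_point_le {V : Type*} [AddCommGroup V] [Module K V] (W : Submodule K V)
    (h : W ≠ ⊥) : ∃ p : Submodule K V, Module.finrank K p = 1 ∧ p ≤ W := by
  obtain ⟨x, hx, hx0⟩ := (Submodule.ne_bot_iff W).1 h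
  exact ⟨Submodule.span K {x}, finrank_span_singleton hx0, by simpa using hx⟩

theorem cover_bound {n : ℕ} [DecidableRel (α := Submodule K (Fin n → K)) (· ≤ ·)]
    (G : Finset (Submodule K (Fin n → K))) (T : Submodule K (Fin n → K))
    (t : ℕ) (ht : Module.finrank K T = t) (ht1 : 1 ≤ t) (hT : ∀ W ∈ G, T ⊓ W ≠ ⊥) (b : ℝ)
    (hb : ∀ p : Submodule K (Fin n → K), Module.finrank K p = 1 → p ≤ T →
      ((G.filter (fun W => p ≤ W)).card : ℝ) ≤ b) :
    (G.card : ℝ) ≤ gaussBinom (Fintype.card K) t 1 * b := by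
  classical
  have : Fintype (Submodule K (Fin n → K)) := Fintype.ofFinite _
  let P : Finset (Submodule K (Fin n → K)) :=
    Finset.univ.filter (fun p => Module.finrank K p = 1 ∧ p ≤ T)
  have hP : (P.card : ℝ) = gaussBinom (Fintype.card K) t 1 := by
    rw [← card_subspaces_le (K := K) T t 1 ht ht1, Nat.card_eq_fintype_card, Fintype.card_subtype]
  have hsub : G ⊆ P.biUnion (fun p => G.filter (fun W => p ≤ W)) := by
    intro W hW
    obtain ⟨p, hp1, hp⟩ := exists_point_le _ (hT W hW)
    simp only [Finset.mem_biUnion, Finset.mem_filter]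
    exact ⟨p, by simpa [P] using ⟨hp1, hp.trans inf_le_left⟩, hW, hp.trans inf_le_right⟩
  calc (G.card : ℝ) ≤ ((P.biUnion (fun p => G.filter (fun W => p ≤ W))).card : ℝ) := by
        exact_mod_cast Finset.card_le_card hsub
    _ ≤ ((∑ p ∈ P, (G.filter (fun W => p ≤ W)).card : ℕ) : ℝ) := by
        exact_mod_cast Finset.card_biUnion_le
    _ = ∑ p ∈ P, ((G.filter (fun W => p ≤ W)).card : ℝ) := by push_cast; rfl
    _ ≤ ∑ p ∈ P, b := Finset.sum_le_sum (fun p hp => by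
        have := (Finset.mem_filter.1 hp).2
        exact hb p this.1 this.2)
    _ = _ := by rw [Finset.sum_const, nsmul_eq_mul, hP]

theorem hilton_milner_weak {n k : ℕ} (F : Finset (Submodule K (Fin n → K)))
    (hk : 2 ≤ k)
    (h : (Fintype.card K = 2 ∧ 2 * k + 2 ≤ n) ∨ (3 ≤ Fintype.card K ∧ 2 * k + 1 ≤ n))
    (hF : ∀ U ∈ F, Module.finrank K ↥U = k) (hi : IsIntersectingFam F) (hnt : ¬ IsTrivialFam F) :
    (F.card : ℝ) ≤ 3 / 4 * gaussBinom (Fintype.card K) (n - 1) (k - 1) := by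
  classical
  have hn : 2 * k + 1 ≤ n := by omega
  have hq : 2 ≤ Fintype.card K := Fintype.one_lt_card
  have hfin : Module.finrank K (Fin n → K) = n := by simp
  have hi' : ∀ U ∈ F, ∀ W ∈ F, U ⊓ W ≠ ⊥ := by
    intro U hU W hW h0
    have := hi U hU W hW
    rw [h0, finrank_bot] at this
    omega
  have hne : F.Nonempty := by
    by_contra hne
    rw [Finset.not_nonempty_iff_eq_empty] at hne
    apply hnt
    have : (⊤ : Submodule K (Fin n → K)) ≠ ⊥ := by
      intro h0
      have h1 := finrank_top K (Fin n → K)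
      rw [h0, finrank_bot, hfin] at h1
      omega
    obtain ⟨p, hp, _⟩ := exists_point_le _ this
    exact ⟨p, hp, by simp [hne]⟩
  have hex : ∃ t, ∃ T : Submodule K (Fin n → K), Module.finrank K T = t ∧ ∀ W ∈ F, T ⊓ W ≠ ⊥ := by
    obtain ⟨U, hU⟩ := hne
    exact ⟨_, U, rfl, hi' U hU⟩
  obtain ⟨T, hT, hTF⟩ := Nat.find_spec hex
  have hmin : ∀ S : Submodule K (Fin n → K), Module.finrank K S < Nat.find hex →
      ∃ W ∈ F, S ⊓ W = ⊥ := by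
    intro S hS
    have := Nat.find_min hex hS
    by_contra hcon
    push Not at hcon
    exact this ⟨S, rfl, hcon⟩
  have htk : Nat.find hex ≤ k := by
    obtain ⟨U, hU⟩ := hne
    rw [← hF U hU]
    exact Nat.find_min' hex ⟨U, rfl, hi' U hU⟩
  set t := Nat.find hex with ht
  have ht2 : 2 ≤ t := by
    by_contra hlt
    have : t = 0 ∨ t = 1 := by omega
    obtain ⟨U, hU⟩ := hne
    rcases this with h0 | h1
    · rw [h0] at hT
      have := Submodule.finrank_eq_zero.1 hT
      exact hTF U hU (by rw [this, bot_inf_eq])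
    · rw [h1] at hT
      refine hnt ⟨T, hT, fun W hW => ?_⟩
      have h2 := hTF W hW
      have h3 : 1 ≤ Module.finrank K ↥(T ⊓ W) := by
        rw [Nat.one_le_iff_ne_zero]
        exact fun h0 => h2 (Submodule.finrank_eq_zero.1 h0)
      have h4 : T ⊓ W = T := Submodule.eq_of_le_of_finrank_le inf_le_left (by omega)
      exact inf_eq_left.1 h4
  clear_value t
  have claim : ∀ j, j < t → ∀ S : Submodule K (Fin n → K), Module.finrank K S = t - j →
      ((F.filter (fun W => S ≤ W)).card : ℝ) ≤
        gaussBinom (Fintype.card K) k 1 ^ j * gaussBinom (Fintype.card K) (n - t) (k - t) := by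
    intro j
    induction j with
    | zero =>
      intro _ S hS
      rw [pow_zero, one_mul]
      have := card_subspaces_ge S t k hS htk (by rw [hfin]; omega)
      rw [hfin] at this
      rw [← this]
      exact_mod_cast finset_card_le_natCard (F.filter (fun W => S ≤ W))
        (fun U => Module.finrank K U = k ∧ S ≤ U) (fun W hW =>
        ⟨hF W (Finset.mem_filter.1 hW).1, (Finset.mem_filter.1 hW).2⟩)
    | succ j ih =>
      intro hj S hS
      obtain ⟨U, hU, hSU⟩ := hmin S (by omega)
      rw [pow_succ', mul_assoc]
      apply cover_bound _ U k (hF U hU) (by omega)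
      · intro W hW
        exact hi' U hU W (Finset.mem_filter.1 hW).1
      · intro p hp hpU
        have hfr : Module.finrank K ↥(S ⊔ p) = t - j := by
          have h1 := Submodule.finrank_sup_add_finrank_inf_eq S p
          have h2 : S ⊓ p = ⊥ := by
            rw [eq_bot_iff, ← hSU]; exact inf_le_inf_left _ hpU
          rw [h2, finrank_bot] at h1
          omega
        have h3 := ih (by omega) (S ⊔ p) hfr
        rw [Finset.filter_filter]
        simpa only [sup_le_iff] using h3
  obtain ⟨s, rfl⟩ : ∃ s, t = s + 1 := ⟨t - 1, by omega⟩
  refine le_trans ?_ (ratio_final _ n k hq h s (by omega) htk)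
  apply cover_bound F T (s + 1) hT (by omega) hTF
  intro p hp _
  exact claim s (by omega) p (by omega)

end HiltonMilner

section Bollobas

variable {K : Type*} [Field K]

theorem exists_functional {n k : ℕ} (A B : Submodule K (Fin n → K))
    (hA : Module.finrank K A = k) (hAB : A ⊓ B = ⊥) :
    ∃ φ : (Fin n → K) →ₗ[K] (Fin k → K), B ≤ LinearMap.ker φ ∧ A ⊓ LinearMap.ker φ = ⊥ := by
  have hd : Disjoint A B := disjoint_iff.2 hAB
  obtain ⟨C, hBC, hC⟩ := hd.symm.exists_isCompl
  let e : A ≃ₗ[K] (Fin k → K) := LinearEquiv.ofFinrankEq _ _ (by simp [hA])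
  refine ⟨e.toLinearMap ∘ₗ A.projectionOnto C hC.symm, ?_, ?_⟩
  · rw [LinearEquiv.ker_comp, Submodule.ker_projectionOnto]
    exact hBC
  · rw [LinearEquiv.ker_comp, Submodule.ker_projectionOnto]
    exact hC.symm.inf_eq_bot

theorem bollobas_weak {ι : Type*} [Fintype ι] {n k : ℕ} (A B : ι → Submodule K (Fin n → K))
    (hA : ∀ i, Module.finrank K (A i) = k) (h1 : ∀ i, A i ⊓ B i = ⊥)
    (h2 : ∀ i j, i ≠ j → A i ⊓ B j ≠ ⊥) : Fintype.card ι ≤ n ^ k := by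
  classical
  choose φ hφB hφA using fun i => exists_functional (A i) (B i) (hA i) (h1 i)
  let b : ∀ i, Module.Basis (Fin k) K (A i) := fun i => Module.finBasisOfFinrankEq K (A i) (hA i)
  let ψ : ι → MultilinearMap K (fun _ : Fin k => (Fin n → K)) K := fun j =>
    ((Matrix.detRowAlternating (n := Fin k) (R := K)).compLinearMap (φ j)).toMultilinearMap
  have hψ : ∀ j v, ψ j v = Matrix.det (fun r => φ j (v r)) := fun j v => rfl
  have hdiag : ∀ i, ψ i (fun r => (b i r : Fin n → K)) ≠ 0 := by
    intro i
    rw [hψ]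
    have hli : LinearIndependent K (fun r => φ i (b i r : Fin n → K)) := by
      have := (b i).linearIndependent.map' ((φ i).comp (A i).subtype) (by
        rw [LinearMap.ker_eq_bot']
        intro x hx
        have : (x : Fin n → K) ∈ A i ⊓ LinearMap.ker (φ i) := ⟨x.2, hx⟩
        rw [hφA] at this
        exact Subtype.ext ((Submodule.mem_bot K).1 this))
      exact this
    have hu : IsUnit (Matrix.of fun r => φ i (b i r : Fin n → K)) :=
      Matrix.linearIndependent_rows_iff_isUnit.1 hli
    exact ((Matrix.isUnit_iff_isUnit_det _).1 hu).ne_zero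
  have hoff : ∀ i j, i ≠ j → ψ j (fun r => (b i r : Fin n → K)) = 0 := by
    intro i j hij
    apply AlternatingMap.map_linearDependent (Matrix.detRowAlternating (n := Fin k) (R := K))
    intro hli
    obtain ⟨x, hx, hx0⟩ := (Submodule.ne_bot_iff _).1 (h2 i j hij)
    apply hx0
    have hrepr := (b i).sum_repr ⟨x, hx.1⟩
    have h0 : φ j x = 0 := hφB j hx.2
    have h3 : ∑ r, (b i).repr ⟨x, hx.1⟩ r • φ j (b i r : Fin n → K) = 0 := by
      have h6 := congrArg (fun y : A i => φ j (y : Fin n → K)) hrepr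
      simp only [Submodule.coe_sum, Submodule.coe_smul, map_sum, map_smul, h0] at h6
      exact h6
    have h4 := Fintype.linearIndependent_iff.1 hli _ h3
    have h5 : (⟨x, hx.1⟩ : A i) = 0 := by
      rw [← hrepr]; simp [h4]
    exact congrArg Subtype.val h5
  let ev : MultilinearMap K (fun _ : Fin k => (Fin n → K)) K →ₗ[K] ((Fin k → Fin n) → K) :=
    { toFun := fun f v => f (fun r => Pi.basisFun K (Fin n) (v r))
      map_add' := fun f g => by ext; simp
      map_smul' := fun c f => by ext; simp }
  have hker : LinearMap.ker ev = ⊥ := by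
    rw [LinearMap.ker_eq_bot']
    intro f hf
    apply Module.Basis.ext_multilinear (fun _ => Pi.basisFun K (Fin n))
    intro v
    exact congrFun hf v
  have hli : LinearIndependent K ψ := by
    rw [Fintype.linearIndependent_iff]
    intro c hc i
    have := congrArg (fun f => f (fun r => (b i r : Fin n → K))) hc
    simp only [sum_apply, smul_apply, zero_apply] at this
    rw [Finset.sum_eq_single i] at this
    · exact (mul_eq_zero.1 this).resolve_right (hdiag i)
    · intro j _ hj
      rw [hoff i j hj.symm, smul_zero]
    · simp
  have := (hli.map' ev hker).fintype_card_le_finrank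
  simpa using this

end Bollobas

section Families

variable {K : Type*} [Field K] [Fintype K]

/-- The `k`-dimensional subspaces meeting every member of `G`. -/
noncomputable def meetAll {n : ℕ} (k : ℕ) (G : Finset (Submodule K (Fin n → K))) :
    Finset (Submodule K (Fin n → K)) :=
  (Set.toFinite {U : Submodule K (Fin n → K) |
    Module.finrank K U = k ∧ ∀ W ∈ G, W ⊓ U ≠ ⊥}).toFinset

theorem mem_meetAll {n k : ℕ} {G : Finset (Submodule K (Fin n → K))}
    {U : Submodule K (Fin n → K)} :
    U ∈ meetAll k G ↔ Module.finrank K U = k ∧ ∀ W ∈ G, W ⊓ U ≠ ⊥ := by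
  simp [meetAll]

theorem exists_small_generator {n k : ℕ} (F : Finset (Submodule K (Fin n → K)))
    (hF : ∀ U ∈ F, Module.finrank K U = k) :
    ∃ G ⊆ F, G.card ≤ n ^ k ∧ meetAll k G = meetAll k F := by
  classical
  induction F using Finset.strongInduction with
  | H F ih =>
  by_cases hc : F.card ≤ n ^ k
  · exact ⟨F, subset_rfl, hc, rfl⟩
  · have : ∃ A ∈ F, meetAll k (F.erase A) = meetAll k F := by
      by_contra hcon
      push Not at hcon
      have hB : ∀ A : F, ∃ B : Submodule K (Fin n → K), A.1 ⊓ B = ⊥ ∧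
          ∀ W ∈ F, W ≠ A.1 → W ⊓ B ≠ ⊥ := by
        intro A
        by_contra hno
        push Not at hno
        apply hcon A.1 A.2
        ext U
        rw [mem_meetAll, mem_meetAll]
        constructor
        · rintro ⟨hU, hU2⟩
          refine ⟨hU, fun W hW => ?_⟩
          by_cases hWA : W = A.1
          · subst hWA
            intro h0
            obtain ⟨W, hW, hWA, hW0⟩ := hno U h0
            exact hU2 W (Finset.mem_erase.2 ⟨hWA, hW⟩) hW0
          · exact hU2 W (Finset.mem_erase.2 ⟨hWA, hW⟩)
        · rintro ⟨hU, hU2⟩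
          exact ⟨hU, fun W hW => hU2 W (Finset.mem_of_mem_erase hW)⟩
      choose B hB1 hB2 using hB
      have := bollobas_weak (fun A : F => A.1) B (fun A => hF A.1 A.2) hB1
        (fun A A' hne => hB2 A' A.1 A.2 (fun h => hne (Subtype.ext h)))
      rw [Fintype.card_coe] at this
      exact hc this
    obtain ⟨A, hA, hAF⟩ := this
    obtain ⟨G, hG, hGc, hGm⟩ := ih (F.erase A) (Finset.erase_ssubset hA)
      (fun U hU => hF U (Finset.mem_of_mem_erase hU))
    exact ⟨G, hG.trans (Finset.erase_subset _ _), hGc, hGm.trans hAF⟩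

theorem inf_ne_bot_iff_finrank {n : ℕ} (U W : Submodule K (Fin n → K)) :
    U ⊓ W ≠ ⊥ ↔ 1 ≤ Module.finrank K ↥(U ⊓ W) := by
  rw [Nat.one_le_iff_ne_zero, Ne, Ne, Submodule.finrank_eq_zero]

theorem exists_maximal_family {n k : ℕ} (hk : 1 ≤ k) (F : Finset (Submodule K (Fin n → K)))
    (hF : ∀ U ∈ F, Module.finrank K U = k) (hi : IsIntersectingFam F) :
    ∃ F', F ⊆ F' ∧ IsIntersectingFam F' ∧ meetAll k F' = F' := by
  classical
  obtain ⟨F', hFF, hmax⟩ := (Set.toFinite {F : Finset (Submodule K (Fin n → K)) |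
    (∀ U ∈ F, Module.finrank K U = k) ∧ IsIntersectingFam F}).exists_le_maximal
      (a := F) ⟨hF, hi⟩
  obtain ⟨hF', hi'⟩ := hmax.prop
  refine ⟨F', hFF, hi', ?_⟩
  ext U
  rw [mem_meetAll]
  constructor
  · rintro ⟨hU, hU2⟩
    have hins : insert U F' ∈ {F : Finset (Submodule K (Fin n → K)) |
        (∀ U ∈ F, Module.finrank K U = k) ∧ IsIntersectingFam F} := by
      constructor
      · intro W hW
        rcases Finset.mem_insert.1 hW with rfl | hW
        · exact hU
        · exact hF' W hW
      · intro W hW X hX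
        rcases Finset.mem_insert.1 hW with rfl | hW'
        · rcases Finset.mem_insert.1 hX with rfl | hX'
          · rw [inf_idem, hU]; exact hk
          · rw [inf_comm]; exact (inf_ne_bot_iff_finrank _ _).1 (hU2 X hX')
        · rcases Finset.mem_insert.1 hX with rfl | hX'
          · exact (inf_ne_bot_iff_finrank _ _).1 (hU2 W hW')
          · exact hi' W hW' X hX'
    exact hmax.le_of_ge hins (Finset.subset_insert U F') (Finset.mem_insert_self U F')
  · intro hU
    exact ⟨hF' U hU, fun W hW => (inf_ne_bot_iff_finrank _ _).2 (hi' W hW U hU)⟩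

/-- A family encoded by a tuple of tuples of vectors. -/
noncomputable def decode {n k m : ℕ} (g : Fin m → Fin k → (Fin n → K)) :
    Finset (Submodule K (Fin n → K)) :=
  (Set.toFinite {U : Submodule K (Fin n → K) | Module.finrank K U = k ∧
    ∃ i, Submodule.span K (Set.range (g i)) = U}).toFinset

theorem exists_decode {n k m : ℕ} (hk : 1 ≤ k) (G : Finset (Submodule K (Fin n → K)))
    (hG : ∀ U ∈ G, Module.finrank K U = k) (hm : G.card ≤ m) :
    ∃ g : Fin m → Fin k → (Fin n → K), decode g = G := by
  classical
  have hspan : ∀ U : G, ∃ v : Fin k → (Fin n → K), Submodule.span K (Set.range v) = U.1 := by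
    intro U
    let b := Module.finBasisOfFinrankEq K U.1 (hG U.1 U.2)
    refine ⟨fun i => (b i : Fin n → K), ?_⟩
    have h2 : Set.range (fun i => (b i : Fin n → K)) = Set.image U.1.subtype (Set.range b) := by
      rw [← Set.range_comp]; rfl
    rw [h2, ← Submodule.map_span, b.span_eq, Submodule.map_top, Submodule.range_subtype]
  choose v hv using hspan
  let e := G.equivFin
  refine ⟨fun i => if h : i.1 < G.card then v (e.symm ⟨i.1, h⟩) else 0, ?_⟩
  ext U
  simp only [decode, Set.Finite.mem_toFinset, Set.mem_ofPred_eq]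
  constructor
  · rintro ⟨hU, i, hi⟩
    by_cases h : i.1 < G.card
    · rw [dif_pos h, hv] at hi
      rw [← hi]; exact (e.symm ⟨i.1, h⟩).2
    · exfalso
      rw [dif_neg h] at hi
      have : U = ⊥ := by
        rw [← hi, Submodule.span_eq_bot]
        rintro x ⟨j, rfl⟩; rfl
      rw [this, finrank_bot] at hU
      omega
  · intro hU
    refine ⟨hG U hU, ⟨(e ⟨U, hU⟩).1, lt_of_lt_of_le (e ⟨U, hU⟩).2 hm⟩, ?_⟩
    rw [dif_pos (e ⟨U, hU⟩).2, hv]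
    simp

theorem card_nontrivial_le {n k : ℕ} (hk : 2 ≤ k)
    (h : (Fintype.card K = 2 ∧ 2 * k + 2 ≤ n) ∨ (3 ≤ Fintype.card K ∧ 2 * k + 1 ≤ n)) :
    (Nat.card {𝓕 : Finset (Submodule K (Fin n → K)) //
          (∀ U ∈ 𝓕, Module.finrank K ↥U = k) ∧ IsIntersectingFam 𝓕 ∧ ¬ IsTrivialFam 𝓕} : ℝ) ≤
      (((Fintype.card K : ℝ) ^ n) ^ k) ^ (n ^ k) *
        (2 : ℝ) ^ (3 / 4 * gaussBinom (Fintype.card K) (n - 1) (k - 1)) := by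
  classical
  have : Fintype (Submodule K (Fin n → K)) := Fintype.ofFinite _
  rw [Nat.card_eq_fintype_card, Fintype.card_subtype]
  set b : ℝ := (2 : ℝ) ^ (3 / 4 * gaussBinom (Fintype.card K) (n - 1) (k - 1)) with hb
  let good : Finset (Submodule K (Fin n → K)) → Prop := fun F =>
    (∀ U ∈ F, Module.finrank K ↥U = k) ∧ IsIntersectingFam F ∧ ¬ IsTrivialFam F
  let P : (Fin (n ^ k) → Fin k → (Fin n → K)) → Finset (Finset (Submodule K (Fin n → K))) :=
    fun g => if good (meetAll k (decode g)) then (meetAll k (decode g)).powerset else ∅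
  have hP : ∀ g, ((P g).card : ℝ) ≤ b := by
    intro g
    by_cases hg : good (meetAll k (decode g))
    · simp only [P, if_pos hg, Finset.card_powerset]
      push_cast
      rw [hb, ← Real.rpow_natCast]
      exact Real.rpow_le_rpow_of_exponent_le (by norm_num)
        (hilton_milner_weak _ hk h hg.1 hg.2.1 hg.2.2)
    · simp only [P, if_neg hg, Finset.card_empty, Nat.cast_zero]
      positivity
  have hsub : Finset.univ.filter (fun F : Finset (Submodule K (Fin n → K)) =>
      (∀ U ∈ F, Module.finrank K ↥U = k) ∧ IsIntersectingFam F ∧ ¬ IsTrivialFam F) ⊆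
      Finset.univ.biUnion P := by
    intro F hF
    obtain ⟨hF1, hF2, hF3⟩ := (Finset.mem_filter.1 hF).2
    obtain ⟨F', hFF, hi', hmeet⟩ := exists_maximal_family (by omega) F hF1 hF2
    have hF' : ∀ U ∈ F', Module.finrank K U = k := by
      intro U hU
      rw [← hmeet] at hU
      exact (mem_meetAll.1 hU).1
    obtain ⟨G, hGF, hGc, hGm⟩ := exists_small_generator F' hF'
    obtain ⟨g, hg⟩ := exists_decode (by omega) G (fun U hU => hF' U (hGF hU)) hGc
    have heq : meetAll k (decode g) = F' := by rw [hg, hGm, hmeet]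
    have hgood : good (meetAll k (decode g)) := by
      rw [heq]
      refine ⟨hF', hi', ?_⟩
      rintro ⟨L, hL, hLF⟩
      exact hF3 ⟨L, hL, fun U hU => hLF U (hFF hU)⟩
    rw [Finset.mem_biUnion]
    refine ⟨g, Finset.mem_univ _, ?_⟩
    simp only [P, if_pos hgood, Finset.mem_powerset]
    rw [heq]; exact hFF
  calc _ ≤ ((Finset.univ.biUnion P).card : ℝ) := by exact_mod_cast Finset.card_le_card hsub
    _ ≤ ((∑ g, (P g).card : ℕ) : ℝ) := by exact_mod_cast Finset.card_biUnion_le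
    _ = ∑ g, ((P g).card : ℝ) := by push_cast; rfl
    _ ≤ ∑ g, b := Finset.sum_le_sum (fun g _ => hP g)
    _ = _ := by
      rw [Finset.sum_const, nsmul_eq_mul, Finset.card_univ]
      simp [Fintype.card_pi]

/-- The star of `L`: all `k`-dimensional subspaces containing `L`. -/
noncomputable def kStar {n : ℕ} (k : ℕ) (L : Submodule K (Fin n → K)) :
    Finset (Submodule K (Fin n → K)) :=
  (Set.toFinite {U : Submodule K (Fin n → K) | Module.finrank K U = k ∧ L ≤ U}).toFinset

theorem mem_star {n k : ℕ} {L U : Submodule K (Fin n → K)} :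
    U ∈ kStar k L ↔ Module.finrank K U = k ∧ L ≤ U := by
  simp [kStar]

theorem card_star {n k s : ℕ} (L : Submodule K (Fin n → K)) (hL : Module.finrank K L = s)
    (hs : s ≤ k) (hk : k ≤ n) :
    ((kStar k L).card : ℝ) = gaussBinom (Fintype.card K) (n - s) (k - s) := by
  classical
  have hfin : Module.finrank K (Fin n → K) = n := by simp
  have := card_subspaces_ge L s k hL hs (by rw [hfin]; exact hk)
  rw [hfin] at this
  rw [← this]
  have : Fintype (Submodule K (Fin n → K)) := Fintype.ofFinite _
  rw [Nat.card_eq_fintype_card, Fintype.card_subtype]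
  congr 2
  ext U
  simp [mem_star]

/-- The finset of points. -/
noncomputable def pts (K : Type*) [Field K] [Fintype K] (n : ℕ) : Finset (Submodule K (Fin n → K)) :=
  (Set.toFinite {U : Submodule K (Fin n → K) | Module.finrank K U = 1}).toFinset

theorem mem_pts {n : ℕ} {L : Submodule K (Fin n → K)} :
    L ∈ pts K n ↔ Module.finrank K L = 1 := by
  simp [pts]

theorem card_pts {n : ℕ} (hn : 1 ≤ n) :
    ((pts K n).card : ℝ) = gaussBinom (Fintype.card K) n 1 := by
  classical
  have hfin : Module.finrank K (Fin n → K) = n := by simp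
  have := card_subspaces (K := K) (V := Fin n → K) 1 (by rw [hfin]; exact hn)
  rw [hfin] at this
  rw [← this]
  have : Fintype (Submodule K (Fin n → K)) := Fintype.ofFinite _
  rw [Nat.card_eq_fintype_card, Fintype.card_subtype]
  congr 2
  ext U
  simp [mem_pts]

theorem finrank_sup_points {n : ℕ} {L L' : Submodule K (Fin n → K)}
    (hL : Module.finrank K L = 1) (hL' : Module.finrank K L' = 1) (hne : L ≠ L') :
    Module.finrank K ↥(L ⊔ L') = 2 := by
  have h1 := Submodule.finrank_sup_add_finrank_inf_eq L L'
  have h2 : Module.finrank K ↥(L ⊓ L') = 0 := by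
    by_contra h0
    apply hne
    have h3 : L ⊓ L' = L := Submodule.eq_of_le_of_finrank_le inf_le_left (by omega)
    have h4 : L ⊓ L' = L' := Submodule.eq_of_le_of_finrank_le inf_le_right (by omega)
    rw [← h3, h4]
  omega

theorem card_total_le {n k : ℕ} (hk : 2 ≤ k) (hn : k ≤ n) :
    (Nat.card {𝓕 : Finset (Submodule K (Fin n → K)) //
          (∀ U ∈ 𝓕, Module.finrank K ↥U = k) ∧ IsIntersectingFam 𝓕} : ℝ) ≤
      gaussBinom (Fintype.card K) n 1 * (2 : ℝ) ^ gaussBinom (Fintype.card K) (n - 1) (k - 1) +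
      (Nat.card {𝓕 : Finset (Submodule K (Fin n → K)) //
          (∀ U ∈ 𝓕, Module.finrank K ↥U = k) ∧ IsIntersectingFam 𝓕 ∧ ¬ IsTrivialFam 𝓕} : ℝ) := by
  classical
  have : Fintype (Submodule K (Fin n → K)) := Fintype.ofFinite _
  rw [Nat.card_eq_fintype_card, Fintype.card_subtype, Nat.card_eq_fintype_card,
    Fintype.card_subtype]
  set N := Finset.univ.filter (fun F : Finset (Submodule K (Fin n → K)) =>
      (∀ U ∈ F, Module.finrank K ↥U = k) ∧ IsIntersectingFam F ∧ ¬ IsTrivialFam F) with hN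
  have hsub : Finset.univ.filter (fun F : Finset (Submodule K (Fin n → K)) =>
      (∀ U ∈ F, Module.finrank K ↥U = k) ∧ IsIntersectingFam F) ⊆
      (pts K n).biUnion (fun L => (kStar k L).powerset) ∪ N := by
    intro F hF
    obtain ⟨hF1, hF2⟩ := (Finset.mem_filter.1 hF).2
    rw [Finset.mem_union]
    by_cases ht : IsTrivialFam F
    · left
      obtain ⟨L, hL, hLF⟩ := ht
      rw [Finset.mem_biUnion]
      exact ⟨L, mem_pts.2 hL, Finset.mem_powerset.2
        (fun U hU => mem_star.2 ⟨hF1 U hU, hLF U hU⟩)⟩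
    · right
      exact Finset.mem_filter.2 ⟨Finset.mem_univ _, hF1, hF2, ht⟩
  have h1 : (((pts K n).biUnion (fun L => (kStar k L).powerset)).card : ℝ) ≤
      gaussBinom (Fintype.card K) n 1 * (2 : ℝ) ^ gaussBinom (Fintype.card K) (n - 1) (k - 1) := by
    calc _ ≤ ((∑ L ∈ pts K n, (kStar k L).powerset.card : ℕ) : ℝ) := by
          exact_mod_cast Finset.card_biUnion_le
      _ = ∑ L ∈ pts K n, (2 : ℝ) ^ gaussBinom (Fintype.card K) (n - 1) (k - 1) := by
          push_cast
          apply Finset.sum_congr rfl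
          intro L hL
          rw [Finset.card_powerset, ← card_star L (mem_pts.1 hL) (by omega) hn, Real.rpow_natCast]
          push_cast; rfl
      _ = _ := by rw [Finset.sum_const, nsmul_eq_mul, card_pts (by omega)]
  have h2 := Finset.card_le_card hsub
  have h3 := h2.trans (Finset.card_union_le _ _)
  have h4 : ((Finset.univ.filter (fun F : Finset (Submodule K (Fin n → K)) =>
      (∀ U ∈ F, Module.finrank K ↥U = k) ∧ IsIntersectingFam F)).card : ℝ) ≤
      ((pts K n).biUnion (fun L => (kStar k L).powerset)).card + N.card := by exact_mod_cast h3
  linarith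

theorem le_card_total {n k : ℕ} (hk : 2 ≤ k) (hn : k ≤ n) :
    gaussBinom (Fintype.card K) n 1 * ((2 : ℝ) ^ gaussBinom (Fintype.card K) (n - 1) (k - 1)
      - gaussBinom (Fintype.card K) n 1 * (2 : ℝ) ^ gaussBinom (Fintype.card K) (n - 2) (k - 2)) ≤
    (Nat.card {𝓕 : Finset (Submodule K (Fin n → K)) //
          (∀ U ∈ 𝓕, Module.finrank K ↥U = k) ∧ IsIntersectingFam 𝓕} : ℝ) := by
  classical
  have : Fintype (Submodule K (Fin n → K)) := Fintype.ofFinite _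
  rw [Nat.card_eq_fintype_card, Fintype.card_subtype]
  let R : Submodule K (Fin n → K) → Finset (Finset (Submodule K (Fin n → K))) := fun L =>
    ((pts K n).erase L).biUnion (fun L' => (kStar k (L ⊔ L')).powerset)
  let E : Submodule K (Fin n → K) → Finset (Finset (Submodule K (Fin n → K))) := fun L =>
    (kStar k L).powerset \ R L
  have hE : ∀ L ∈ pts K n, (2 : ℝ) ^ gaussBinom (Fintype.card K) (n - 1) (k - 1)
      - gaussBinom (Fintype.card K) n 1 * (2 : ℝ) ^ gaussBinom (Fintype.card K) (n - 2) (k - 2)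
      ≤ ((E L).card : ℝ) := by
    intro L hL
    have h1 : ((kStar k L).powerset.card : ℝ) =
        (2 : ℝ) ^ gaussBinom (Fintype.card K) (n - 1) (k - 1) := by
      rw [Finset.card_powerset, ← card_star L (mem_pts.1 hL) (by omega) hn, Real.rpow_natCast]
      push_cast; rfl
    have h2 : ((R L).card : ℝ) ≤
        gaussBinom (Fintype.card K) n 1 * (2 : ℝ) ^ gaussBinom (Fintype.card K) (n - 2) (k - 2) := by
      calc _ ≤ ((∑ L' ∈ (pts K n).erase L, (kStar k (L ⊔ L')).powerset.card : ℕ) : ℝ) := by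
            exact_mod_cast Finset.card_biUnion_le
        _ = ∑ L' ∈ (pts K n).erase L, (2 : ℝ) ^ gaussBinom (Fintype.card K) (n - 2) (k - 2) := by
            push_cast
            apply Finset.sum_congr rfl
            intro L' hL'
            obtain ⟨hne, hL'⟩ := Finset.mem_erase.1 hL'
            rw [Finset.card_powerset, ← card_star (L ⊔ L')
              (finrank_sup_points (mem_pts.1 hL) (mem_pts.1 hL') hne.symm) (by omega) hn,
              Real.rpow_natCast]
            push_cast; rfl
        _ ≤ _ := by
            rw [Finset.sum_const, nsmul_eq_mul, ← card_pts (by omega : 1 ≤ n)]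
            gcongr
            exact Finset.erase_subset _ _
    have h3 := Finset.le_card_sdiff (R L) (kStar k L).powerset
    have h4 : ((kStar k L).powerset.card : ℝ) ≤ (E L).card + (R L).card := by
      have : (kStar k L).powerset.card ≤ (E L).card + (R L).card := by
        have : (E L).card = ((kStar k L).powerset \ R L).card := rfl
        omega
      exact_mod_cast this
    linarith
  have hdisj : Set.PairwiseDisjoint (pts K n : Set (Submodule K (Fin n → K))) E := by
    intro L hL L' hL' hne
    rw [Function.onFun, Finset.disjoint_left]
    intro F hF hF'
    obtain ⟨hF1, hF2⟩ := Finset.mem_sdiff.1 hF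
    obtain ⟨hF1', _⟩ := Finset.mem_sdiff.1 hF'
    apply hF2
    refine Finset.mem_biUnion.2 ⟨L', Finset.mem_erase.2 ⟨hne.symm, hL'⟩, Finset.mem_powerset.2 ?_⟩
    intro U hU
    have h1 := mem_star.1 (Finset.mem_powerset.1 hF1 hU)
    have h2 := mem_star.1 (Finset.mem_powerset.1 hF1' hU)
    exact mem_star.2 ⟨h1.1, sup_le h1.2 h2.2⟩
  have hsub : (pts K n).biUnion E ⊆ Finset.univ.filter
      (fun F : Finset (Submodule K (Fin n → K)) =>
      (∀ U ∈ F, Module.finrank K ↥U = k) ∧ IsIntersectingFam F) := by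
    intro F hF
    obtain ⟨L, hL, hF⟩ := Finset.mem_biUnion.1 hF
    have hF1 := Finset.mem_powerset.1 (Finset.mem_sdiff.1 hF).1
    refine Finset.mem_filter.2 ⟨Finset.mem_univ _, fun U hU => (mem_star.1 (hF1 hU)).1, ?_⟩
    intro U hU W hW
    rw [← mem_pts.1 hL]
    exact Submodule.finrank_mono (le_inf (mem_star.1 (hF1 hU)).2 (mem_star.1 (hF1 hW)).2)
  calc _ = ∑ L ∈ pts K n, ((2 : ℝ) ^ gaussBinom (Fintype.card K) (n - 1) (k - 1)
      - gaussBinom (Fintype.card K) n 1 * (2 : ℝ) ^ gaussBinom (Fintype.card K) (n - 2) (k - 2)) := by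
        rw [Finset.sum_const, nsmul_eq_mul, card_pts (by omega)]
    _ ≤ ∑ L ∈ pts K n, ((E L).card : ℝ) := Finset.sum_le_sum hE
    _ = (((pts K n).biUnion E).card : ℝ) := by
        rw [Finset.card_biUnion hdisj]; push_cast; rfl
    _ ≤ _ := by exact_mod_cast Finset.card_le_card hsub

end Families

section Analysis

theorem eventually_poly_le (c : ℕ) : ∃ j₀ : ℕ, ∀ j ≥ j₀, 4 * (c + 1) * (2 * j + 1) ^ 4 ≤ 2 ^ j := by
  have h := tendsto_pow_const_div_const_pow_of_one_lt 4 (r := (2 : ℝ)) (by norm_num)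
  have hpos : (0 : ℝ) < 1 / (4 * (c + 1) * 81) := by positivity
  obtain ⟨j₀, hj⟩ := Filter.eventually_atTop.1 (h.eventually_lt_const hpos)
  refine ⟨max j₀ 1, fun j hjj => ?_⟩
  have h1 := hj j (le_trans (le_max_left _ _) hjj)
  have hj1 : 1 ≤ j := le_trans (le_max_right _ _) hjj
  rw [div_lt_div_iff₀ (by positivity) (by positivity)] at h1
  have h2 : 4 * (c + 1) * 81 * j ^ 4 ≤ 2 ^ j := by
    have : (4 * (c + 1) * 81 * j ^ 4 : ℝ) ≤ 2 ^ j := by nlinarith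
    exact_mod_cast this
  calc 4 * (c + 1) * (2 * j + 1) ^ 4 ≤ 4 * (c + 1) * (3 * j) ^ 4 := by gcongr; omega
    _ = 4 * (c + 1) * 81 * j ^ 4 := by ring
    _ ≤ _ := h2

theorem analytic_bound (ε : ℝ) (hε : 0 < ε) : ∃ n₀ : ℕ, ∀ n ≥ n₀, ∀ q k : ℕ, 2 ≤ q → 2 ≤ k →
    2 * k + 1 ≤ n → ∀ M : ℝ, (q : ℝ) ^ ((k - 1) * (n - k)) ≤ M →
    (((q : ℝ) ^ n) ^ k) ^ (n ^ k) * (2 : ℝ) ^ (3 / 4 * M) ≤ ε * (2 : ℝ) ^ M := by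
  obtain ⟨c, hc⟩ := pow_unbounded_of_one_lt (1 / ε) (by norm_num : (1 : ℝ) < 2)
  obtain ⟨j₀, hj⟩ := eventually_poly_le c
  refine ⟨2 * j₀ + 1, fun n hn q k hq hk hkn M hM => ?_⟩
  obtain ⟨a, rfl⟩ : ∃ a, k = a + 1 := ⟨k - 1, by omega⟩
  have hbig : 4 * (q * (n * (a + 1) * n ^ (a + 1)) + c) ≤ q ^ (a * (n - (a + 1))) := by
    have h1 := hj (n - (a + 1) - 1) (by omega)
    have h2 : 4 * (c + 1) * n ^ 4 ≤ 2 ^ (n - (a + 1) - 1) :=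
      le_trans (by gcongr; omega) h1
    have h3 : 4 * (c + 1) * n ^ 4 * q ≤ q ^ (n - (a + 1)) := by
      calc _ ≤ 2 ^ (n - (a + 1) - 1) * q := by gcongr
        _ ≤ q ^ (n - (a + 1) - 1) * q := by gcongr
        _ = q ^ (n - (a + 1)) := by rw [← pow_succ]; congr 1; omega
    have hX : 1 ≤ q * n ^ (a + 3) := Nat.mul_pos (by omega) (Nat.pow_pos (by omega))
    calc 4 * (q * (n * (a + 1) * n ^ (a + 1)) + c)
        ≤ 4 * (q * (n * n * n ^ (a + 1)) + c * (q * n ^ (a + 3))) := by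
          gcongr
          · omega
          · exact Nat.le_mul_of_pos_right c hX
      _ = (4 * (c + 1) * q) * n ^ (a + 3) := by ring
      _ ≤ (4 * (c + 1) * q) ^ a * n ^ (4 * a) := by
          gcongr
          · exact Nat.le_self_pow (by omega) _
          · omega
          · omega
      _ = (4 * (c + 1) * n ^ 4 * q) ^ a := by rw [pow_mul, ← mul_pow]; ring
      _ ≤ (q ^ (n - (a + 1))) ^ a := by gcongr
      _ = _ := by rw [← pow_mul, mul_comm]
  rw [Nat.add_sub_cancel] at hM
  have hM4 : (q * (n * (a + 1) * n ^ (a + 1)) : ℕ) + (c : ℝ) ≤ M / 4 := by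
    have : ((4 * (q * (n * (a + 1) * n ^ (a + 1)) + c) : ℕ) : ℝ) ≤ M :=
      le_trans (by exact_mod_cast hbig) hM
    push_cast at this ⊢
    linarith
  have hL : (((q : ℝ) ^ n) ^ (a + 1)) ^ (n ^ (a + 1)) ≤
      (2 : ℝ) ^ (q * (n * (a + 1) * n ^ (a + 1))) := by
    rw [← pow_mul, ← pow_mul, pow_mul 2 q, ← mul_assoc]
    gcongr
    exact_mod_cast Nat.lt_two_pow_self.le
  have h1 : 1 ≤ ε * 2 ^ c := by
    rw [div_lt_iff₀ hε] at hc; linarith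
  have h2 : (2 : ℝ) ^ (q * (n * (a + 1) * n ^ (a + 1))) * 2 ^ c ≤ (2 : ℝ) ^ (M / 4) := by
    rw [← Real.rpow_natCast, ← Real.rpow_natCast, ← Real.rpow_add (by norm_num)]
    exact Real.rpow_le_rpow_of_exponent_le (by norm_num) hM4
  have h3 : (2 : ℝ) ^ M = (2 : ℝ) ^ (M / 4) * (2 : ℝ) ^ (3 / 4 * M) := by
    rw [← Real.rpow_add (by norm_num)]; congr 1; ring
  rw [h3, ← mul_assoc]
  apply mul_le_mul_of_nonneg_right _ (by positivity)
  calc _ ≤ (2 : ℝ) ^ (q * (n * (a + 1) * n ^ (a + 1))) := hL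
    _ ≤ (2 : ℝ) ^ (q * (n * (a + 1) * n ^ (a + 1))) * (ε * 2 ^ c) :=
        le_mul_of_one_le_right (by positivity) h1
    _ = ε * ((2 : ℝ) ^ (q * (n * (a + 1) * n ^ (a + 1))) * 2 ^ c) := by ring
    _ ≤ _ := by gcongr

end Analysis

theorem typical_structure_of_intersecting_families_of_subspaces
    (ε : ℝ) (hε : 0 < ε) :
    ∃ n₀ : ℕ, ∀ n : ℕ, n₀ ≤ n → ∀ q k : ℕ, IsPrimePow q → 2 ≤ k →
      ((q = 2 ∧ 2 * k + 2 ≤ n) ∨ (3 ≤ q ∧ 2 * k + 1 ≤ n)) →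
      ∀ (K : Type) [Field K] [Fintype K], Fintype.card K = q →
      ((Nat.card {𝓕 : Finset (Submodule K (Fin n → K)) //
          (∀ U ∈ 𝓕, Module.finrank K ↥U = k) ∧ IsIntersectingFam 𝓕 ∧
            ¬ IsTrivialFam 𝓕} : ℝ) ≤
        ε * gaussBinom q n 1 * (2 : ℝ) ^ gaussBinom q (n - 1) (k - 1) ∧
      (1 - ε) * gaussBinom q n 1 * (2 : ℝ) ^ gaussBinom q (n - 1) (k - 1) ≤
        (Nat.card {𝓕 : Finset (Submodule K (Fin n → K)) //
          (∀ U ∈ 𝓕, Module.finrank K ↥U = k) ∧ IsIntersectingFam 𝓕} : ℝ) ∧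
      (Nat.card {𝓕 : Finset (Submodule K (Fin n → K)) //
          (∀ U ∈ 𝓕, Module.finrank K ↥U = k) ∧ IsIntersectingFam 𝓕} : ℝ) ≤
        (1 + ε) * gaussBinom q n 1 * (2 : ℝ) ^ gaussBinom q (n - 1) (k - 1)) := by
  obtain ⟨n₀, hn₀⟩ := analytic_bound ε hε
  refine ⟨n₀, fun n hn q k _ hk h K _ _ hq => ?_⟩
  subst hq
  have hq : 2 ≤ Fintype.card K := Fintype.one_lt_card
  have hkn : 2 * k + 1 ≤ n := by omega
  set q := Fintype.card K with hqdef
  have hMlow : (q : ℝ) ^ ((k - 1) * (n - k)) ≤ gaussBinom q (n - 1) (k - 1) := by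
    have := le_gaussBinom q (n - 1) (k - 1) hq (by omega)
    rwa [show n - 1 - (k - 1) = n - k by omega] at this
  have hA := hn₀ n hn q k hq hk hkn _ hMlow
  have hq1 : (1 : ℝ) < q := by exact_mod_cast hq
  have hP1 : 1 ≤ gaussBinom q n 1 := by
    refine le_trans ?_ (le_gaussBinom q n 1 hq (by omega))
    exact one_le_pow₀ hq1.le
  have hP2 : gaussBinom q n 1 ≤ (((q : ℝ) ^ n) ^ k) ^ (n ^ k) := by
    have h2 : (2 : ℝ) ≤ q := by exact_mod_cast hq
    have h1 : gaussBinom q n 1 ≤ (q : ℝ) ^ n := by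
      rw [gaussBinom_one, div_le_iff₀ (by linarith)]
      have := one_le_pow₀ hq1.le (n := n)
      nlinarith
    refine h1.trans ?_
    rw [← pow_mul, ← pow_mul]
    apply pow_le_pow_right₀ hq1.le
    have h3 : 0 < n ^ k := Nat.pow_pos (by omega)
    exact Nat.le_mul_of_pos_right n (Nat.mul_pos (by omega) h3)
  have hM' : gaussBinom q (n - 2) (k - 2) ≤ 3 / 4 * gaussBinom q (n - 1) (k - 1) := by
    have h1 := ratio_final q n k hq h 1 le_rfl hk
    refine le_trans ?_ h1
    have h2 : 1 ≤ gaussBinom q (1 + 1) 1 :=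
      (one_le_pow₀ hq1.le).trans (le_gaussBinom q (1 + 1) 1 hq (by omega))
    have h3 : 1 ≤ gaussBinom q k 1 :=
      (one_le_pow₀ hq1.le).trans (le_gaussBinom q k 1 hq (by omega))
    have h4 := gaussBinom_pos q (n - 2) (k - 2) hq (by omega)
    rw [pow_one, ← mul_assoc]
    exact le_mul_of_one_le_left h4.le (one_le_mul_of_one_le_of_one_le h2 h3)
  have hNT := card_nontrivial_le (K := K) hk h
  have hup := card_total_le (K := K) hk (by omega : k ≤ n)
  have hlow := le_card_total (K := K) hk (by omega : k ≤ n)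
  rw [← hqdef] at hNT hup hlow
  have hX : (0 : ℝ) < (2 : ℝ) ^ gaussBinom q (n - 1) (k - 1) := by positivity
  set X := (2 : ℝ) ^ gaussBinom q (n - 1) (k - 1) with hXdef
  set P := gaussBinom q n 1
  have hεX : ε * X ≤ ε * P * X := by
    have : ε * 1 * X ≤ ε * P * X := by gcongr
    linarith
  have hsmall : P * (2 : ℝ) ^ gaussBinom q (n - 2) (k - 2) ≤ ε * X := by
    refine le_trans ?_ hA
    apply mul_le_mul hP2 _ (by positivity) (by positivity)
    exact Real.rpow_le_rpow_of_exponent_le (by norm_num) hM'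
  have hfirst := (hNT.trans hA).trans hεX
  refine ⟨hfirst, ?_, ?_⟩
  · refine le_trans ?_ hlow
    have : P * (X - ε * X) ≤ P * (X - P * (2 : ℝ) ^ gaussBinom q (n - 2) (k - 2)) := by
      gcongr
    linarith
  · linarith
end

section
/- Let ε > 0 and let n, k be integers with 2 ≤ k ≤ (n−1)/2. Set N = binom(n,k) and D = binom(n−k,k). Then every set S of vertices of the Kneser graph KG(n,k) with |S| ≥ (1+ε)·binom(n−1,k−1) induces at least (1 − 1/(1+ε))·(D·n/(N·(n−k)))·binom(|S|,2) edges. -/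
/-- The number of edges of the Kneser graph `KG(n,k)` induced by a set `S` of
`k`-element subsets of `[n]`: the number of pairs `{F₁, F₂} ⊆ S` with
`F₁ ∩ F₂ = ∅`. -/
def kneserInducedEdges (n : ℕ) (S : Finset (Finset (Fin n))) : ℕ :=
  ((S.powersetCard 2).filter
    (fun P => ∀ x ∈ P, ∀ y ∈ P, x = y ∨ x ∩ y = ∅)).card

open Finset in
/-- Up operator on set functions. -/
noncomputable def kUp {n : ℕ} (f : Finset (Fin n) → ℝ) (X : Finset (Fin n)) : ℝ :=
  ∑ x ∈ X, f (X.erase x)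

open Finset in
/-- Down operator on set functions. -/
noncomputable def kDown {n : ℕ} (f : Finset (Fin n) → ℝ) (X : Finset (Fin n)) : ℝ :=
  ∑ x ∈ Xᶜ, f (insert x X)

open Finset in
lemma k_adj {n : ℕ} (f g : Finset (Fin n) → ℝ) (j : ℕ) :
    ∑ X ∈ powersetCard (j+1) univ, kUp f X * g X
      = ∑ Y ∈ powersetCard j univ, f Y * kDown g Y := by
  simp only [kUp, kDown, Finset.sum_mul, Finset.mul_sum]
  rw [Finset.sum_sigma', Finset.sum_sigma']
  refine Finset.sum_bij' (fun p _ => ⟨p.1.erase p.2, p.2⟩) (fun p _ => ⟨insert p.2 p.1, p.2⟩)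
    ?_ ?_ ?_ ?_ ?_
  · rintro ⟨X, x⟩ h
    simp only [mem_sigma, mem_powersetCard, subset_univ, true_and, mem_compl] at h ⊢
    refine ⟨by rw [card_erase_of_mem h.2]; omega, by simp⟩
  · rintro ⟨X, x⟩ h
    simp only [mem_sigma, mem_powersetCard, subset_univ, true_and, mem_compl] at h ⊢
    refine ⟨by rw [card_insert_of_notMem h.2]; omega, by simp⟩
  · rintro ⟨X, x⟩ h
    simp only [mem_sigma] at h
    simp [insert_erase h.2]
  · rintro ⟨X, x⟩ h
    simp only [mem_sigma, mem_compl] at h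
    simp [erase_insert h.2]
  · rintro ⟨X, x⟩ h
    simp only [mem_sigma] at h
    simp [insert_erase h.2]

open Finset in
lemma k_comm {n : ℕ} (f : Finset (Fin n) → ℝ) (X : Finset (Fin n)) :
    kDown (kUp f) X = kUp (kDown f) X + ((n:ℝ) - 2 * X.card) * f X := by
  have h1 : kDown (kUp f) X
      = ∑ x ∈ Xᶜ, (f X + ∑ y ∈ X, f (insert x (X.erase y))) := by
    unfold kDown kUp
    refine sum_congr rfl fun x hx => ?_
    rw [mem_compl] at hx
    rw [sum_insert hx, erase_insert hx]
    congr 1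
    refine sum_congr rfl fun y hy => ?_
    rw [erase_insert_of_ne]
    rintro rfl; exact hx hy
  have h2 : kUp (kDown f) X
      = ∑ y ∈ X, (f X + ∑ x ∈ Xᶜ, f (insert x (X.erase y))) := by
    unfold kDown kUp
    refine sum_congr rfl fun y hy => ?_
    have : (X.erase y)ᶜ = insert y Xᶜ := by
      ext z; simp only [mem_compl, mem_erase, mem_insert]; tauto
    beta_reduce
    rw [this, sum_insert (by simpa using hy), insert_erase hy]
  rw [h1, h2, sum_add_distrib, sum_add_distrib, sum_comm]
  simp only [sum_const, nsmul_eq_mul, card_compl, Fintype.card_fin]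
  rw [Nat.cast_sub (by simpa using card_le_univ X)]
  ring

open Finset in
lemma k_sum_up {n : ℕ} (f : Finset (Fin n) → ℝ) (j : ℕ) :
    ∑ X ∈ powersetCard (j+1) univ, kUp f X
      = ((n:ℝ) - j) * ∑ Y ∈ powersetCard j univ, f Y := by
  have := k_adj f (fun _ => 1) j
  simp only [mul_one] at this
  rw [this, mul_sum]
  refine sum_congr rfl fun Y hY => ?_
  rw [mem_powersetCard] at hY
  have hle := card_le_univ Y
  simp only [Fintype.card_fin] at hle
  simp only [kDown, sum_const, nsmul_eq_mul, card_compl, Fintype.card_fin, mul_one]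
  rw [Nat.cast_sub hle, hY.2]; ring

open Finset in
lemma k_sum_down {n : ℕ} (f : Finset (Fin n) → ℝ) (j : ℕ) :
    ∑ X ∈ powersetCard j univ, kDown f X
      = ((j:ℝ) + 1) * ∑ Y ∈ powersetCard (j+1) univ, f Y := by
  have := k_adj (fun _ => 1) f j
  simp only [one_mul] at this
  rw [← this, mul_sum]
  refine sum_congr rfl fun Y hY => ?_
  rw [mem_powersetCard] at hY
  simp [kUp, hY.2]

open Finset in
lemma k_level {n : ℕ} (j : ℕ) (hj : j + 1 ≤ n) : ∀ (f : Finset (Fin n) → ℝ),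
    ∑ X ∈ powersetCard j univ, f X = 0 →
    ∑ X ∈ powersetCard (j+1) univ, (kUp f X)^2
      ≤ (j:ℝ) * ((n:ℝ) - j - 1) * ∑ X ∈ powersetCard j univ, (f X)^2 := by
  induction j with
  | zero =>
    intro f hf
    simp only [powersetCard_zero, sum_singleton] at hf
    simp only [Nat.cast_zero, zero_mul]
    refine (sum_eq_zero fun X hX => ?_).le
    simp only [zero_add, mem_powersetCard] at hX
    obtain ⟨a, rfl⟩ := card_eq_one.1 hX.2
    simp [kUp, hf]
  | succ j ih =>
    intro f hf
    have e1 : ∑ X ∈ powersetCard (j+1+1) univ, (kUp f X)^2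
        = ∑ X ∈ powersetCard j univ, (kDown f X)^2
          + ((n:ℝ) - 2 * (j+1)) * ∑ X ∈ powersetCard (j+1) univ, (f X)^2 := by
      simp only [pow_two]
      rw [k_adj f (kUp f) (j+1), ← k_adj (kDown f) f j, mul_sum, ← sum_add_distrib]
      refine sum_congr rfl fun X hX => ?_
      rw [mem_powersetCard] at hX
      rw [k_comm, hX.2]; push_cast; ring
    have hd := ih (by omega) (kDown f) (by rw [k_sum_down, hf, mul_zero])
    set A := ∑ X ∈ powersetCard j univ, (kDown f X)^2 with hA
    set B := ∑ X ∈ powersetCard (j+1) univ, (f X)^2 with hB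
    have hA0 : 0 ≤ A := sum_nonneg fun _ _ => sq_nonneg _
    have hB0 : 0 ≤ B := sum_nonneg fun _ _ => sq_nonneg _
    have hAB : A = ∑ X ∈ powersetCard (j+1) univ, kUp (kDown f) X * f X := by
      rw [k_adj, hA]; simp only [pow_two]
    have cs := sum_mul_sq_le_sq_mul_sq (powersetCard (j+1) univ) (kUp (kDown f)) f
    rw [← hAB, ← hB] at cs
    have h3 : A^2 ≤ ((j:ℝ) * ((n:ℝ) - j - 1) * A) * B :=
      cs.trans (mul_le_mul_of_nonneg_right hd hB0)
    have hn : (j:ℝ) + 2 ≤ n := by exact_mod_cast hj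
    have hc : 0 ≤ (j:ℝ) * ((n:ℝ) - j - 1) := mul_nonneg (by positivity) (by linarith)
    have h4 : A ≤ (j:ℝ) * ((n:ℝ) - j - 1) * B := by
      rcases hA0.eq_or_lt with h | h
      · rw [← h]; positivity
      · refine le_of_mul_le_mul_left ?_ h
        nlinarith
    rw [e1]; push_cast; nlinarith

/-- Sum of `f` over `k`-subsets. -/
noncomputable def kZ {n : ℕ} (k : ℕ) (f : Finset (Fin n) → ℝ) (X : Finset (Fin n)) : ℝ :=
  ∑ Y ∈ X.powersetCard k, f Y

open Finset in
lemma k_up_Z {n : ℕ} (k : ℕ) (f : Finset (Fin n) → ℝ) (X : Finset (Fin n)) :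
    kUp (kZ k f) X = ((X.card : ℝ) - k) * kZ k f X := by
  unfold kUp kZ
  rw [mul_sum, sum_comm' (t' := X.powersetCard k) (s' := fun Y => X \ Y)]
  · refine sum_congr rfl fun Y hY => ?_
    rw [mem_powersetCard] at hY
    rw [sum_const, nsmul_eq_mul, card_sdiff_of_subset hY.1, Nat.cast_sub (card_le_card hY.1), hY.2]
  · intro x Y
    simp only [mem_powersetCard, mem_sdiff, subset_erase]
    tauto

open Finset in
lemma k_Z_bound {n k : ℕ} (hk : 1 ≤ k) (f : Finset (Fin n) → ℝ)
    (hf : ∑ X ∈ powersetCard k univ, f X = 0) (m : ℕ) (hkm : k ≤ m) :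
    m ≤ n → (∑ X ∈ powersetCard m univ, kZ k f X = 0 ∧
    ∑ X ∈ powersetCard m univ, (kZ k f X)^2
      ≤ ((m-1).choose (k-1) : ℝ) * ((n-k-1).choose (m-k) : ℝ)
        * ∑ X ∈ powersetCard k univ, (f X)^2) := by
  induction m, hkm using Nat.le_induction with
  | base =>
    intro _
    have hz : ∀ X ∈ powersetCard k (univ : Finset (Fin n)), kZ k f X = f X := by
      intro X hX
      rw [mem_powersetCard] at hX
      have : X.powersetCard k = {X} := by rw [← hX.2]; exact powersetCard_self X
      simp [kZ, this]
    refine ⟨by rw [sum_congr rfl hz, hf], ?_⟩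
    rw [sum_congr rfl fun X hX => by rw [hz X hX]]
    simp
  | succ m hkm ih =>
    intro hm
    obtain ⟨h0, h1⟩ := ih (by omega)
    have hup : ∀ X ∈ powersetCard (m+1) (univ : Finset (Fin n)),
        kUp (kZ k f) X = ((m:ℝ) + 1 - k) * kZ k f X := by
      intro X hX
      rw [mem_powersetCard] at hX
      rw [k_up_Z, hX.2]; push_cast; ring
    have hkm' : (k:ℝ) ≤ m := by exact_mod_cast hkm
    have hc : (0:ℝ) < (m:ℝ) + 1 - k := by linarith
    constructor
    · have := k_sum_up (kZ k f) m
      rw [h0, mul_zero, sum_congr rfl hup, ← mul_sum] at this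
      exact (mul_eq_zero.1 this).resolve_left hc.ne'
    · have h2 := k_level m hm (kZ k f) h0
      rw [sum_congr rfl fun X hX => by rw [hup X hX, mul_pow], ← mul_sum] at h2
      have hmn : (m:ℝ) + 1 ≤ n := by exact_mod_cast hm
      have h3 : ((m:ℝ) + 1 - k)^2 * ∑ X ∈ powersetCard (m+1) univ, (kZ k f X)^2 ≤ _ :=
        h2.trans (mul_le_mul_of_nonneg_left h1 (mul_nonneg (by positivity) (by linarith)))
      have e1 : (m.choose (k-1) : ℝ) * ((m:ℝ) + 1 - k) = m * ((m-1).choose (k-1)) := by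
        obtain ⟨a, rfl⟩ : ∃ a, m = a + 1 := ⟨m-1, by omega⟩
        obtain ⟨b, rfl⟩ : ∃ b, k = b + 1 := ⟨k-1, by omega⟩
        have h := Nat.choose_mul_succ_eq a b
        have hb : b ≤ a + 1 := by omega
        have h' : ((a.choose b * (a+1) : ℕ) : ℝ) = (((a+1).choose b * (a+1-b) : ℕ) : ℝ) := by
          rw [h]
        rw [Nat.cast_mul, Nat.cast_mul, Nat.cast_sub hb] at h'
        push_cast at h' ⊢
        linarith
      have e2 : ((n-k-1).choose (m+1-k) : ℝ) * ((m:ℝ) + 1 - k)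
          = ((n:ℝ) - m - 1) * ((n-k-1).choose (m-k)) := by
        have h := Nat.choose_succ_right_eq (n-k-1) (m-k)
        have h' : (((n-k-1).choose (m-k+1) * (m-k+1) : ℕ) : ℝ)
          = (((n-k-1).choose (m-k) * (n-k-1-(m-k)) : ℕ) : ℝ) := by rw [h]
        rw [show n-k-1-(m-k) = n-(m+1) by omega, show m - k + 1 = m+1-k by omega,
          Nat.cast_mul, Nat.cast_mul, Nat.cast_sub (by omega), Nat.cast_sub (by omega)] at h'
        push_cast at h'
        linarith
      refine le_of_mul_le_mul_left (h3.trans (le_of_eq ?_)) (pow_pos hc 2)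
      simp only [Nat.add_sub_cancel]
      linear_combination (-(∑ X ∈ powersetCard k univ, (f X)^2)) *
        ((n-k-1).choose (m+1-k) * ((m:ℝ)+1-k) * e1 + m * ((m-1).choose (k-1)) * e2)

open Finset in
lemma k_edges {n k : ℕ} (hk : 1 ≤ k) (S : Finset (Finset (Fin n)))
    (hS : ∀ e ∈ S, e.card = k) :
    ∑ F ∈ S, (S.filter (fun G => Disjoint F G)).card ≤ 2 * kneserInducedEdges n S := by
  unfold kneserInducedEdges
  rw [← card_sigma]
  refine card_le_mul_card_image_of_maps_to (f := fun p => {p.1, p.2}) ?_ 2 ?_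
  · rintro ⟨F, G⟩ h
    simp only [mem_sigma, mem_filter] at h
    obtain ⟨hF, hG, hd⟩ := h
    have hne : F ≠ G := by
      rintro rfl
      have := hS F hF
      rw [disjoint_self_iff_empty] at hd
      rw [hd] at this; simp at this; omega
    simp only [mem_filter, mem_powersetCard, card_pair hne, and_true, mem_insert, mem_singleton]
    refine ⟨?_, ?_⟩
    · intro x hx; simp only [mem_insert, mem_singleton] at hx
      rcases hx with rfl | rfl <;> assumption
    · have h1 := disjoint_iff_inter_eq_empty.1 hd
      have h2 := disjoint_iff_inter_eq_empty.1 hd.symm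
      rintro x (rfl | rfl) y (rfl | rfl) <;> simp_all
  · intro b hb
    simp only [mem_filter, mem_powersetCard] at hb
    obtain ⟨u, v, huv, rfl⟩ := card_eq_two.1 hb.1.2
    refine (card_le_card (t := {⟨u, v⟩, ⟨v, u⟩}) ?_).trans card_le_two
    rintro ⟨F, G⟩ h
    simp only [mem_filter, mem_sigma] at h
    have h2 := h.2
    have hF : F ∈ ({u, v} : Finset _) := by rw [← h2]; simp
    have hG : G ∈ ({u, v} : Finset _) := by rw [← h2]; simp
    have hu : u ∈ ({F, G} : Finset _) := by rw [h2]; simp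
    have hv : v ∈ ({F, G} : Finset _) := by rw [h2]; simp
    simp only [mem_insert, mem_singleton] at hF hG hu hv ⊢
    rcases hF with rfl | rfl <;> rcases hG with rfl | rfl <;> simp_all

open Finset in
lemma k_hoffman {n k : ℕ} (hk : 1 ≤ k) (hkn : 2 * k + 1 ≤ n)
    (S : Finset (Finset (Fin n))) (hS : ∀ e ∈ S, e.card = k) :
    (S.card : ℝ) / n.choose k * S.card * (n-k).choose k
      - (n-k-1).choose (k-1) * (S.card - (S.card:ℝ)^2 / n.choose k)
    ≤ 2 * (kneserInducedEdges n S : ℝ) := by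
  set N : ℝ := ((n.choose k : ℕ) : ℝ) with hN
  have hNpos : 0 < N := by
    rw [hN]; exact_mod_cast Nat.choose_pos (by omega)
  set p : ℝ := (S.card : ℝ) / N with hp
  set L : ℝ := (((n-k-1).choose (k-1) : ℕ) : ℝ) with hL
  let f : Finset (Fin n) → ℝ := fun X => (if X ∈ S then 1 else 0) - p
  have hSsub : S ⊆ powersetCard k univ := fun X hX => by simp [hS X hX]
  have hcard : ((powersetCard k (univ : Finset (Fin n))).card : ℝ) = N := by
    simp [hN]
  have hpN : p * N = S.card := div_mul_cancel₀ _ hNpos.ne'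
  have hfilt : (powersetCard k univ).filter (fun X => X ∈ S) = S := by
    ext X; simp only [mem_filter]; exact ⟨fun h => h.2, fun h => ⟨hSsub h, h⟩⟩
  have hind : ∑ X ∈ powersetCard k univ, (if X ∈ S then (1:ℝ) else 0) = S.card := by
    rw [sum_boole, hfilt]
  have hf0 : ∑ X ∈ powersetCard k univ, f X = 0 := by
    simp only [f, sum_sub_distrib, hind, sum_const, nsmul_eq_mul, hcard]
    linarith
  have hf2 : ∑ X ∈ powersetCard k univ, (f X)^2 = S.card - (S.card:ℝ)^2 / N := by
    have : ∀ X, (f X)^2 = (1 - 2*p) * (if X ∈ S then (1:ℝ) else 0) + p^2 := by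
      intro X; simp only [f]; split_ifs <;> ring
    simp only [this, sum_add_distrib, ← mul_sum, hind, sum_const, nsmul_eq_mul, hcard]
    rw [hp]; field_simp; ring
  obtain ⟨hz0, hz2⟩ := k_Z_bound hk f hf0 (n-k) (by omega) (by omega)
  have hcompl : ∀ g : Finset (Fin n) → ℝ,
      ∑ X ∈ powersetCard k univ, g Xᶜ = ∑ X ∈ powersetCard (n-k) univ, g X := by
    intro g
    refine sum_bij' (fun X _ => Xᶜ) (fun X _ => Xᶜ) ?_ ?_ ?_ ?_ ?_
    · intro X hX; simp only [mem_powersetCard, subset_univ, true_and] at hX ⊢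
      rw [card_compl, hX, Fintype.card_fin]
    · intro X hX; simp only [mem_powersetCard, subset_univ, true_and] at hX ⊢
      rw [card_compl, hX, Fintype.card_fin]; omega
    · simp
    · simp
    · simp
  rw [hf2] at hz2
  rw [show n - k - k = (n-k-1) - (k-1) by omega, Nat.choose_symm (by omega), ← hL] at hz2
  have cs := sum_mul_sq_le_sq_mul_sq (powersetCard k univ) f (fun X => kZ k f Xᶜ)
  rw [hf2, hcompl (fun X => (kZ k f X)^2)] at cs
  set Q := (S.card : ℝ) - (S.card:ℝ)^2 / N with hQ
  have hQ0 : 0 ≤ Q := by rw [← hf2]; exact sum_nonneg fun _ _ => sq_nonneg _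
  have hL0 : 0 ≤ L := by rw [hL]; positivity
  have hmain : ∑ X ∈ powersetCard k univ, f X * kZ k f Xᶜ ≥ -(L * Q) := by
    have : (∑ X ∈ powersetCard k univ, f X * kZ k f Xᶜ)^2 ≤ (L * Q)^2 := by
      refine cs.trans ((mul_le_mul_of_nonneg_left hz2 hQ0).trans (le_of_eq (by ring)))
    exact (abs_le_of_sq_le_sq' this (by positivity)).1
  have hval : ∑ X ∈ powersetCard k univ, f X * kZ k f Xᶜ
      = ∑ F ∈ S, ((S.filter (fun G => Disjoint F G)).card : ℝ)
        - p * S.card * (n-k).choose k := by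
    have e : ∀ X, f X * kZ k f Xᶜ = (if X ∈ S then kZ k f Xᶜ else 0) - p * kZ k f Xᶜ := by
      intro X; simp only [f]; split_ifs <;> ring
    simp only [e, sum_sub_distrib, ← mul_sum]
    rw [hcompl (kZ k f), hz0, ← sum_filter, hfilt, mul_zero, sub_zero]
    have e2 : ∀ F ∈ S, kZ k f Fᶜ
        = ((S.filter (fun G => Disjoint F G)).card : ℝ) - p * (n-k).choose k := by
      intro F hF
      simp only [kZ, f, sum_sub_distrib, sum_const, nsmul_eq_mul, card_powersetCard,
        card_compl, Fintype.card_fin, hS F hF, sum_boole]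
      rw [mul_comm p]
      congr 3
      ext G
      simp only [mem_filter, mem_powersetCard]
      rw [subset_compl_comm, ← le_iff_subset, le_compl_iff_disjoint_right]
      exact ⟨fun h => ⟨h.2, h.1.1⟩, fun h => ⟨⟨h.2, hS G h.1⟩, h.1⟩⟩
    rw [sum_congr rfl e2, sum_sub_distrib, sum_const, nsmul_eq_mul]
    ring
  have hE : ∑ F ∈ S, ((S.filter (fun G => Disjoint F G)).card : ℝ)
      ≤ 2 * (kneserInducedEdges n S : ℝ) := by exact_mod_cast k_edges hk S hS
  rw [hval] at hmain
  linarith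

theorem kneser_supersaturation (ε : ℝ) (hε : 0 < ε) (n k : ℕ)
    (hk : 2 ≤ k) (hkn : 2 * k ≤ n - 1)
    (S : Finset (Finset (Fin n))) (hS : ∀ e ∈ S, e.card = k)
    (hScard : (1 + ε) * ((n - 1).choose (k - 1) : ℝ) ≤ (S.card : ℝ)) :
    (1 - 1 / (1 + ε)) *
        (((n - k).choose k : ℝ) * (n : ℝ) / ((n.choose k : ℝ) * ((n : ℝ) - (k : ℝ)))) *
        (S.card.choose 2 : ℝ) ≤
      (kneserInducedEdges n S : ℝ) := by
  have hH := k_hoffman (k := k) (n := n) (by omega) (by omega) S hS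
  have hkn' : 2 * (k:ℝ) + 1 ≤ n := by
    have : 2 * k + 1 ≤ n := by omega
    exact_mod_cast this
  have hk' : (2:ℝ) ≤ k := by exact_mod_cast hk
  have hN : (0:ℝ) < n.choose k := by exact_mod_cast Nat.choose_pos (by omega)
  have hnk : (0:ℝ) < (n:ℝ) - k := by linarith
  have hn0 : (0:ℝ) < n := by linarith
  -- binomial identities
  have hc1 : (n:ℝ) * (n-1).choose (k-1) = n.choose k * k := by
    obtain ⟨a, rfl⟩ : ∃ a, n = a + 1 := ⟨n-1, by omega⟩
    obtain ⟨b, rfl⟩ : ∃ b, k = b + 1 := ⟨k-1, by omega⟩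
    exact_mod_cast Nat.add_one_mul_choose_eq a b
  have hc2 : ((n:ℝ) - k) * (n-k-1).choose (k-1) = (n-k).choose k * k := by
    rw [← Nat.cast_sub (by omega)]
    obtain ⟨a, ha⟩ : ∃ a, n - k = a + 1 := ⟨n-k-1, by omega⟩
    rw [ha]
    obtain ⟨b, rfl⟩ : ∃ b, k = b + 1 := ⟨k-1, by omega⟩
    exact_mod_cast Nat.add_one_mul_choose_eq a b
  set N : ℝ := ((n.choose k : ℕ) : ℝ)
  set C : ℝ := (((n-1).choose (k-1) : ℕ) : ℝ)
  set L : ℝ := (((n-k-1).choose (k-1) : ℕ) : ℝ)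
  set D : ℝ := (((n-k).choose k : ℕ) : ℝ) with hD
  have hD0 : 0 ≤ D := by rw [hD]; positivity
  set s : ℝ := (S.card : ℝ) with hs
  have hs0 : 0 ≤ s := by rw [hs]; positivity
  have hch : (S.card.choose 2 : ℝ) ≤ s^2 / 2 := by
    rw [Nat.cast_choose_two]; nlinarith
  have hLe : L = D * k / ((n:ℝ) - k) := by rw [eq_div_iff hnk.ne']; linarith
  have hCe : C = N * k / n := by rw [eq_div_iff hn0.ne']; linarith
  have hid : s / N * s * D - L * (s - s^2 / N) = D * n / (N * ((n:ℝ) - k)) * (s * (s - C)) := by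
    rw [hLe, hCe]; field_simp; ring
  rw [hid] at hH
  have h1e : 0 < 1 + ε := by linarith
  have hCle : C ≤ s * (1 / (1+ε)) := by
    rw [mul_one_div, le_div_iff₀ h1e]; linarith
  have hR : 0 ≤ D * n / (N * ((n:ℝ) - k)) := by positivity
  have ha : 0 ≤ 1 - 1 / (1+ε) := by
    rw [sub_nonneg, div_le_one h1e]; linarith
  set R := D * n / (N * ((n:ℝ) - k))
  set a := 1 / (1+ε)
  have h5 : (1 - a) * R * (S.card.choose 2 : ℝ) ≤ (1 - a) * R * (s^2/2) :=
    mul_le_mul_of_nonneg_left hch (mul_nonneg ha hR)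
  have h6 : R * (s * ((1 - a) * s)) ≤ R * (s * (s - C)) := by
    gcongr; linarith
  nlinarith
end

section
/- Let n ≥ t ≥ 1 be integers and let 𝓕 ⊆ S_n be a maximal t-intersecting family. Then there exists a subfamily 𝓕₀ ⊆ 𝓕 with |𝓕₀| ≤ binom(2n−2t+1, n−t) such that 𝓕 = {π ∈ S_n : |{i ∈ [n] : π(i) = σ(i)}| ≥ t for all σ ∈ 𝓕₀}. -/
/-- The number of indices on which two permutations of `Fin n` agree. -/
def agreements {n : ℕ} (σ π : Equiv.Perm (Fin n)) : ℕ :=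
  (Finset.univ.filter (fun i => σ i = π i)).card

/-- A family of permutations is `t`-intersecting if any two of its members agree
on at least `t` indices. -/
def IsTIntersecting {n : ℕ} (t : ℕ) (F : Finset (Equiv.Perm (Fin n))) : Prop :=
  ∀ σ ∈ F, ∀ π ∈ F, t ≤ agreements σ π

namespace SkewFuredi

/-- Row index type: `2k` common coordinates and two private blocks of `s` coordinates. -/
abbrev RowIx (k s : ℕ) := (Fin k ⊕ Fin k) ⊕ (Fin s ⊕ Fin s)

/-- Coordinates of the generic vectors. -/
abbrev CoIx (k s : ℕ) := (Fin k ⊕ Fin k) ⊕ Fin s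

/-- First embedding of a generic vector. -/
def vecA {K : Type*} [Zero K] {k s : ℕ} (z : CoIx k s → K) : RowIx k s → K :=
  Sum.elim (fun x => z (Sum.inl x)) (Sum.elim (fun y => z (Sum.inr y)) (fun _ => 0))

/-- Second embedding of a generic vector. -/
def vecB {K : Type*} [Zero K] {k s : ℕ} (z : CoIx k s → K) : RowIx k s → K :=
  Sum.elim (fun x => z (Sum.inl x)) (Sum.elim (fun _ => 0) (fun y => z (Sum.inr y)))

/-- The square matrix with rows of type B, then rows of type A. -/
def mat {K : Type*} [Zero K] {k s n : ℕ} (e : Fin n ⊕ Fin n ≃ RowIx k s)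
    (u w : Fin n → CoIx k s → K) : Matrix (Fin n ⊕ Fin n) (Fin n ⊕ Fin n) K :=
  fun r c => (Sum.elim (fun i => vecB (w i)) (fun i => vecA (u i)) r : RowIx k s → K) (e c)

lemma mat_map {K L : Type*} [CommRing K] [CommRing L] (f : K →+* L) {k s n : ℕ}
    (e : Fin n ⊕ Fin n ≃ RowIx k s) (u w : Fin n → CoIx k s → K) :
    mat e (fun i j => f (u i j)) (fun i j => f (w i j)) = (mat e u w).map f := by
  ext r c
  rcases r with r | r <;> simp only [mat, Matrix.map_apply, Sum.elim_inl, Sum.elim_inr] <;>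
    rcases e c with x | y | y <;> simp [vecA, vecB]

/-- Vanishing: too many common vectors force the determinant to be zero. -/
lemma det_mat_eq_zero {K : Type*} [Field K] {k s n : ℕ}
    (e : Fin n ⊕ Fin n ≃ RowIx k s) (u w : Fin n → CoIx k s → K)
    (I : Finset (Fin n)) (hI : s < I.card) (huw : ∀ i ∈ I, u i = w i) :
    (mat e u w).det = 0 := by
  classical
  have hdep : ¬ LinearIndependent K (fun i : I => (fun y : Fin s => u i (Sum.inr y))) := by
    intro h
    have := h.fintype_card_le_finrank
    simp at this
    omega
  rw [Fintype.not_linearIndependent_iff] at hdep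
  obtain ⟨g, hg, i0, hi0⟩ := hdep
  let c : Fin n → K := fun i => if h : i ∈ I then g ⟨i, h⟩ else 0
  have hc : ∀ i : I, c i = g i := fun i => by simp [c]
  have hsum : ∀ y : Fin s, ∑ i, c i * u i (Sum.inr y) = 0 := by
    intro y
    have h1 := congrFun hg y
    simp only [Finset.sum_apply, Pi.smul_apply, smul_eq_mul, Pi.zero_apply] at h1
    rw [← h1, ← Finset.sum_subset (Finset.subset_univ I), ← Finset.sum_coe_sort I]
    · exact Finset.sum_congr rfl fun i _ => by rw [hc]
    · intro i _ hi
      simp [c, hi]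
  have hcw : ∀ i q, c i * w i q = c i * u i q := by
    intro i q
    by_cases h : i ∈ I
    · rw [huw i h]
    · simp [c, h]
  rw [← Matrix.exists_vecMul_eq_zero_iff]
  refine ⟨Sum.elim (fun i => - c i) c, ?_, ?_⟩
  · intro h
    have := congrFun h (Sum.inr i0)
    simp [hc] at this
    exact hi0 this
  · ext q
    simp only [Matrix.vecMul, dotProduct, Fintype.sum_sum_type, mat, Sum.elim_inl, Sum.elim_inr,
      Pi.zero_apply]
    rcases e q with x | y | y
    · simp [vecA, vecB, hcw]
    · simp [vecA, vecB, hsum]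
    · simp [vecA, vecB, hcw, hsum]

/-- Non-vanishing for the generic vectors. -/
lemma det_mat_generic_ne_zero {k s n : ℕ} (hn : n = s + k)
    (e : Fin n ⊕ Fin n ≃ RowIx k s) (P Q : Equiv.Perm (Fin n)) (hPQ : agreements P Q ≤ s) :
    (mat e (fun i q => (MvPolynomial.X ((i, P i), q) :
        MvPolynomial ((Fin n × Fin n) × CoIx k s) ℚ))
      (fun i q => MvPolynomial.X ((i, Q i), q))).det ≠ 0 := by
  classical
  obtain ⟨J, hJ, -, hJc⟩ := Finset.exists_subsuperset_card_eq
    (Finset.subset_univ (Finset.univ.filter (fun i => P i = Q i))) (n := s) hPQ (by simp; omega)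
  have hJs : Fintype.card J = s := by simpa using hJc
  have hJk : Fintype.card {i // i ∉ J} = k := by
    rw [Fintype.card_subtype_compl]; simp; omega
  let g : Fin n ≃ Fin s ⊕ Fin k := (Equiv.sumCompl (fun i => i ∈ J)).symm.trans
    (Equiv.sumCongr (Fintype.equivFinOfCardEq hJs) (Fintype.equivFinOfCardEq hJk))
  have hg : ∀ i, P i = Q i → ∃ j, g i = Sum.inl j := by
    intro i hi
    have hiJ : i ∈ J := hJ (by simp [hi])
    refine ⟨Fintype.equivFinOfCardEq hJs ⟨i, hiJ⟩, ?_⟩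
    simp [g, Equiv.sumCompl_symm_apply_of_pos hiJ]
  let pt : Fin n → Fin n → CoIx k s := fun i d =>
    Sum.elim (fun j => Sum.inr j)
      (fun l => Sum.inl (if d = P i then Sum.inl l else Sum.inr l)) (g i)
  let v : (Fin n × Fin n) × CoIx k s → ℚ := fun p => if pt p.1.1 p.1.2 = p.2 then 1 else 0
  let e' : Fin n ⊕ Fin n ≃ RowIx k s :=
    (Equiv.sumCongr g g).trans
      { toFun := Sum.elim
          (Sum.elim (fun j => Sum.inr (Sum.inr j)) (fun l => Sum.inl (Sum.inr l)))
          (Sum.elim (fun j => Sum.inr (Sum.inl j)) (fun l => Sum.inl (Sum.inl l)))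
        invFun := Sum.elim
          (Sum.elim (fun l => Sum.inr (Sum.inr l)) (fun l => Sum.inl (Sum.inr l)))
          (Sum.elim (fun j => Sum.inr (Sum.inl j)) (fun j => Sum.inl (Sum.inl j)))
        left_inv := by rintro ((_ | _) | (_ | _)) <;> rfl
        right_inv := by rintro ((_ | _) | (_ | _)) <;> rfl }
  intro h0
  have h1 := congrArg (MvPolynomial.eval v) h0
  rw [RingHom.map_det, RingHom.mapMatrix_apply, ← mat_map, map_zero] at h1
  have h2 : mat e (fun i q => MvPolynomial.eval v (MvPolynomial.X ((i, P i), q)))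
      (fun i q => MvPolynomial.eval v (MvPolynomial.X ((i, Q i), q)))
      = (1 : Matrix (RowIx k s) (RowIx k s) ℚ).submatrix e' e := by
    ext r c
    rcases r with i | i
    · rcases hgi : g i with j | l <;> rcases hc : e c with (x | x) | x | x <;>
        simp [mat, vecA, vecB, e', v, pt, hgi, hc, Matrix.one_apply]
      all_goals
        have : Q i ≠ P i := fun h => by
          obtain ⟨j, hj⟩ := hg i h.symm
          rw [hgi] at hj; cases hj
        simp [this]
    · rcases hgi : g i with j | l <;> rcases hc : e c with (x | x) | x | x <;>
        simp [mat, vecA, vecB, e', v, pt, hgi, hc, Matrix.one_apply]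
  rw [h2] at h1
  have h3 : IsUnit ((1 : Matrix (RowIx k s) (RowIx k s) ℚ).submatrix e' e) := by
    rw [Matrix.isUnit_submatrix_equiv]; exact isUnit_one
  rw [Matrix.isUnit_iff_isUnit_det, h1] at h3
  exact not_isUnit_zero h3

/-- A basis vector. -/
abbrev bv (K : Type*) [Field K] {k s : ℕ} (q : CoIx k s) : CoIx k s → K := Pi.single q 1

/-- The determinant as a multilinear map in the rows of type A. -/
noncomputable def detA {K : Type*} [Field K] {k s n : ℕ}
    (e : Fin n ⊕ Fin n ≃ RowIx k s) (w : Fin n → CoIx k s → K) :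
    MultilinearMap K (fun _ : Fin n => CoIx k s → K) K where
  toFun u := (mat e u w).det
  map_update_add' := by
    intro inst u i x y
    obtain rfl : inst = instDecidableEqFin n := Subsingleton.elim _ _
    have key : ∀ z : CoIx k s → K, mat e (Function.update u i z) w =
        (mat e u w).updateRow (Sum.inr i) (fun c => vecA z (e c)) := by
      intro z
      ext r c
      rcases r with r | r
      · simp [mat]
      · by_cases h : r = i
        · subst h; simp [mat]
        · simp [mat, h]
    rw [key, key, key, ← Matrix.det_updateRow_add]
    congr 2
    ext c
    rcases hc : e c with q | q | q <;> simp [vecA, hc]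
  map_update_smul' := by
    intro inst u i a y
    obtain rfl : inst = instDecidableEqFin n := Subsingleton.elim _ _
    have key : ∀ z : CoIx k s → K, mat e (Function.update u i z) w =
        (mat e u w).updateRow (Sum.inr i) (fun c => vecA z (e c)) := by
      intro z
      ext r c
      rcases r with r | r
      · simp [mat]
      · by_cases h : r = i
        · subst h; simp [mat]
        · simp [mat, h]
    rw [key, key, smul_eq_mul, ← Matrix.det_updateRow_smul]
    congr 2
    ext c
    rcases hc : e c with q | q | q <;> simp [vecA, hc]

lemma detA_apply {K : Type*} [Field K] {k s n : ℕ}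
    (e : Fin n ⊕ Fin n ≃ RowIx k s) (w u : Fin n → CoIx k s → K) :
    detA e w u = (mat e u w).det := rfl

lemma detA_expand {K : Type*} [Field K] {k s n : ℕ}
    (e : Fin n ⊕ Fin n ≃ RowIx k s) (w u : Fin n → CoIx k s → K) :
    (mat e u w).det = ∑ f : Fin n → CoIx k s, (∏ i, u i (f i)) *
      (mat e (fun i => bv K (f i)) w).det := by
  have hu : u = fun i => ∑ q, u i q • bv K q := by
    ext i q
    simp [Pi.single_apply]
  rw [← detA_apply]
  conv_lhs => rw [hu]
  rw [MultilinearMap.map_sum]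
  refine Finset.sum_congr rfl fun f _ => ?_
  rw [MultilinearMap.map_smul_univ, smul_eq_mul, detA_apply]

lemma det_noninj {K : Type*} [Field K] {k s n : ℕ}
    (e : Fin n ⊕ Fin n ≃ RowIx k s) (w : Fin n → CoIx k s → K) (f : Fin n → CoIx k s)
    (hf : ¬ Function.Injective f) : (mat e (fun i => bv K (f i)) w).det = 0 := by
  simp only [Function.Injective, not_forall] at hf
  obtain ⟨a, b, hab, hne⟩ := hf
  refine Matrix.det_zero_of_row_eq (i := Sum.inr a) (j := Sum.inr b) (by simpa using hne) ?_
  ext c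
  simp [mat, hab]

lemma det_notfull {K : Type*} [Field K] {k s n : ℕ}
    (e : Fin n ⊕ Fin n ≃ RowIx k s) (w : Fin n → CoIx k s → K) (f : Fin n → CoIx k s)
    (y : Fin s) (hy : ∀ i, f i ≠ Sum.inr y) : (mat e (fun i => bv K (f i)) w).det = 0 := by
  refine Matrix.det_eq_zero_of_column_eq_zero (e.symm (Sum.inr (Sum.inl y))) ?_
  rintro (i | i)
  · simp [mat, vecB]
  · simp [mat, vecA, Pi.single_apply, (hy i).symm]

lemma det_perm {K : Type*} [Field K] {k s n : ℕ}
    (e : Fin n ⊕ Fin n ≃ RowIx k s) (w u : Fin n → CoIx k s → K) (p : Equiv.Perm (Fin n)) :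
    (mat e (fun i => u (p i)) w).det = (Equiv.Perm.sign p : ℤ) * (mat e u w).det := by
  have : mat e (fun i => u (p i)) w
      = (mat e u w).submatrix (Equiv.sumCongr (Equiv.refl (Fin n)) p) id := by
    ext r c
    rcases r with r | r <;> simp [mat]
  have hs : Equiv.Perm.sign (Equiv.sumCongr (Equiv.refl (Fin n)) p) = Equiv.Perm.sign p := by
    have := Equiv.Perm.sign_sumCongr (1 : Equiv.Perm (Fin n)) p
    exact this.trans (by simp)
  rw [this, Matrix.det_permute, hs]

/-- Row space bound. -/
lemma exists_spanning {K : Type*} [Field K] {k s n m : ℕ} (hn : n = s + k)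
    (e : Fin n ⊕ Fin n ≃ RowIx k s) (w : Fin m → Fin n → CoIx k s → K) :
    ∃ T : Finset (Fin m → K), T.card ≤ (2 * k).choose k ∧
      ∀ u : Fin n → CoIx k s → K,
        (fun j => (mat e u (w j)).det) ∈ Submodule.span K (T : Set (Fin m → K)) := by
  classical
  let G : (Fin n → CoIx k s) → Fin m → K := fun f j => (mat e (fun i => bv K (f i)) (w j)).det
  let good : Finset (Fin k ⊕ Fin k) → (Fin n → CoIx k s) → Prop := fun S f =>
    Function.Injective f ∧ Set.range f = {q | ∀ x, q = Sum.inl x → x ∈ S}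
  have hS : ∀ S, ∃ v : Fin m → K, ∀ f, good S f → G f ∈ Submodule.span K {v} := by
    intro S
    by_cases h : ∃ f, good S f
    · obtain ⟨f0, h0, h0r⟩ := h
      refine ⟨G f0, ?_⟩
      rintro f ⟨hf, hfr⟩
      have hr : Set.range f = Set.range f0 := hfr.trans h0r.symm
      let p : Equiv.Perm (Fin n) := (Equiv.ofInjective f hf).trans
        ((Equiv.setCongr hr).trans (Equiv.ofInjective f0 h0).symm)
      have hp : ∀ i, f0 (p i) = f i := by
        intro i
        simp only [p, Equiv.trans_apply]
        rw [Equiv.apply_ofInjective_symm h0]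
        rfl
      rw [Submodule.mem_span_singleton]
      refine ⟨((Equiv.Perm.sign p : ℤ) : K), ?_⟩
      ext j
      simp only [G, Pi.smul_apply, smul_eq_mul]
      rw [← det_perm e (w j) (fun i => bv K (f0 i)) p]
      simp only [hp]
    · exact ⟨0, fun f hf => absurd ⟨f, hf⟩ h⟩
  choose v hv using hS
  refine ⟨(Finset.powersetCard k (Finset.univ : Finset (Fin k ⊕ Fin k))).image v, ?_, ?_⟩
  · refine Finset.card_image_le.trans ?_
    simp [two_mul]
  · intro u
    have : (fun j => (mat e u (w j)).det) = ∑ f : Fin n → CoIx k s, (∏ i, u i (f i)) • G f := by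
      ext j
      rw [detA_expand]
      simp [G]
    rw [this]
    refine Submodule.sum_mem _ fun f _ => Submodule.smul_mem _ _ ?_
    by_cases hf : Function.Injective f
    swap
    · have : G f = 0 := by ext j; exact det_noninj e (w j) f hf
      rw [this]; exact Submodule.zero_mem _
    by_cases hy : ∃ y, ∀ i, f i ≠ Sum.inr y
    · obtain ⟨y, hy⟩ := hy
      have : G f = 0 := by ext j; exact det_notfull e (w j) f y hy
      rw [this]; exact Submodule.zero_mem _
    push Not at hy
    let S : Finset (Fin k ⊕ Fin k) := Finset.univ.filter fun x => ∃ i, f i = Sum.inl x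
    have hgood : good S f := by
      refine ⟨hf, ?_⟩
      ext q
      rcases q with x | y
      · simp only [S, Set.mem_range, Set.mem_setOf_eq, Sum.inl.injEq, Finset.mem_filter,
          Finset.mem_univ, true_and]
        exact ⟨fun h x' hx => hx ▸ h, fun h => h x rfl⟩
      · simpa using hy y
    have hcard : S.card = k := by
      have h1 : (Finset.univ.image f) = S.disjSum (Finset.univ : Finset (Fin s)) := by
        ext q
        rcases q with x | y
        · simp [S]
        · simpa using hy y
      have h2 := congrArg Finset.card h1
      rw [Finset.card_image_of_injective _ hf, Finset.card_disjSum] at h2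
      simp at h2
      omega
    refine Submodule.span_mono ?_ (hv S f hgood)
    rw [Set.singleton_subset_iff]
    exact Finset.mem_coe.2 (Finset.mem_image_of_mem _ (by simp [hcard]))

/-- Skew threshold version of the Bollobas inequality, for permutations. -/
theorem skew_bound {k s n m : ℕ} (hn : n = s + k) (P Q : Fin m → Equiv.Perm (Fin n))
    (hd : ∀ i, agreements (P i) (Q i) ≤ s)
    (hu : ∀ i j, i < j → s < agreements (P i) (Q j)) : m ≤ (2 * k).choose k := by
  classical
  let R := MvPolynomial ((Fin n × Fin n) × CoIx k s) ℚ
  let K := FractionRing R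
  let φ : R →+* K := algebraMap R K
  have hφ : Function.Injective φ := IsFractionRing.injective R K
  let e : Fin n ⊕ Fin n ≃ RowIx k s := Fintype.equivOfCardEq (by simp; omega)
  let z : Equiv.Perm (Fin n) → Fin n → CoIx k s → R := fun p i q => MvPolynomial.X ((i, p i), q)
  let zK : Equiv.Perm (Fin n) → Fin n → CoIx k s → K := fun p i q => φ (z p i q)
  let D : Matrix (Fin m) (Fin m) K := fun i j => (mat e (zK (P i)) (zK (Q j))).det
  have hdiag : ∀ i, D i i ≠ 0 := by
    intro i h
    have h1 : D i i = φ (mat e (z (P i)) (z (Q i))).det := by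
      simp only [D, zK]
      rw [mat_map, RingHom.map_det, RingHom.mapMatrix_apply]
    rw [h1, map_eq_zero_iff φ hφ] at h
    exact det_mat_generic_ne_zero hn e (P i) (Q i) (hd i) h
  have hup : ∀ i j, i < j → D i j = 0 := by
    intro i j hij
    refine det_mat_eq_zero e _ _ (Finset.univ.filter fun a => P i a = Q j a) (hu i j hij) ?_
    intro a ha
    have : P i a = Q j a := by simpa using ha
    simp only [zK, z, this]
  have hdet : D.det ≠ 0 := by
    rw [Matrix.det_of_lowerTriangular D (fun i j hij => hup i j (by simpa using hij))]
    exact Finset.prod_ne_zero_iff.2 fun i _ => hdiag i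
  have hli : LinearIndependent K D.row := Matrix.linearIndependent_rows_of_det_ne_zero hdet
  obtain ⟨T, hT, hspan⟩ := exists_spanning hn e (fun j => zK (Q j))
  have h1 : Set.range D.row ⊆ (Submodule.span K (T : Set (Fin m → K)) : Set (Fin m → K)) := by
    rintro _ ⟨i, rfl⟩
    exact hspan (zK (P i))
  have h2 := linearIndependent_le_span_aux' D.row hli (T : Set (Fin m → K)) h1
  simp at h2
  exact h2.trans hT

end SkewFuredi

lemma agreements_comm' {n : ℕ} (σ π : Equiv.Perm (Fin n)) :
    agreements σ π = agreements π σ := by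
  simp only [agreements, eq_comm]

lemma agreements_self' {n : ℕ} (σ : Equiv.Perm (Fin n)) : agreements σ σ = n := by
  simp [agreements]

theorem maximal_t_intersecting_family_has_small_generating_set
    (n t : ℕ) (ht : 1 ≤ t) (htn : t ≤ n)
    (F : Finset (Equiv.Perm (Fin n))) (hF : IsTIntersecting t F)
    (hmax : ∀ G : Finset (Equiv.Perm (Fin n)), IsTIntersecting t G → F ⊆ G → F = G) :
    ∃ F₀ ⊆ F, F₀.card ≤ (2 * n - 2 * t + 1).choose (n - t) ∧
      ∀ π : Equiv.Perm (Fin n), π ∈ F ↔ ∀ σ ∈ F₀, t ≤ agreements π σ := by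
  classical
  have hgen : ∀ π : Equiv.Perm (Fin n), π ∈ F ↔ ∀ σ ∈ F, t ≤ agreements π σ := by
    intro π
    refine ⟨fun h σ hσ => hF π h σ hσ, fun h => ?_⟩
    have : F = insert π F := by
      refine hmax _ ?_ (Finset.subset_insert _ _)
      intro a ha b hb
      rw [Finset.mem_insert] at ha hb
      rcases ha with rfl | ha <;> rcases hb with rfl | hb
      · rw [agreements_self']; exact htn
      · exact h b hb
      · rw [agreements_comm']; exact h a ha
      · exact hF a ha b hb
    rw [this]; exact Finset.mem_insert_self _ _
  let good : Finset (Equiv.Perm (Fin n)) → Prop := fun H =>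
    H ⊆ F ∧ ∀ π : Equiv.Perm (Fin n), π ∈ F ↔ ∀ σ ∈ H, t ≤ agreements π σ
  obtain ⟨H, hH, hmin⟩ := Finset.exists_min_image (Finset.univ.filter good) Finset.card
    ⟨F, by simp only [Finset.mem_filter, Finset.mem_univ, true_and]; exact ⟨subset_rfl, hgen⟩⟩
  simp only [Finset.mem_filter, Finset.mem_univ, true_and] at hH hmin
  refine ⟨H, hH.1, ?_, hH.2⟩
  have hw : ∀ σ : H, ∃ π : Equiv.Perm (Fin n), agreements σ.1 π < t ∧
      ∀ τ : H, τ ≠ σ → t ≤ agreements τ.1 π := by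
    rintro ⟨σ, hσ⟩
    by_contra hcon
    push Not at hcon
    have hg : good (H.erase σ) := by
      refine ⟨(Finset.erase_subset _ _).trans hH.1, fun π => ?_⟩
      rw [hH.2 π]
      refine ⟨fun h τ hτ => h τ (Finset.mem_of_mem_erase hτ), fun h => ?_⟩
      by_contra hbad
      push Not at hbad
      obtain ⟨ρ, hρ, hρt⟩ := hbad
      have hρσ : ρ = σ := by
        by_contra hne
        exact absurd (h ρ (Finset.mem_erase.2 ⟨hne, hρ⟩)) (not_le.2 hρt)
      subst hρσ
      obtain ⟨τ, hτ, hτt⟩ := hcon π (by rw [agreements_comm']; exact hρt)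
      have := h τ.1 (Finset.mem_erase.2 ⟨fun h => hτ (Subtype.ext h), τ.2⟩)
      rw [agreements_comm'] at this
      omega
    have h1 := hmin _ hg
    have h2 := Finset.card_erase_lt_of_mem hσ
    omega
  choose w hw1 hw2 using hw
  let E : Fin H.card ≃ H := H.equivFin.symm
  let A : Fin H.card → Equiv.Perm (Fin n) := fun i => (E i).1
  let B : Fin H.card → Equiv.Perm (Fin n) := fun i => w (E i)
  have hAA : ∀ i j, t ≤ agreements (A i) (A j) := fun i j =>
    hF _ (hH.1 (E i).2) _ (hH.1 (E j).2)
  have hAB : ∀ i j, i ≠ j → t ≤ agreements (A i) (B j) := fun i j hij =>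
    hw2 (E j) (E i) (fun h => hij (E.injective h))
  have hABd : ∀ i, agreements (A i) (B i) < t := fun i => hw1 (E i)
  have hb := SkewFuredi.skew_bound (k := n - t + 1) (s := t - 1) (n := n) (by omega)
    (Fin.append A B) (Fin.append B A) ?_ ?_
  · have h1 : (2 * (n - t + 1)).choose (n - t + 1) = 2 * (2 * n - 2 * t + 1).choose (n - t) := by
      have := Nat.succ_mul_centralBinom_succ (n - t)
      have e1 : 2 * (n - t + 1) = (2 * (n - t) + 1) + 1 := by ring
      have e2 : 2 * n - 2 * t + 1 = 2 * (n - t) + 1 := by omega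
      rw [e1, e2, Nat.choose_succ_succ, Nat.choose_symm_half]
      ring
    rw [h1] at hb
    omega
  · intro i
    refine Fin.addCases (fun i => ?_) (fun i => ?_) i
    · have := hABd i
      simp only [Fin.append_left]; omega
    · have := hABd i
      rw [agreements_comm'] at this
      simp only [Fin.append_right]; omega
  · intro i j
    refine Fin.addCases (fun i => ?_) (fun i => ?_) i <;>
      refine Fin.addCases (fun j => ?_) (fun j => ?_) j <;> intro hij <;>
      simp only [Fin.append_left, Fin.append_right]
    · have := hAB i j (fun h => by subst h; exact lt_irrefl _ hij)
      omega
    · have := hAA i j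
      omega
    · exfalso
      simp only [Fin.lt_def, Fin.val_natAdd, Fin.val_castAdd] at hij
      omega
    · have := hAB j i (fun h => by subst h; exact lt_irrefl _ hij)
      rw [agreements_comm'] at this
      omega
end
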